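/- arXiv:1508.04521 — 6 statements merged into one kernel-verified Lean document; each statement's English description precedes it below -/
import Mathlib

section
/- There exists N ∈ ℕ such that for all n ≥ N divisible by 3, with β_c = 4·ln 2/n, the weight of the balanced class satisfies w_{β_c}(n/3, n/3, n/3) ≥ (1/n²)·Σ_σ w_{β_c}(σ), where the sum ranges over all triples σ = (σ₁,σ₂,σ₃) of naturals with σ₁+σ₂+σ₃ = n. -/
/-!
Write `n = 3m` and `W` for the balanced weight. There are `(n+1)(n+2)/2` triples, so it is enough
that every single weight is at most `1.9 W` for large `n` (`exists_pottsWeight_le`); any constant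
below `2` would do.

By Stirling's formula, with `a_i = σ_i / n`, the ratio `w(σ) / W` is, up to a factor close to `1`,
at most `(27 a₁ a₂ a₃)^(-1/2) · exp (n Φ(a))`, where `Φ` is the rate function `pottsRate`. At the
critical temperature `Φ ≤ 0` on the simplex, with equality only at `(1/3, 1/3, 1/3)` and at the
permutations of `(2/3, 1/6, 1/6)`. There `27 a₁ a₂ a₃` equals `1` and `1/2` respectively. Hence:

* where `27 a₁ a₂ a₃ > 1/3`, the ratio is at most about `√3 < 1.9`;
* where `27 a₁ a₂ a₃ ≤ 1/3`, compactness gives `Φ ≤ -δ < 0` (`exists_pottsRate_gap`), and the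
  exponential decay beats the polynomial prefactors.

To show `Φ ≤ 0` (`pottsRate_max_first`), let `x` be the largest coordinate, so that the other two
are `s ± t` with `s ≤ 1/3`. The inequality `(1+u) log (1+u) + (1-u) log (1-u) ≥ u²` shows that `Φ`
is largest at `t = 0`. On the line `(1-2s, s, s)`, `Φ` is even in `v = 4s - 1`, and its derivative
in `v` is a negative multiple of `log (1+v) - log (1-v) - 3 v log 2`, a strictly convex function on
`[0, 1)` that vanishes at `0` and `1/3`; so `|v| = 1/3` is the only place where `Φ` attains its
maximum, which is `0`.
-/

noncomputable section

/-- Mean-field 3-state Potts weight of a class of configurations with color counts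
`σ = (σ₁, σ₂, σ₃)` at inverse temperature `β`:
`w_β(σ) = (n!/(σ₁!·σ₂!·σ₃!))·exp((β/2)(σ₁²+σ₂²+σ₃²))`. -/
noncomputable def pottsWeight (n : ℕ) (β : ℝ) (σ : ℕ × ℕ × ℕ) : ℝ :=
  ((n.factorial : ℝ) /
      ((σ.1.factorial : ℝ) * (σ.2.1.factorial : ℝ) * (σ.2.2.factorial : ℝ))) *
    Real.exp ((β / 2) * ((σ.1 : ℝ) ^ 2 + (σ.2.1 : ℝ) ^ 2 + (σ.2.2 : ℝ) ^ 2))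

/-- All triples of naturals summing to `n`. -/
def triples (n : ℕ) : Finset (ℕ × ℕ × ℕ) :=
  (Finset.range (n+1) ×ˢ Finset.range (n+1) ×ˢ Finset.range (n+1)).filter
    (fun σ => σ.1 + σ.2.1 + σ.2.2 = n)

end

open Real

/-! ### One-variable entropy inequalities -/

/-- The negative binary entropy `(1+v) log (1+v) + (1-v) log (1-v)` minus the quadratic energy of
the mean-field Potts model at criticality, along the line of profiles `(1-2s, s, s)` with
`v = 4s - 1`. It is even in `v`; the disordered and ordered phases sit at `v = 1/3` and
`v = -1/3`. -/
noncomputable def pottsLine (v : ℝ) : ℝ := -negMulLog (1 + v) - negMulLog (1 - v) - 3 / 2 * log 2 * v ^ 2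

lemma hasDerivAt_pottsLine {c v : ℝ} (h0 : -1 < v) (h1 : v < 1) :
    HasDerivAt (fun v => -negMulLog (1 + v) - negMulLog (1 - v) - c * v ^ 2)
      (log (1 + v) - log (1 - v) - 2 * c * v) v := by
  have e1 := (hasDerivAt_negMulLog (x := 1 + v) (by linarith)).comp v ((hasDerivAt_id v).const_add 1)
  have e2 := (hasDerivAt_negMulLog (x := 1 - v) (by linarith)).comp v ((hasDerivAt_id v).const_sub 1)
  have e3 := ((hasDerivAt_id v).pow 2).const_mul c
  refine ((e1.neg.sub e2).sub e3).congr_deriv ?_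
  simp
  ring

lemma two_mul_le_log_ratio {v : ℝ} (h0 : 0 ≤ v) (h1 : v < 1) :
    2 * v ≤ log (1 + v) - log (1 - v) := by
  have := hasSum_log_sub_log_of_abs_lt_one (x := v) (by rw [abs_lt]; constructor <;> linarith)
  have h := this.summable.sum_le_tsum {0} (fun i _ => by positivity)
  rw [this.tsum_eq] at h
  simpa using h

lemma negMulLog_pair_le {u : ℝ} (hu : |u| ≤ 1) :
    negMulLog (1 + u) + negMulLog (1 - u) ≤ -u ^ 2 := by
  wlog h : 0 ≤ u generalizing u
  · have := this (u := -u) (by simpa using hu) (by linarith)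
    simp only [sub_neg_eq_add, ← sub_eq_add_neg, neg_sq] at this
    linarith
  have hm : MonotoneOn (fun v => -negMulLog (1 + v) - negMulLog (1 - v) - 1 * v ^ 2)
      (Set.Icc 0 1) := by
    refine monotoneOn_of_deriv_nonneg (convex_Icc 0 1)
      (Continuous.continuousOn (by fun_prop)) ?_ ?_
    · intro x hx
      rw [interior_Icc] at hx
      exact (hasDerivAt_pottsLine (by linarith [hx.1]) hx.2).differentiableAt.differentiableWithinAt
    · intro x hx
      rw [interior_Icc] at hx
      rw [(hasDerivAt_pottsLine (by linarith [hx.1]) hx.2).deriv]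
      linarith [two_mul_le_log_ratio hx.1.le hx.2]
  have := hm (Set.mem_Icc.2 ⟨le_rfl, zero_le_one⟩) (Set.mem_Icc.2 ⟨h, (abs_le.1 hu).2⟩) h
  simp at this
  linarith

/-- Strict convexity of the derivative of `pottsLine`; that derivative therefore has at most two zeros on
`[0, 1)`; these are `0` and `1/3`. -/
lemma strictConvexOn_pottsLineDeriv :
    StrictConvexOn ℝ (Set.Ico 0 1) (fun v : ℝ => log (1 + v) - log (1 - v) - 2 * (3 / 2 * log 2) * v) := by
  have hd : ∀ v ∈ Set.Ioo (0:ℝ) 1, HasDerivAt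
      (fun v : ℝ => log (1 + v) - log (1 - v) - 2 * (3 / 2 * log 2) * v)
      (1 / (1 + v) + 1 / (1 - v) - 3 * log 2) v := by
    intro v hv
    have e1 := ((hasDerivAt_id v).const_add 1).log (by simp; linarith [hv.1])
    have e2 := ((hasDerivAt_id v).const_sub 1).log (by simp; linarith [hv.2])
    have e3 := (hasDerivAt_id v).const_mul (2 * (3 / 2 * log 2))
    refine ((e1.sub e2).sub e3).congr_deriv ?_
    simp
    ring
  refine StrictMonoOn.strictConvexOn_of_deriv (convex_Ico 0 1) ?_ ?_
  · refine ContinuousOn.sub (ContinuousOn.sub ?_ ?_) (by fun_prop)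
    · exact ContinuousOn.log (by fun_prop) (fun x hx => by linarith [hx.1])
    · exact ContinuousOn.log (by fun_prop) (fun x hx => by linarith [hx.2])
  · rw [interior_Ico]
    intro x hx y hy hxy
    rw [(hd x hx).deriv, (hd y hy).deriv]
    have key : ∀ v ∈ Set.Ioo (0:ℝ) 1, 1 / (1 + v) + 1 / (1 - v) = 2 / (1 - v ^ 2) := by
      intro v hv
      have := hv.1
      have := hv.2
      have h1 : 1 + v ≠ 0 := by linarith
      have h2 : 1 - v ≠ 0 := by linarith
      have h3 : 1 - v ^ 2 ≠ 0 := by nlinarith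
      field_simp
      ring
    rw [key x hx, key y hy]
    have := hx.1
    have := hy.2
    have : 2 / (1 - x ^ 2) < 2 / (1 - y ^ 2) :=
      div_lt_div_of_pos_left two_pos (by nlinarith) (by nlinarith)
    linarith

lemma pottsLineDeriv_third : log (1 + 1 / 3 : ℝ) - log (1 - 1 / 3) - 2 * (3 / 2 * log 2) * (1 / 3) = 0 := by
  rw [← log_div (by norm_num) (by norm_num)]
  norm_num
  ring

lemma pottsLineDeriv_neg {v : ℝ} (h0 : 0 < v) (h1 : v < 1 / 3) :
    log (1 + v) - log (1 - v) - 2 * (3 / 2 * log 2) * v < 0 := by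
  have := strictConvexOn_pottsLineDeriv.2 (show (0:ℝ) ∈ Set.Ico 0 1 by norm_num)
    (show (1 / 3 : ℝ) ∈ Set.Ico 0 1 by constructor <;> norm_num) (by norm_num)
    (show 0 < 1 - 3 * v by linarith) (show 0 < 3 * v by linarith) (by ring)
  have e : (1 - 3 * v) • (0:ℝ) + (3 * v) • (1 / 3 : ℝ) = v := by simp; ring
  simp only [e, pottsLineDeriv_third] at this
  simpa using this

lemma pottsLineDeriv_pos {v : ℝ} (h0 : 1 / 3 < v) (h1 : v < 1) :
    0 < log (1 + v) - log (1 - v) - 2 * (3 / 2 * log 2) * v := by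
  have hv : 0 < v := by linarith
  have := strictConvexOn_pottsLineDeriv.2 (show (0:ℝ) ∈ Set.Ico 0 1 by norm_num)
    (show v ∈ Set.Ico 0 1 from ⟨hv.le, h1⟩) hv.ne
    (show 0 < 1 - 1 / (3 * v) by rw [sub_pos, div_lt_one (by linarith)]; linarith)
    (show 0 < 1 / (3 * v) by positivity) (by ring)
  have e : (1 - 1 / (3 * v)) • (0:ℝ) + (1 / (3 * v)) • v = 1 / 3 := by
    simp; field_simp
  simp only [e, pottsLineDeriv_third] at this
  simp only [smul_eq_mul, add_zero, sub_zero, mul_zero, log_one, sub_self, zero_add] at this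
  exact pos_of_mul_pos_right this (by positivity)

/-- `pottsLine` attains its minimum over `[-1, 1]` exactly at `v = ±1/3`. -/
lemma pottsLine_third_lt {v : ℝ} (hv : |v| ≤ 1) (hne : |v| ≠ 1 / 3) : pottsLine (1 / 3) < pottsLine v := by
  wlog h : 0 ≤ v generalizing v
  · have := this (v := -v) (by simpa using hv) (by simpa using hne) (by linarith)
    unfold pottsLine at this ⊢
    simp only [sub_neg_eq_add, ← sub_eq_add_neg, neg_sq] at this
    linarith
  rw [abs_of_nonneg h] at hv hne
  have hc : Continuous pottsLine := by unfold pottsLine; fun_prop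
  rcases lt_or_gt_of_ne hne with h' | h'
  · refine strictAntiOn_of_deriv_neg (convex_Icc 0 (1 / 3)) hc.continuousOn ?_
      (Set.mem_Icc.2 ⟨h, h'.le⟩) (Set.mem_Icc.2 ⟨by norm_num, le_rfl⟩) h'
    intro x hx
    rw [interior_Icc] at hx
    have := (hasDerivAt_pottsLine (c := 3 / 2 * log 2) (v := x) (by linarith [hx.1]) (by linarith [hx.2])).deriv
    exact this.trans_lt (pottsLineDeriv_neg hx.1 hx.2)
  · refine strictMonoOn_of_deriv_pos (convex_Icc (1 / 3) 1) hc.continuousOn ?_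
      (Set.mem_Icc.2 ⟨le_rfl, by norm_num⟩) (Set.mem_Icc.2 ⟨h'.le, hv⟩) h'
    intro x hx
    rw [interior_Icc] at hx
    have := (hasDerivAt_pottsLine (c := 3 / 2 * log 2) (v := x) (by linarith [hx.1]) (by linarith [hx.2])).deriv
    exact (pottsLineDeriv_pos hx.1 hx.2).trans_eq this.symm

/-! ### The rate function on the simplex -/

/-- The exponential rate of the weight of a color profile `(x, y, z)` relative to the balanced
profile, at `β n = 4 log 2`: entropy plus energy, normalized to vanish at `(1/3, 1/3, 1/3)`. -/
noncomputable def pottsRate (x y z : ℝ) : ℝ :=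
  negMulLog x + negMulLog y + negMulLog z - log 3 + 2 * log 2 * (x ^ 2 + y ^ 2 + z ^ 2 - 1 / 3)

lemma pottsRate_line (s : ℝ) : pottsRate (1 - 2 * s) s s = (pottsLine (1 / 3) - pottsLine (4 * s - 1)) / 2 := by
  have e1 : negMulLog s = negMulLog ((1 + (4 * s - 1)) * (1 / 4)) := by congr 1; ring
  have e2 : negMulLog (1 - 2 * s) = negMulLog ((1 - (4 * s - 1)) * (1 / 2)) := by congr 1; ring
  have n4 : negMulLog (1 / 4 : ℝ) = log 2 / 2 := by
    have : log (4:ℝ) = 2 * log 2 := by rw [show (4:ℝ) = 2 ^ 2 by norm_num, log_pow]; norm_num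
    simp only [negMulLog, one_div, log_inv, this]; ring
  have n2 : negMulLog (1 / 2 : ℝ) = log 2 / 2 := by
    simp only [negMulLog, one_div, log_inv]; ring
  have m1 : negMulLog (1 + 1 / 3 : ℝ) = 4 / 3 * (log 3 - 2 * log 2) := by
    have : log (1 + 1 / 3 : ℝ) = 2 * log 2 - log 3 := by
      rw [show (1 + 1 / 3 : ℝ) = 2 ^ 2 / 3 by norm_num, log_div (by norm_num) (by norm_num), log_pow]
      norm_num
    rw [negMulLog, this]; ring
  have m2 : negMulLog (1 - 1 / 3 : ℝ) = 2 / 3 * (log 3 - log 2) := by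
    have : log (1 - 1 / 3 : ℝ) = log 2 - log 3 := by
      rw [show (1 - 1 / 3 : ℝ) = 2 / 3 by norm_num, log_div (by norm_num) (by norm_num)]
    rw [negMulLog, this]; ring
  unfold pottsRate pottsLine
  rw [e2, e1, negMulLog_mul, negMulLog_mul, n4, n2, m1, m2]
  ring

/-- The case in which the first color is the most frequent one. The condition
`27xyz ≤ 1/3` excludes the zeros of the rate function, at which `27xyz` is `1` or `1/2`. -/
lemma pottsRate_max_first {x y z : ℝ} (hy : 0 ≤ y) (hz : 0 ≤ z) (hs : x + y + z = 1)
    (hxy : y ≤ x) (hxz : z ≤ x) :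
    pottsRate x y z ≤ 0 ∧ (27 * (x * y * z) ≤ 1 / 3 → pottsRate x y z < 0) := by
  obtain ⟨s, hsd⟩ : ∃ s, s = (y + z) / 2 := ⟨_, rfl⟩
  obtain ⟨t, htd⟩ : ∃ t, t = (y - z) / 2 := ⟨_, rfl⟩
  have hy' : y = s + t := by linarith
  have hz' : z = s - t := by linarith
  have hx' : x = 1 - 2 * s := by linarith
  subst hy' hz' hx'
  have hs0 : 0 ≤ s := by linarith
  have hs3 : s ≤ 1 / 3 := by linarith
  have hln : log 2 < 0.7 := by linarith [log_two_lt_d9]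
  -- Moving along `t` costs entropy `t² / s ≥ 3 t²` and gains energy only `4 log 2 · t² < 3 t²`.
  have hline : pottsRate (1 - 2 * s) (s + t) (s - t) ≤ pottsRate (1 - 2 * s) s s - (3 - 4 * log 2) * t ^ 2 := by
    rcases hs0.eq_or_lt with h | h
    · have : t = 0 := by linarith
      subst this; subst h; simp
    · have e1 : s + t = s * (1 + t / s) := by field_simp
      have e2 : s - t = s * (1 - t / s) := by field_simp
      have hb := negMulLog_pair_le (u := t / s) (by
        rw [abs_div, abs_of_pos h, div_le_one h, abs_le]; constructor <;> linarith)
      have n1 : negMulLog (s + t) = (1 + t / s) * negMulLog s + s * negMulLog (1 + t / s) := by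
        rw [← negMulLog_mul, ← e1]
      have n2 : negMulLog (s - t) = (1 - t / s) * negMulLog s + s * negMulLog (1 - t / s) := by
        rw [← negMulLog_mul, ← e2]
      have hq : 3 * t ^ 2 ≤ s * (t / s) ^ 2 := by
        have : s * (t / s) ^ 2 = t ^ 2 / s := by field_simp
        rw [this, le_div_iff₀ h]
        nlinarith [sq_nonneg t]
      have hm := mul_le_mul_of_nonneg_left hb h.le
      unfold pottsRate
      rw [n1, n2]
      nlinarith
  have hv : |4 * s - 1| ≤ 1 := by rw [abs_le]; constructor <;> linarith
  rw [pottsRate_line] at hline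
  have ht : 0 ≤ (3 - 4 * log 2) * t ^ 2 := mul_nonneg (by linarith) (sq_nonneg t)
  by_cases hne : |4 * s - 1| = 1 / 3
  · have hF : pottsLine (4 * s - 1) = pottsLine (1 / 3) := by
      rcases (abs_eq (by norm_num)).1 hne with h | h <;> rw [h]
      unfold pottsLine
      rw [sub_neg_eq_add, ← sub_eq_add_neg, neg_sq]
      ring
    rw [hF] at hline
    refine ⟨by linarith, fun hp => ?_⟩
    have ht0 : t ≠ 0 := by
      rintro rfl
      rcases (abs_eq (by norm_num)).1 hne with h | h
      · have : s = 1 / 3 := by linarith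
        subst this; norm_num at hp
      · have : s = 1 / 6 := by linarith
        subst this; norm_num at hp
    have : 0 < (3 - 4 * log 2) * t ^ 2 := mul_pos (by linarith) (by positivity)
    linarith
  · have := pottsLine_third_lt hv hne
    exact ⟨by linarith, fun _ => by linarith⟩

lemma pottsRate_simplex {x y z : ℝ} (hx : 0 ≤ x) (hy : 0 ≤ y) (hz : 0 ≤ z) (hs : x + y + z = 1) :
    pottsRate x y z ≤ 0 ∧ (27 * (x * y * z) ≤ 1 / 3 → pottsRate x y z < 0) := by
  by_cases h1 : y ≤ x ∧ z ≤ x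
  · exact pottsRate_max_first hy hz hs h1.1 h1.2
  by_cases h2 : x ≤ y ∧ z ≤ y
  · have := pottsRate_max_first hx hz (by linarith) h2.1 h2.2
    rw [show pottsRate x y z = pottsRate y x z by unfold pottsRate; ring, mul_comm x y]
    exact this
  · have := pottsRate_max_first (x := z) (y := x) (z := y) hx hy (by linarith) (by grind) (by grind)
    rw [show pottsRate x y z = pottsRate z x y by unfold pottsRate; ring, show x * y * z = z * x * y by ring]
    exact this

lemma exists_pottsRate_gap : ∃ δ > 0, ∀ x y z : ℝ, 0 ≤ x → 0 ≤ y → 0 ≤ z → x + y + z = 1 →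
    27 * (x * y * z) ≤ 1 / 3 → pottsRate x y z ≤ -δ := by
  let K : Set (ℝ × ℝ × ℝ) := Set.Icc 0 1 ∩ {p | p.1 + p.2.1 + p.2.2 = 1} ∩
    {p | 27 * (p.1 * p.2.1 * p.2.2) ≤ 1 / 3}
  have hK : IsCompact K := by
    refine (isCompact_Icc.inter_right ?_).inter_right ?_
    · exact isClosed_eq (by fun_prop) (by fun_prop)
    · exact isClosed_le (by fun_prop) (by fun_prop)
  have hne : K.Nonempty := ⟨(1, 0, 0), ⟨⟨⟨by simp [Prod.le_def], by simp [Prod.le_def]⟩, by simp⟩, by simp⟩⟩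
  have hc : Continuous (fun p : ℝ × ℝ × ℝ => pottsRate p.1 p.2.1 p.2.2) := by unfold pottsRate; fun_prop
  obtain ⟨p, hp, hmax⟩ := hK.exists_isMaxOn hne hc.continuousOn
  have hp0 := hp.1.1.1
  simp only [Prod.le_def] at hp0
  refine ⟨-pottsRate p.1 p.2.1 p.2.2, neg_pos.2 ((pottsRate_simplex hp0.1 hp0.2.1 hp0.2.2 hp.1.2).2 hp.2), ?_⟩
  intro x y z hx hy hz hs h
  rw [neg_neg]
  refine hmax (a := (x, y, z)) ⟨⟨⟨?_, ?_⟩, hs⟩, h⟩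
  · exact ⟨hx, hy, hz⟩
  · exact ⟨by simp; linarith, by simp; linarith, by simp; linarith⟩

/-! ### Counting triples and Stirling bounds -/

lemma card_triples_le (n : ℕ) : (triples n).card * 2 ≤ (n + 1) * (n + 2) := by
  have h : (triples n).card ≤ ((Finset.range (n + 1)).sigma fun i => Finset.range (i + 1)).card := by
    refine Finset.card_le_card_of_injOn (fun σ => (⟨σ.2.1 + σ.2.2, σ.2.1⟩ : Σ _ : ℕ, ℕ)) ?_ ?_
    · intro σ hσ
      simp [triples] at hσ ⊢
      omega
    · rintro ⟨a, b, c⟩ hσ ⟨a₂, b₂, c₂⟩ hσ₂ h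
      simp [triples] at hσ hσ₂ h ⊢
      omega
  have h2 : ∀ k : ℕ, (∑ i ∈ Finset.range k, (i + 1)) * 2 = k * (k + 1) := by
    intro k
    induction k with
    | zero => simp
    | succ k ih => rw [Finset.sum_range_succ, add_mul, ih]; ring
  rw [Finset.card_sigma] at h
  simp only [Finset.card_range] at h
  have := h2 (n + 1)
  rw [show n + 1 + 1 = n + 2 from rfl] at this
  linarith

/-- The main factor `(k/e)^k` of Stirling's approximation to `k!`. -/
noncomputable def stirlingMain (k : ℕ) : ℝ := ((k : ℝ) / exp 1) ^ k

lemma stirlingMain_eq_exp (k : ℕ) : stirlingMain k = exp (k * log k - k) := by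
  rcases Nat.eq_zero_or_pos k with rfl | h
  · simp [stirlingMain]
  · have : (0:ℝ) < k := by exact_mod_cast h
    rw [stirlingMain, ← exp_log this, ← exp_sub, ← exp_nat_mul, log_exp, exp_log this]
    ring_nf

lemma stirlingMain_le_factorial (k : ℕ) : stirlingMain k ≤ (k.factorial : ℝ) := by
  rcases Nat.eq_zero_or_pos k with rfl | h
  · simp [stirlingMain]
  refine le_trans ?_ (Stirling.le_factorial_stirling k)
  refine le_mul_of_one_le_left (by unfold stirlingMain; positivity) ?_
  rw [Real.one_le_sqrt]
  have : (1:ℝ) ≤ k := by exact_mod_cast h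
  nlinarith [pi_gt_three]

/-- With factorials replaced by `(k/e)^k`, the ratio of the weight of `(a, b, c)` to the balanced
weight is exactly `exp (n Φ(a/n, b/n, c/n))`, where `n = 3m`. -/
lemma stirlingMain_mul_exp_eq {m a b c : ℕ} (hm : 0 < m) (h : a + b + c = 3 * m) :
    stirlingMain m ^ 3 * exp ((4 * log 2 / (3 * m : ℕ)) / 2 * ((a:ℝ) ^ 2 + (b:ℝ) ^ 2 + (c:ℝ) ^ 2)) =
      stirlingMain a * stirlingMain b * stirlingMain c *
        exp ((4 * log 2 / (3 * m : ℕ)) / 2 * ((m:ℝ) ^ 2 + (m:ℝ) ^ 2 + (m:ℝ) ^ 2)) *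
        exp ((3 * m : ℕ) * pottsRate (a / (3 * m : ℕ)) (b / (3 * m : ℕ)) (c / (3 * m : ℕ))) := by
  have hm' : (0:ℝ) < m := by exact_mod_cast hm
  have hR : (a:ℝ) + b + c = 3 * m := by exact_mod_cast h
  have hn : ∀ k : ℕ, (3 * (m:ℝ)) * negMulLog (k / (3 * m)) = -(k * log k) + k * (log 3 + log m) := by
    intro k
    rcases Nat.eq_zero_or_pos k with rfl | hk
    · simp
    · have hk' : (0:ℝ) < k := by exact_mod_cast hk
      rw [negMulLog, log_div hk'.ne' (by positivity), log_mul (by norm_num) hm'.ne']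
      field_simp
      ring
  simp only [stirlingMain_eq_exp, ← exp_nat_mul, ← exp_add]
  congr 1
  push_cast
  unfold pottsRate
  have e : ∀ p q r u w : ℝ, 3 * (m:ℝ) * (p + q + r - u + w) =
      3 * m * p + 3 * m * q + 3 * m * r - 3 * m * u + 3 * m * w := by intros; ring
  rw [e, hn, hn, hn]
  have hc : (c:ℝ) = 3 * m - a - b := by linarith
  generalize log (c:ℝ) = lc
  rw [hc]
  field_simp
  ring

lemma exists_stirling_threshold {δ : ℝ} (hδ : 0 < δ) : ∃ M : ℕ, ∀ m : ℕ, M ≤ m →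
    (m.factorial : ℝ) ≤ 1.03 * √(2 * π * m) * stirlingMain m ∧
    √(2 * π * m) ^ 3 * exp (-δ * (3 * m : ℕ)) ≤ 1 := by
  have h1 : ∀ᶠ m : ℕ in Filter.atTop, Stirling.stirlingSeq m < 1.03 * √π :=
    Stirling.tendsto_stirlingSeq_sqrt_pi.eventually (gt_mem_nhds (by
      have : 0 < √π := by positivity
      linarith))
  have h2 : ∀ᶠ m : ℕ in Filter.atTop, (2 * π * m) ^ 2 * exp (-(δ * 3 * m)) ≤ 1 := by
    have t1 : Filter.Tendsto (fun m : ℕ => δ * 3 * (m:ℝ)) Filter.atTop Filter.atTop :=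
      tendsto_natCast_atTop_atTop.const_mul_atTop (by positivity)
    have t := ((tendsto_pow_mul_exp_neg_atTop_nhds_zero 2).comp t1).const_mul ((2 * π / (δ * 3)) ^ 2)
    rw [mul_zero] at t
    filter_upwards [t.eventually (gt_mem_nhds one_pos)] with m hm
    refine le_of_eq_of_le ?_ hm.le
    simp only [Function.comp]
    field_simp
  obtain ⟨M, hM⟩ := Filter.eventually_atTop.1 (h1.and (h2.and (Filter.eventually_ge_atTop 1)))
  refine ⟨M, fun m hm => ?_⟩
  obtain ⟨a1, a2, a3⟩ := hM m hm
  have hm1 : (1:ℝ) ≤ m := by exact_mod_cast a3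
  constructor
  · rw [Stirling.stirlingSeq, div_lt_iff₀ (by positivity)] at a1
    refine a1.le.trans_eq ?_
    rw [show 2 * π * (m:ℝ) = π * (2 * m) by ring, Real.sqrt_mul pi_pos.le, stirlingMain]
    ring
  · refine le_trans ?_ a2
    have hs : √(2 * π * m) ^ 2 = 2 * π * m := Real.sq_sqrt (by positivity)
    have h1s : 1 ≤ √(2 * π * m) := by
      rw [Real.one_le_sqrt]; nlinarith [pi_gt_three]
    have : √(2 * π * m) ^ 3 ≤ (2 * π * m) ^ 2 := by
      calc √(2 * π * m) ^ 3 ≤ √(2 * π * m) ^ 4 := pow_le_pow_right₀ h1s (by norm_num)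
        _ = (√(2 * π * m) ^ 2) ^ 2 := by ring
        _ = _ := by rw [hs]
    have e : -δ * ((3 * m : ℕ):ℝ) = -(δ * 3 * m) := by push_cast; ring
    rw [e]
    gcongr

/-- For large `n = 3m`, no class outweighs the balanced one by more than a factor `1.9`. This
comes from `1.03³ · √3 < 1.9`, with `1.03` the error allowed in Stirling's formula for `m!`. -/
lemma exists_pottsWeight_le : ∃ M : ℕ, ∀ m : ℕ, M ≤ m → 0 < m → ∀ a b c : ℕ, a + b + c = 3 * m →
    pottsWeight (3 * m) (4 * log 2 / (3 * m : ℕ)) (a, b, c) ≤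
      1.9 * pottsWeight (3 * m) (4 * log 2 / (3 * m : ℕ)) (m, m, m) := by
  obtain ⟨δ, hδ, hgap⟩ := exists_pottsRate_gap
  obtain ⟨M, hM⟩ := exists_stirling_threshold hδ
  refine ⟨M, fun m hm hm0 a b c habc => ?_⟩
  obtain ⟨hfac, hsmall⟩ := hM m hm
  have hid := stirlingMain_mul_exp_eq hm0 habc
  have hmR : (0:ℝ) < m := by exact_mod_cast hm0
  set n : ℕ := 3 * m with hn
  have hnR : (n:ℝ) = 3 * m := by rw [hn]; push_cast; ring
  have hnpos : (0:ℝ) < n := by linarith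
  set A := exp ((4 * log 2 / (n:ℝ)) / 2 * ((a:ℝ) ^ 2 + (b:ℝ) ^ 2 + (c:ℝ) ^ 2)) with hA
  set B := exp ((4 * log 2 / (n:ℝ)) / 2 * ((m:ℝ) ^ 2 + (m:ℝ) ^ 2 + (m:ℝ) ^ 2)) with hB
  have hBpos : 0 < B := exp_pos _
  have hent : ∀ k, 0 < stirlingMain k := fun k => by rw [stirlingMain_eq_exp]; exact exp_pos _
  have hsum : (a:ℝ) / n + b / n + c / n = 1 := by
    rw [← add_div, ← add_div, div_eq_one_iff_eq hnpos.ne']; exact_mod_cast habc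
  have hx : (0:ℝ) ≤ a / n := by positivity
  have hy : (0:ℝ) ≤ b / n := by positivity
  have hz : (0:ℝ) ≤ c / n := by positivity
  set Φ := pottsRate (a / n) (b / n) (c / n) with hΦ
  have key : √(2 * π * m) ^ 3 * exp (n * Φ) * (stirlingMain a * stirlingMain b * stirlingMain c) ≤
      √3 * ((a.factorial : ℝ) * b.factorial * c.factorial) := by
    by_cases hp : 27 * ((a:ℝ) / n * (b / n) * (c / n)) ≤ 1 / 3
    · have hg := hgap _ _ _ hx hy hz hsum hp
      have h1 : √(2 * π * m) ^ 3 * exp (n * Φ) ≤ 1 := by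
        refine le_trans ?_ hsmall
        have hg' : (n : ℝ) * Φ ≤ -δ * n := by nlinarith
        gcongr
      have h2 : stirlingMain a * stirlingMain b * stirlingMain c ≤ (a.factorial : ℝ) * b.factorial * c.factorial := by
        have := (hent a).le
        have := (hent b).le
        have := (hent c).le
        gcongr <;> exact stirlingMain_le_factorial _
      have h3 : (1:ℝ) ≤ √3 := by rw [Real.one_le_sqrt]; norm_num
      have := mul_pos (mul_pos (hent a) (hent b)) (hent c)
      calc _ ≤ 1 * (stirlingMain a * stirlingMain b * stirlingMain c) := by gcongr
        _ ≤ √3 * _ := by gcongr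
    · have h0 := (pottsRate_simplex hx hy hz hsum).1
      have hE : exp (n * Φ) ≤ 1 := by
        rw [exp_le_one_iff]; exact mul_nonpos_of_nonneg_of_nonpos hnpos.le h0
      have hprod : (m:ℝ) ^ 3 ≤ 3 * (a * b * c) := by
        push Not at hp
        have : 27 * ((a:ℝ) / n * (b / n) * (c / n)) = a * b * c / m ^ 3 := by
          rw [hnR]; field_simp; ring
        rw [this, lt_div_iff₀ (by positivity)] at hp
        linarith
      have hs : √(2 * π * m) ^ 3 ≤ √3 * (√(2 * π * a) * √(2 * π * b) * √(2 * π * c)) := by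
        have e1 : √(2 * π * m) ^ 3 = √((2 * π * m) ^ 3) := by
          rw [pow_succ, pow_succ (2 * π * (m:ℝ)), Real.sqrt_mul (sq_nonneg (2 * π * (m:ℝ))),
            Real.sqrt_sq (by positivity), Real.sq_sqrt (by positivity)]
        rw [e1, ← Real.sqrt_mul (by positivity), ← Real.sqrt_mul (by positivity),
          ← Real.sqrt_mul (by positivity)]
        apply Real.sqrt_le_sqrt
        have : (0:ℝ) < (2 * π) ^ 3 := by positivity
        nlinarith [mul_le_mul_of_nonneg_left hprod this.le]
      have hf : (√(2 * π * a) * √(2 * π * b) * √(2 * π * c)) * (stirlingMain a * stirlingMain b * stirlingMain c) ≤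
          (a.factorial : ℝ) * b.factorial * c.factorial := by
        have ha := Stirling.le_factorial_stirling a
        have hb := Stirling.le_factorial_stirling b
        have hc := Stirling.le_factorial_stirling c
        have := (hent a).le
        have := (hent b).le
        have := (hent c).le
        calc _ = (√(2 * π * a) * stirlingMain a) * (√(2 * π * b) * stirlingMain b) * (√(2 * π * c) * stirlingMain c) := by ring
          _ ≤ _ := by gcongr <;> assumption
      have := mul_pos (mul_pos (hent a) (hent b)) (hent c)
      calc _ ≤ √(2 * π * m) ^ 3 * 1 * (stirlingMain a * stirlingMain b * stirlingMain c) := by gcongr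
        _ ≤ √3 * (√(2 * π * a) * √(2 * π * b) * √(2 * π * c)) * 1 * (stirlingMain a * stirlingMain b * stirlingMain c) := by
            gcongr
        _ = √3 * ((√(2 * π * a) * √(2 * π * b) * √(2 * π * c)) * (stirlingMain a * stirlingMain b * stirlingMain c)) := by ring
        _ ≤ _ := by gcongr
  have hmain : (m.factorial : ℝ) ^ 3 * A ≤
      1.9 * ((a.factorial : ℝ) * b.factorial * c.factorial) * B := by
    have h3 : √3 ≤ 1.733 := by
      rw [Real.sqrt_le_left (by norm_num)]; norm_num
    calc (m.factorial : ℝ) ^ 3 * A ≤ (1.03 * √(2 * π * m) * stirlingMain m) ^ 3 * A := by gcongr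
      _ = 1.03 ^ 3 * √(2 * π * m) ^ 3 * (stirlingMain m ^ 3 * A) := by ring
      _ = 1.03 ^ 3 * (√(2 * π * m) ^ 3 * exp (n * Φ) * (stirlingMain a * stirlingMain b * stirlingMain c)) * B := by
          rw [hid]; ring
      _ ≤ 1.03 ^ 3 * (√3 * ((a.factorial : ℝ) * b.factorial * c.factorial)) * B := by gcongr
      _ = (1.03 ^ 3 * √3) * ((a.factorial : ℝ) * b.factorial * c.factorial) * B := by ring
      _ ≤ _ := by
          gcongr
          norm_num at h3 ⊢
          linarith
  unfold pottsWeight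
  simp only
  rw [← hA, ← hB]
  have f1 : (0:ℝ) < (a.factorial : ℝ) * b.factorial * c.factorial := by positivity
  have f2 : (0:ℝ) < (m.factorial : ℝ) := by positivity
  rw [div_mul_eq_mul_div, div_mul_eq_mul_div, ← mul_div_assoc, div_le_div_iff₀ f1 (by positivity)]
  have := mul_le_mul_of_nonneg_left hmain (Nat.cast_nonneg (α := ℝ) n.factorial)
  nlinarith

/-- there is `N` such that for all `n ≥ N` divisible by 3, with
`β_c = 4·ln 2/n`, `w_{β_c}(n/3, n/3, n/3) ≥ (1/n²)·Σ_σ w_{β_c}(σ)`, the sum being over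
all triples of naturals summing to `n`. -/
theorem potts_disordered_mode_polynomial_fraction :
    ∃ N : ℕ, ∀ n : ℕ, N ≤ n → 3 ∣ n →
      (1 / (n : ℝ) ^ 2) * ∑ σ ∈ triples n, pottsWeight n (4 * Real.log 2 / n) σ ≤
        pottsWeight n (4 * Real.log 2 / n) (n / 3, n / 3, n / 3) := by
  obtain ⟨M, hM⟩ := exists_pottsWeight_le
  refine ⟨3 * M + 100, ?_⟩
  rintro n hn ⟨m, rfl⟩
  have hpt := hM m (by omega) (by omega)
  rw [Nat.mul_div_cancel_left m (by norm_num)]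
  have hW : 0 ≤ pottsWeight (3 * m) (4 * Real.log 2 / (3 * m : ℕ)) (m, m, m) := by
    unfold pottsWeight; positivity
  set W := pottsWeight (3 * m) (4 * Real.log 2 / (3 * m : ℕ)) (m, m, m)
  have hsum : ∑ σ ∈ triples (3 * m), pottsWeight (3 * m) (4 * Real.log 2 / (3 * m : ℕ)) σ ≤
      (triples (3 * m)).card • (1.9 * W) := by
    refine Finset.sum_le_card_nsmul _ _ _ ?_
    rintro ⟨a, b, c⟩ hσ
    exact hpt a b c (Finset.mem_filter.1 hσ).2
  have hcard : ((triples (3 * m)).card : ℝ) * 2 ≤ ((3 * m : ℕ) + 1) * ((3 * m : ℕ) + 2) := by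
    exact_mod_cast card_triples_le (3 * m)
  have hn100 : (100:ℝ) ≤ (3 * m : ℕ) := by exact_mod_cast (by omega : 100 ≤ 3 * m)
  generalize ((3 * m : ℕ) : ℝ) = x at *
  rw [one_div, inv_mul_le_iff₀ (by positivity)]
  refine hsum.trans ?_
  rw [nsmul_eq_mul, ← mul_assoc]
  refine mul_le_mul_of_nonneg_right ?_ hW
  nlinarith
end

section
/- Let n ∈ ℕ with n ≥ 2 and let b be a real number with 0 ≤ b and b·n ≤ 2·ln 2. Define F : (0, 1/2) → ℝ by F(x) = exp(b·n²·(x² + (1/2 − x)²)) / (Γ(n·x)·Γ(n·(1/2 − x))), where Γ is the real Gamma function. Then F attains a strict maximum at x = 1/4: for every x ∈ (0, 1/2) with x ≠ 1/4, F(x) < F(1/4). -/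
/-!
Put `a = n/4` and `t = n(x - 1/4)`, so that `F` compares `Γ(a+t) Γ(a-t)` with `Γ(a)²`, the exponent
gaining `2bt²`. Since `2b ≤ 4 ln 2 / n = ln 2 / a` and `ln 2 < 1`, it suffices to prove
`log Γ(a+t) + log Γ(a-t) - 2 log Γ(a) ≥ t²/a` for `|t| < a` (`log_Gamma_symm_ge`).

Write `D(a)` for the left side. The functional equation gives
`D(a) = D(a+1) - log (1 - t²/a²) ≥ D(a+1) + t²/a² ≥ D(a+1) + t² (1/a - 1/(a+1))`. Iterating `K`
times telescopes to `D(a) ≥ D(a+K) + t² (1/a - 1/(a+K))`, where `D(a+K) ≥ 0` by log-convexity of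
`Γ`; then `K → ∞`.
-/

lemma log_Gamma_add_one {y : ℝ} (hy : 0 < y) :
    Real.log (Real.Gamma (y + 1)) = Real.log y + Real.log (Real.Gamma y) := by
  rw [Real.Gamma_add_one hy.ne', Real.log_mul hy.ne' (Real.Gamma_pos_of_pos hy).ne']

/-- The telescoped bound after `K` applications of the functional equation, the remaining
second difference at `a + K` being discarded by log-convexity. -/
lemma log_Gamma_symm_ge_aux (t : ℝ) (K : ℕ) : ∀ a : ℝ, 0 < a + t → 0 < a - t →
    t ^ 2 * (1 / a - 1 / (a + K)) ≤
      Real.log (Real.Gamma (a + t)) + Real.log (Real.Gamma (a - t))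
        - 2 * Real.log (Real.Gamma a) := by
  induction K with
  | zero =>
    intro a h1 h2
    have h := Real.convexOn_log_Gamma.2 (Set.mem_Ioi.2 h1) (Set.mem_Ioi.2 h2)
      (by norm_num : (0 : ℝ) ≤ 1 / 2) (by norm_num : (0 : ℝ) ≤ 1 / 2) (by norm_num)
    have e : (1 / 2 : ℝ) • (a + t) + (1 / 2 : ℝ) • (a - t) = a := by
      simp only [smul_eq_mul]; ring
    rw [e] at h
    simp only [smul_eq_mul, Function.comp_apply] at h
    simp only [Nat.cast_zero, add_zero, sub_self, mul_zero]
    linarith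
  | succ K ih =>
    intro a h1 h2
    have ha : 0 < a := by linarith
    have h := ih (a + 1) (by linarith) (by linarith)
    rw [show a + 1 + t = (a + t) + 1 by ring, show a + 1 - t = (a - t) + 1 by ring,
      log_Gamma_add_one h1, log_Gamma_add_one h2, log_Gamma_add_one ha] at h
    have hlog : Real.log (a + t) + Real.log (a - t) - 2 * Real.log a ≤ -(t ^ 2 / a ^ 2) := by
      have hpos : 0 < (a + t) * (a - t) / a ^ 2 := by positivity
      have h3 := Real.log_le_sub_one_of_pos hpos
      rw [Real.log_div (by positivity) (by positivity), Real.log_mul h1.ne' h2.ne',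
        Real.log_pow] at h3
      have e : (a + t) * (a - t) / a ^ 2 - 1 = -(t ^ 2 / a ^ 2) := by
        field_simp; ring
      rw [e] at h3
      push_cast at h3
      exact h3
    have hstep : t ^ 2 * (1 / a - 1 / (a + 1)) ≤ t ^ 2 / a ^ 2 := by
      have e : 1 / a - 1 / (a + 1) = 1 / (a * (a + 1)) := by field_simp; ring
      rw [e, div_eq_mul_one_div (t ^ 2) (a ^ 2)]
      refine mul_le_mul_of_nonneg_left ?_ (sq_nonneg t)
      exact one_div_le_one_div_of_le (by positivity) (by nlinarith)
    have e : a + ((K + 1 : ℕ) : ℝ) = a + 1 + K := by push_cast; ring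
    rw [e]
    linarith

/-- The symmetric second difference of `log Γ` at `a` is at least `t² / a`; infinitesimally this is
the trigamma bound `(log Γ)'' (a) ≥ 1 / a`. -/
lemma log_Gamma_symm_ge {a t : ℝ} (h1 : 0 < a + t) (h2 : 0 < a - t) :
    t ^ 2 / a ≤ Real.log (Real.Gamma (a + t)) + Real.log (Real.Gamma (a - t))
        - 2 * Real.log (Real.Gamma a) := by
  have hlim : Filter.Tendsto (fun K : ℕ => t ^ 2 * (1 / a - 1 / (a + (K : ℝ)))) Filter.atTop
      (nhds (t ^ 2 * (1 / a - 0))) := by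
    refine Filter.Tendsto.const_mul _ (Filter.Tendsto.const_sub _ ?_)
    simp only [one_div]
    exact Filter.Tendsto.comp tendsto_inv_atTop_zero
      (Filter.tendsto_atTop_add_const_left _ a tendsto_natCast_atTop_atTop)
  have h := le_of_tendsto' hlim (fun K => log_Gamma_symm_ge_aux t K a h1 h2)
  rwa [sub_zero, mul_one_div] at h

/-- for `n ≥ 2` and `0 ≤ b` with `b·n ≤ 2·ln 2`, the function
`F(x) = exp(b·n²·(x² + (1/2 − x)²)) / (Γ(n·x)·Γ(n·(1/2 − x)))` on `(0, 1/2)` attains a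
strict maximum at `x = 1/4`. -/
theorem gamma_interpolation_max_at_quarter :
    ∀ n : ℕ, 2 ≤ n → ∀ b : ℝ, 0 ≤ b → b * n ≤ 2 * Real.log 2 →
      ∀ x : ℝ, 0 < x → x < 1/2 → x ≠ 1/4 →
        Real.exp (b * (n : ℝ) ^ 2 * (x ^ 2 + (1/2 - x) ^ 2)) /
            (Real.Gamma ((n : ℝ) * x) * Real.Gamma ((n : ℝ) * (1/2 - x))) <
          Real.exp (b * (n : ℝ) ^ 2 * ((1/4 : ℝ) ^ 2 + (1/2 - 1/4 : ℝ) ^ 2)) /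
            (Real.Gamma ((n : ℝ) * (1/4)) * Real.Gamma ((n : ℝ) * (1/2 - 1/4))) := by
  intro n hn b _ hbn x hx0 hx1 hx
  have hn0 : (0 : ℝ) < n := by
    have : 0 < n := by omega
    exact_mod_cast this
  obtain ⟨t, ht⟩ : ∃ t : ℝ, t = n * (x - 1 / 4) := ⟨_, rfl⟩
  obtain ⟨a, ha⟩ : ∃ a : ℝ, a = n * (1 / 4) := ⟨_, rfl⟩
  have e1 : (n : ℝ) * x = a + t := by rw [ha, ht]; ring
  have e2 : (n : ℝ) * (1 / 2 - x) = a - t := by rw [ha, ht]; ring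
  have e3 : (n : ℝ) * (1 / 2 - 1 / 4) = a := by rw [ha]; ring
  have h1 : 0 < a + t := by rw [← e1]; positivity
  have h2 : 0 < a - t := by rw [← e2]; exact mul_pos hn0 (by linarith)
  have ha0 : 0 < a := by linarith
  have ht0 : t ≠ 0 := by rw [ht]; exact mul_ne_zero hn0.ne' (sub_ne_zero.2 hx)
  have e4 : b * (n : ℝ) ^ 2 * (x ^ 2 + (1 / 2 - x) ^ 2) =
      b * (n : ℝ) ^ 2 * ((1 / 4 : ℝ) ^ 2 + (1 / 2 - 1 / 4 : ℝ) ^ 2) + 2 * b * t ^ 2 := by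
    rw [ht]; ring
  -- The critical temperature enters only through `2ab ≤ log 2 < 1`.
  have hb : 2 * b * t ^ 2 < t ^ 2 / a := by
    rw [lt_div_iff₀ ha0]
    have hlog : Real.log 2 < 1 := by linarith [Real.log_two_lt_d9]
    have hba : 2 * b * a < 1 := by rw [ha]; linarith
    have := mul_lt_mul_of_pos_right hba (pow_pos (abs_pos.2 ht0) 2)
    rw [sq_abs] at this
    linarith
  have key := log_Gamma_symm_ge h1 h2
  rw [e4, e1, e2, e3, ← ha]
  have g1 := Real.Gamma_pos_of_pos h1
  have g2 := Real.Gamma_pos_of_pos h2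
  have g := Real.Gamma_pos_of_pos ha0
  rw [← Real.log_lt_log_iff (by positivity) (by positivity),
    Real.log_div (Real.exp_pos _).ne' (by positivity),
    Real.log_div (Real.exp_pos _).ne' (by positivity), Real.log_exp, Real.log_exp,
    Real.log_mul g1.ne' g2.ne', Real.log_mul g.ne' g.ne']
  linarith
end

section
/- Let n ∈ ℕ with n ≥ 2, let λ ∈ (0,1) be real, and let b ≥ 0 be a real number with b·n·(1 − λ) < 1. Define G : (0, 1 − λ) → ℝ by G(x) = exp(b·n²·(x² + (1 − λ − x)²)) / (Γ(n·x)·Γ(n·(1 − λ − x))), where Γ is the real Gamma function. Then G attains a strict maximum at x = (1 − λ)/2: for every x ∈ (0, 1 − λ) with x ≠ (1 − λ)/2, G(x) < G((1 − λ)/2). -/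
/-!
With `m = n(1 - λ)/2` and `d = n(x - (1 - λ)/2)`, the two Gamma arguments are `m ± d`, and the
exponent exceeds its value at the midpoint by `2 b d²`. Since `2 b m < 1`, this excess is strictly
less than `d² / m`, so it suffices to have the quantitative log-convexity bound
`log Γ(m + d) + log Γ(m - d) - 2 log Γ(m) ≥ d² / m` (`sq_div_le_log_Gamma_second_diff`).

By Euler's limit formula the left side is `∑ₖ -log(1 - d²/(m + k)²)`. Each term is at least
`d²/(m + k)² ≥ d² (1/(m + k) - 1/(m + k + 1))`, and the resulting series telescopes to `d² / m`.
-/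

/-- The term-by-term estimate on the second difference of `log` at `t = m + k`, bounded by a
telescoping quantity. -/
lemma log_second_diff_ge {t d : ℝ} (ht : 0 < t) (hp : 0 < t + d) (hq : 0 < t - d) :
    d ^ 2 * (1 / t - 1 / (t + 1)) ≤ 2 * Real.log t - Real.log (t + d) - Real.log (t - d) := by
  have h1 : Real.log ((t + d) * (t - d) / t ^ 2) ≤ (t + d) * (t - d) / t ^ 2 - 1 :=
    Real.log_le_sub_one_of_pos (by positivity)
  rw [Real.log_div (by positivity) (by positivity), Real.log_mul hp.ne' hq.ne',
    Real.log_pow] at h1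
  have h2 : (t + d) * (t - d) / t ^ 2 - 1 = -(d ^ 2 * (1 / t ^ 2)) := by
    field_simp; ring
  have h3 : 1 / t - 1 / (t + 1) ≤ 1 / t ^ 2 := by
    rw [div_sub_div _ _ ht.ne' (by positivity), div_le_div_iff₀ (by positivity) (by positivity)]
    nlinarith
  have h4 := mul_le_mul_of_nonneg_left h3 (sq_nonneg d)
  push_cast at h1
  linarith

open Filter Topology Real.BohrMollerup in
/-- Quantitative log-convexity of `Γ`: a discrete form of the bound `1 / m` from below on
the second derivative of `log Γ` at `m`. -/
lemma sq_div_le_log_Gamma_second_diff {m d : ℝ} (hm : 0 < m) (hp : 0 < m + d) (hq : 0 < m - d) :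
    d ^ 2 / m ≤
      Real.log (Real.Gamma (m + d)) + Real.log (Real.Gamma (m - d)) -
        2 * Real.log (Real.Gamma m) := by
  have hR := ((tendsto_log_gamma hp).add (tendsto_log_gamma hq)).sub
    ((tendsto_log_gamma hm).const_mul 2)
  have hL : Tendsto (fun N : ℕ => d ^ 2 * (1 / m - 1 / (m + ((N + 1 : ℕ) : ℝ)))) atTop
      (𝓝 (d ^ 2 * (1 / m - 0))) := by
    refine Tendsto.const_mul _ (Tendsto.sub tendsto_const_nhds ?_)
    have h : Tendsto (fun N : ℕ => m + ((N + 1 : ℕ) : ℝ)) atTop atTop :=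
      tendsto_atTop_add_const_left _ _
        (tendsto_natCast_atTop_atTop.comp (tendsto_add_atTop_nat 1))
    simp only [one_div]
    exact h.inv_tendsto_atTop
  have hlim : d ^ 2 / m = d ^ 2 * (1 / m - 0) := by ring
  rw [hlim]
  refine le_of_tendsto_of_tendsto' hL hR fun N => ?_
  have htel : ∀ M : ℕ, d ^ 2 * (1 / m - 1 / (m + (M : ℝ))) ≤
      ∑ k ∈ Finset.range M,
        (2 * Real.log (m + k) - Real.log (m + d + k) - Real.log (m - d + k)) := by
    intro M
    induction M with
    | zero => simp
    | succ M ih =>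
      have hM : (0 : ℝ) ≤ M := Nat.cast_nonneg M
      have h := log_second_diff_ge (t := m + M) (d := d) (by linarith) (by linarith)
        (by linarith)
      rw [Finset.sum_range_succ]
      rw [show m + (M : ℝ) + d = m + d + M by ring, show m + (M : ℝ) - d = m - d + M by ring] at h
      push_cast
      rw [← add_assoc]
      linarith
  refine (htel (N + 1)).trans (le_of_eq ?_)
  simp only [logGammaSeq, Finset.sum_sub_distrib, ← Finset.mul_sum]
  ring

/-- for `n ≥ 2`, `λ ∈ (0,1)` and `b ≥ 0` with `b·n·(1 − λ) < 1`, the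
function `G(x) = exp(b·n²·(x² + (1 − λ − x)²)) / (Γ(n·x)·Γ(n·(1 − λ − x)))` on
`(0, 1 − λ)` attains a strict maximum at `x = (1 − λ)/2`. -/
theorem gamma_interpolation_max_at_midpoint :
    ∀ n : ℕ, 2 ≤ n → ∀ lam : ℝ, 0 < lam → lam < 1 → ∀ b : ℝ, 0 ≤ b →
      b * n * (1 - lam) < 1 →
      ∀ x : ℝ, 0 < x → x < 1 - lam → x ≠ (1 - lam) / 2 →
        Real.exp (b * (n : ℝ) ^ 2 * (x ^ 2 + (1 - lam - x) ^ 2)) /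
            (Real.Gamma ((n : ℝ) * x) * Real.Gamma ((n : ℝ) * (1 - lam - x))) <
          Real.exp (b * (n : ℝ) ^ 2 * (((1 - lam) / 2) ^ 2 + (1 - lam - (1 - lam) / 2) ^ 2)) /
            (Real.Gamma ((n : ℝ) * ((1 - lam) / 2)) *
              Real.Gamma ((n : ℝ) * (1 - lam - (1 - lam) / 2))) := by
  intro n hn lam hlam hlam1 b hb hbn x hx hx1 hxne
  have hn0 : (0 : ℝ) < n := by
    have : 0 < n := by omega
    exact_mod_cast this
  set m : ℝ := n * ((1 - lam) / 2) with hm_def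
  set d : ℝ := n * (x - (1 - lam) / 2) with hd_def
  have hm : 0 < m := mul_pos hn0 (by linarith)
  have hd : 0 < d ^ 2 := by
    have : d ≠ 0 := mul_ne_zero hn0.ne' (sub_ne_zero.mpr hxne)
    positivity
  have hu : (n : ℝ) * x = m + d := by rw [hm_def, hd_def]; ring
  have hv : (n : ℝ) * (1 - lam - x) = m - d := by rw [hm_def, hd_def]; ring
  have hw : (n : ℝ) * (1 - lam - (1 - lam) / 2) = m := by rw [hm_def]; ring
  have hu0 : 0 < m + d := hu ▸ mul_pos hn0 hx
  have hv0 : 0 < m - d := hv ▸ mul_pos hn0 (by linarith)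
  have hkey := sq_div_le_log_Gamma_second_diff hm hu0 hv0
  -- `2 b m = b n (1 - λ) < 1`, so the quadratic gain is beaten by the log-convexity of `Γ`.
  have hbm : 2 * b * d ^ 2 < d ^ 2 / m := by
    rw [lt_div_iff₀ hm]
    have : 2 * b * m < 1 := by
      rw [hm_def]; linarith
    nlinarith
  have hE : b * (n : ℝ) ^ 2 * (x ^ 2 + (1 - lam - x) ^ 2) =
      b * (n : ℝ) ^ 2 * (((1 - lam) / 2) ^ 2 + (1 - lam - (1 - lam) / 2) ^ 2) +
        2 * b * d ^ 2 := by
    rw [hd_def]; ring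
  rw [hE, hu, hv, hw]
  have hGu := Real.Gamma_pos_of_pos hu0
  have hGv := Real.Gamma_pos_of_pos hv0
  have hGm := Real.Gamma_pos_of_pos hm
  generalize b * (n : ℝ) ^ 2 * (((1 - lam) / 2) ^ 2 + (1 - lam - (1 - lam) / 2) ^ 2) = E
  rw [← Real.log_lt_log_iff (by positivity) (by positivity),
    Real.log_div (by positivity) (by positivity), Real.log_div (by positivity) (by positivity),
    Real.log_mul hGu.ne' hGv.ne', Real.log_mul hGm.ne' hGm.ne', Real.log_exp, Real.log_exp]
  linarith
end

section
/- Let n ≥ 3 be divisible by 3, let K_RGB be the set of triples σ = (σ₁,σ₂,σ₃) of naturals with σ₁ ≥ σ₂ ≥ σ₃ and σ₁+σ₂+σ₃ = n, and for β ≥ 0 set Z_RGB(β) = Σ_{σ∈K_RGB} w_β(σ). Then the normalized weight of the disordered class is strictly decreasing in the inverse temperature: for all reals 0 ≤ β' < β, w_{β'}(n/3,n/3,n/3)/Z_RGB(β') > w_{β}(n/3,n/3,n/3)/Z_RGB(β). -/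
/-!
Write `S σ = σ₁² + σ₂² + σ₃²` and let `d = (n/3, n/3, n/3)`. Cross-multiplying, the claim is
`∑ σ, w_β(d) w_β'(σ) < ∑ σ, w_β'(d) w_β(σ)`. The multinomial factors agree term by term, so
each term comparison reduces to `β S(d) + β' S(σ) ≤ β' S(d) + β S(σ)`, that is,
`(β - β') (S(σ) - S(d)) ≥ 0`. This holds since `d` minimizes `S` among triples of sum `n`, and it is
strict at the monochromatic class `(n, 0, 0)`.
-/

noncomputable section

/-- The ordered triples `σ₁ ≥ σ₂ ≥ σ₃` with `σ₁ + σ₂ + σ₃ = n`. -/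
def KRGB (n : ℕ) : Finset (ℕ × ℕ × ℕ) :=
  (Finset.range (n+1) ×ˢ Finset.range (n+1) ×ˢ Finset.range (n+1)).filter
    (fun σ => σ.1 + σ.2.1 + σ.2.2 = n ∧ σ.2.1 ≤ σ.1 ∧ σ.2.2 ≤ σ.2.1)

/-- Restricted partition function over `K_RGB`. -/
noncomputable def ZRGB (n : ℕ) (β : ℝ) : ℝ := ∑ σ ∈ KRGB n, pottsWeight n β σ

end

/-- The map `β ↦ w_β(τ) / w_β(σ)` is strictly decreasing when `S τ < S σ`, where
`S σ = σ₁² + σ₂² + σ₃²`; stated after cross-multiplication. -/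
lemma pottsWeight_mul_lt (n : ℕ) {β' β : ℝ} (hβ : β' < β) (σ τ : ℕ × ℕ × ℕ)
    (h : (τ.1 : ℝ) ^ 2 + (τ.2.1 : ℝ) ^ 2 + (τ.2.2 : ℝ) ^ 2 <
      (σ.1 : ℝ) ^ 2 + (σ.2.1 : ℝ) ^ 2 + (σ.2.2 : ℝ) ^ 2) :
    pottsWeight n β τ * pottsWeight n β' σ < pottsWeight n β' τ * pottsWeight n β σ := by
  unfold pottsWeight
  rw [mul_mul_mul_comm, mul_mul_mul_comm _ (Real.exp _) _ (Real.exp _), ← Real.exp_add,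
    ← Real.exp_add]
  refine mul_lt_mul_of_pos_left (Real.exp_lt_exp.mpr ?_) (by positivity)
  nlinarith [mul_pos (sub_pos.mpr hβ) (sub_pos.mpr h)]

/-- Non-strict form of `pottsWeight_mul_lt`. -/
lemma pottsWeight_mul_le (n : ℕ) {β' β : ℝ} (hβ : β' < β) (σ τ : ℕ × ℕ × ℕ)
    (h : (τ.1 : ℝ) ^ 2 + (τ.2.1 : ℝ) ^ 2 + (τ.2.2 : ℝ) ^ 2 ≤
      (σ.1 : ℝ) ^ 2 + (σ.2.1 : ℝ) ^ 2 + (σ.2.2 : ℝ) ^ 2) :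
    pottsWeight n β τ * pottsWeight n β' σ ≤ pottsWeight n β' τ * pottsWeight n β σ := by
  rcases h.lt_or_eq with h | h
  · exact (pottsWeight_mul_lt n hβ σ τ h).le
  · unfold pottsWeight
    rw [h]
    exact le_of_eq (by ring)

lemma ZRGB_pos (n : ℕ) (β : ℝ) : 0 < ZRGB n β := by
  refine Finset.sum_pos (fun σ _ => by unfold pottsWeight; positivity) ⟨(n, 0, 0), ?_⟩
  simp [KRGB]

/-- for `n ≥ 3` divisible by 3, the normalized weight of the disordered
class is strictly decreasing in the inverse temperature: for `0 ≤ β' < β`,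
`w_{β'}(n/3,n/3,n/3)/Z_RGB(β') > w_{β}(n/3,n/3,n/3)/Z_RGB(β)`. -/
theorem potts_disordered_weight_decreasing :
    ∀ n : ℕ, 3 ≤ n → 3 ∣ n → ∀ β' β : ℝ, 0 ≤ β' → β' < β →
      pottsWeight n β (n / 3, n / 3, n / 3) / ZRGB n β <
        pottsWeight n β' (n / 3, n / 3, n / 3) / ZRGB n β' := by
  rintro n hn ⟨m, rfl⟩ β' β - hβ
  have hm : 0 < (m : ℝ) := by exact_mod_cast (by omega : 0 < m)
  rw [Nat.mul_div_cancel_left m (by norm_num), div_lt_div_iff₀ (ZRGB_pos _ _) (ZRGB_pos _ _)]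
  unfold ZRGB
  rw [Finset.mul_sum, Finset.mul_sum]
  refine Finset.sum_lt_sum (fun σ hσ => pottsWeight_mul_le _ hβ σ _ ?_)
    ⟨(3 * m, 0, 0), by simp [KRGB], pottsWeight_mul_lt _ hβ _ _ ?_⟩
  · have hsum : (σ.1 : ℝ) + σ.2.1 + σ.2.2 = 3 * m := by
      exact_mod_cast (Finset.mem_filter.mp hσ).2.1
    dsimp only
    -- `S(σ) - 3m² = ∑ (σᵢ - m)²` because the `σᵢ` sum to `3m`.
    nlinarith [sq_nonneg ((σ.1 : ℝ) - m), sq_nonneg ((σ.2.1 : ℝ) - m),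
      sq_nonneg ((σ.2.2 : ℝ) - m)]
  · push_cast
    nlinarith
end

section
/- Let n ∈ ℕ, let p : {0,1,…,n} → ℝ be strictly positive, and let t ∈ {1,…,n}. Write A = {k : 0 ≤ k < t} and B = {k : t ≤ k ≤ n}, and assume max_{k∈A} p(k) ≤ max_{k∈B} p(k). Then for all reals 0 < s' ≤ s ≤ 1, (Σ_{k∈A} p(k)^s)·(Σ_{k∈B} p(k)^{s'}) ≤ (n+1)²·(Σ_{k∈B} p(k)^s)·(Σ_{k∈A} p(k)^{s'}). -/
/-!
Let `c = max_B p`, which also dominates `p` on `A`. Since `s - s' ≥ 0`, each `k ∈ A` satisfies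
`p k ^ s ≤ c ^ (s - s') * p k ^ s'`, so `Σ_A p^s ≤ c ^ (s - s') * Σ_A p^{s'}`. On the other side,
`Σ_B p^{s'}` has at most `n + 1` terms, each at most `c ^ s'`, so
`c ^ (s - s') * Σ_B p^{s'} ≤ (n + 1) * c ^ s ≤ (n + 1) * Σ_B p^s`. Multiplying the two bounds gives
the inequality even with the constant `n + 1 ≤ (n + 1)²`.
-/

/-- let `p` be strictly positive on `{0,…,n}` and `t ∈ {1,…,n}`; write
`A = {k : k < t}`, `B = {k : t ≤ k ≤ n}` and assume `max_A p ≤ max_B p` (there is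
`k₀ ∈ B` dominating all of `A`). Then for all reals `0 < s' ≤ s ≤ 1`,
`(Σ_A p^s)·(Σ_B p^{s'}) ≤ (n+1)²·(Σ_B p^s)·(Σ_A p^{s'})`. -/
theorem entropy_dampening_mass_inequality :
    ∀ n : ℕ, ∀ p : ℕ → ℝ, (∀ k ≤ n, 0 < p k) → ∀ t : ℕ, 1 ≤ t → t ≤ n →
      (∃ k₀, t ≤ k₀ ∧ k₀ ≤ n ∧ ∀ k < t, p k ≤ p k₀) →
      ∀ s s' : ℝ, 0 < s' → s' ≤ s → s ≤ 1 →
        (∑ k ∈ Finset.range t, p k ^ s) * (∑ k ∈ Finset.Icc t n, p k ^ s') ≤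
          ((n : ℝ) + 1) ^ 2 *
            ((∑ k ∈ Finset.Icc t n, p k ^ s) * (∑ k ∈ Finset.range t, p k ^ s')) := by
  intro n p hp t ht htn ⟨k₀, htk₀, hk₀n, hk₀⟩ s s' hs' hss' _
  obtain ⟨m, hm, hmax⟩ := Finset.exists_max_image (Finset.Icc t n) p
    ⟨k₀, Finset.mem_Icc.2 ⟨htk₀, hk₀n⟩⟩
  have hmn := Finset.mem_Icc.1 hm
  have hc : 0 < p m := hp m hmn.2
  have hA : ∀ k < t, p k ≤ p m := fun k hk =>
    (hk₀ k hk).trans (hmax k₀ (Finset.mem_Icc.2 ⟨htk₀, hk₀n⟩))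
  have hposB : ∀ k ∈ Finset.Icc t n, 0 < p k := fun k hk => hp k (Finset.mem_Icc.1 hk).2
  have hposA : ∀ k ∈ Finset.range t, 0 < p k := fun k hk =>
    hp k ((Finset.mem_range.1 hk).le.trans htn)
  have h1 : ∑ k ∈ Finset.range t, p k ^ s ≤
      p m ^ (s - s') * ∑ k ∈ Finset.range t, p k ^ s' := by
    rw [Finset.mul_sum]
    refine Finset.sum_le_sum fun k hk => ?_
    have hk0 := hposA k hk
    calc p k ^ s = p k ^ (s - s') * p k ^ s' := by
          rw [← Real.rpow_add hk0, sub_add_cancel]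
      _ ≤ p m ^ (s - s') * p k ^ s' :=
          mul_le_mul_of_nonneg_right
            (Real.rpow_le_rpow hk0.le (hA k (Finset.mem_range.1 hk)) (sub_nonneg.2 hss'))
            (Real.rpow_nonneg hk0.le _)
  have h2 : ∑ k ∈ Finset.Icc t n, p k ^ s' ≤ ((n : ℝ) + 1) * p m ^ s' := by
    have hcard : ((Finset.Icc t n).card : ℝ) ≤ (n : ℝ) + 1 := by
      rw [Nat.card_Icc]
      exact_mod_cast Nat.sub_le _ _
    calc ∑ k ∈ Finset.Icc t n, p k ^ s' ≤ (Finset.Icc t n).card • p m ^ s' :=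
          Finset.sum_le_card_nsmul _ _ _ fun k hk =>
            Real.rpow_le_rpow (hposB k hk).le (hmax k hk) hs'.le
      _ ≤ ((n : ℝ) + 1) * p m ^ s' := by
          rw [nsmul_eq_mul]
          exact mul_le_mul_of_nonneg_right hcard (Real.rpow_nonneg hc.le _)
  have h3 : p m ^ s ≤ ∑ k ∈ Finset.Icc t n, p k ^ s :=
    Finset.single_le_sum (f := fun k => p k ^ s)
      (fun k hk => Real.rpow_nonneg (hposB k hk).le _) hm
  have hSA : 0 ≤ ∑ k ∈ Finset.range t, p k ^ s' :=
    Finset.sum_nonneg fun k hk => Real.rpow_nonneg (hposA k hk).le _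
  have hSB : 0 ≤ ∑ k ∈ Finset.Icc t n, p k ^ s' :=
    Finset.sum_nonneg fun k hk => Real.rpow_nonneg (hposB k hk).le _
  have hn : (n : ℝ) + 1 ≤ ((n : ℝ) + 1) ^ 2 :=
    le_self_pow₀ (by linarith [n.cast_nonneg (α := ℝ)]) two_ne_zero
  have hcs : p m ^ (s - s') * p m ^ s' = p m ^ s := by
    rw [← Real.rpow_add hc, sub_add_cancel]
  have hcn : 0 ≤ p m ^ (s - s') := Real.rpow_nonneg hc.le _
  have hcs0 : 0 ≤ p m ^ s := Real.rpow_nonneg hc.le _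
  calc (∑ k ∈ Finset.range t, p k ^ s) * (∑ k ∈ Finset.Icc t n, p k ^ s')
      ≤ (p m ^ (s - s') * ∑ k ∈ Finset.range t, p k ^ s') * (((n : ℝ) + 1) * p m ^ s') :=
        mul_le_mul h1 h2 hSB (mul_nonneg hcn hSA)
    _ = ((n : ℝ) + 1) * (p m ^ s * ∑ k ∈ Finset.range t, p k ^ s') := by
        rw [← hcs]; ring
    _ ≤ ((n : ℝ) + 1) ^ 2 *
          ((∑ k ∈ Finset.Icc t n, p k ^ s) * (∑ k ∈ Finset.range t, p k ^ s')) :=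
        mul_le_mul hn (mul_le_mul_of_nonneg_right h3 hSA) (mul_nonneg hcs0 hSA) (sq_nonneg _)
end

section
/- Fix a real C > 1 and an exponent k ≥ 1. There exists a constant c > 0 such that for all integers N, N' ≥ 1 and every M with N+N' ≤ M ≤ (N+N')^k, the swapping chain on {−N,…,N'}^{M+1} for the bimodal exponential distributions π_i(x) ∝ C^{(i/M)|x|}, 0 ≤ i ≤ M, has mixing time τ(ε) ≤ (N+N'+M)^c·(1 + ln(1/ε)) for every ε ∈ (0,1); i.e., the swapping chain is polynomially mixing. -/
/-! The chain is reversible with respect to the product measure, so it suffices to keep both ends of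
its spectrum a polynomial distance away from `±1` and to bound the smallest stationary weight below
by `exp (-Λ)` with `Λ` polynomial: `contraction` and `mixingTime_le` then give
`τ(ε) ≤ 2 K (Λ + 2 log (1 / ε))` up to rounding, with `1 / K` the order of the gap.

The upper end of the spectrum is a Poincaré inequality, `swap_poincare`. Cut `{-N, …, N'}` into two
blocks: the strictly positive or strictly negative side, whichever is longer (`heavySide`), and
everything else. On each block the weight is monotone, so the walk at a fixed level has a polynomial
gap there (`local_gap`). This controls the fluctuation of a function around its mean on each
pattern of blocks (`blockVar_le`) and leaves the variance of the block means, a function of the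
pattern in `Bool ^ (M + 1)` under a product measure. By tensorization (`tensorize`) that variance
is bounded by the energies of flipping the block of a single level.

A flip at level `i + 1` is a swap with level `i`, a flip at level `i`, and a swap back. The odds of
the heavy block grow with the level (`blockW_mono`), so carrying a light block one level down
does not decrease the weight, and the flip energy is multiplied by at most `1 + 1 / M` per level
(`flipEnergy_succ_le`); after `M` levels the total loss is a factor `3` (`flipEnergy_le`). At
level `0` the measure is uniform and the plain walk crosses between the blocks (`zero_gap`). The
swaps used along the way are available because `N + N' ≤ M` makes adjacent levels comparable up to
a factor `C`, which bounds the acceptance probability below (`biExp_ratio`, `blockSwapEnergy_le`).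

The lower end of the spectrum comes from the walk at level `0` alone, which holds with probability
`1 / 2` at the endpoints (`flat_sum_form`, `swapChain_sum_form`).
-/

open Finset

noncomputable section

/-- The mixing time of a Markov chain with transition matrix `P` and target
distribution `π`. -/
noncomputable def mixingTime {S : Type} [Fintype S] [DecidableEq S]
    (P : Matrix S S ℝ) (π : S → ℝ) (ε : ℝ) : ℕ :=
  sInf {t : ℕ | ∀ t' : ℕ, t ≤ t' → ∀ x : S,
    (1/2) * ∑ y : S, |(P ^ t') x y - π y| ≤ ε}

/-- Exchange coordinates `i` and `i+1` of the tuple `x`. -/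
def swapConfigAt {E : Type} {M : ℕ} (x : Fin (M+1) → E) (i : Fin M) :
    Fin (M+1) → E :=
  Function.update (Function.update x i.castSucc (x i.succ)) i.succ (x i.castSucc)

/-- Off-diagonal transition rates of the swapping chain with level proposal `Q` and
tempering distributions `π`: level Metropolis moves in a uniformly random coordinate
(with probability 1/2) and swaps of adjacent coordinates (with probability 1/2). -/
noncomputable def swapOff {E : Type} [Fintype E] [DecidableEq E] {M : ℕ}
    (Q : E → E → ℝ) (π : Fin (M+1) → E → ℝ) (x y : Fin (M+1) → E) : ℝ :=
  (∑ i : Fin (M+1),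
    if y = Function.update x i (y i) ∧ y i ≠ x i then
      (1 / (2 * ((M : ℝ) + 1))) * Q (x i) (y i) * min 1 (π i (y i) / π i (x i))
    else 0) +
  (∑ i : Fin M,
    if y = swapConfigAt x i then
      (1 / (2 * (M : ℝ))) * min 1
        ((π i.castSucc (x i.succ) * π i.succ (x i.castSucc)) /
          (π i.castSucc (x i.castSucc) * π i.succ (x i.succ)))
    else 0)

/-- The swapping (parallel tempering) chain with level proposal `Q` and tempering
distributions `π`. -/
noncomputable def swapChain {E : Type} [Fintype E] [DecidableEq E] {M : ℕ}
    (Q : E → E → ℝ) (π : Fin (M+1) → E → ℝ) :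
    Matrix (Fin (M+1) → E) (Fin (M+1) → E) ℝ :=
  Matrix.of fun x y =>
    if y = x then 1 - ∑ z ∈ Finset.univ.erase x, swapOff Q π x z
    else swapOff Q π x y

/-- The integer interval `{−N, …, N'}` as a type. -/
abbrev IntBox (N N' : ℕ) : Type := ↥(Finset.Icc (-(N : ℤ)) (N' : ℤ))

/-- The bimodal exponential distribution `π_i(x) ∝ C^((i/M)·|x|)` on `{−N,…,N'}`. -/
noncomputable def biExp (C : ℝ) (N N' M : ℕ) (i : Fin (M+1)) (a : IntBox N N') : ℝ :=
  C ^ (((i : ℕ) : ℝ) / M * |((a : ℤ) : ℝ)|) /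
    ∑ b : IntBox N N', C ^ (((i : ℕ) : ℝ) / M * |((b : ℤ) : ℝ)|)

/-- The symmetric ±1 random-walk proposal on `{−N,…,N'}` (off-diagonal entries). -/
noncomputable def walkProp (N N' : ℕ) (a b : IntBox N N') : ℝ :=
  if ((b : ℤ) - (a : ℤ)).natAbs = 1 then 1/2 else 0

end

set_option linter.unusedSectionVars false
set_option linter.unusedFintypeInType false
set_option linter.unusedDecidableInType false

/-! ### Finite product measures -/

section ProductMeasure

variable {ι A : Type} [Fintype ι] [DecidableEq ι] [Fintype A]

/-- The product weight `x ↦ ∏ i, p i (x i)`. -/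
def prodW (p : ι → A → ℝ) (x : ι → A) : ℝ := ∏ i, p i (x i)

lemma prodW_nonneg {p : ι → A → ℝ} (hp : ∀ i a, 0 ≤ p i a) (x : ι → A) : 0 ≤ prodW p x :=
  Finset.prod_nonneg fun i _ => hp i _

/-- The ratio of two product weights whose factors agree away from `i`, at two points that agree
away from `i`, in division-free form. -/
lemma prodW_update_mul' {p p' : ι → A → ℝ} {i : ι} (h : ∀ j, j ≠ i → p' j = p j) (x : ι → A)
    (a : A) : prodW p' (Function.update x i a) * p i (x i) = prodW p x * p' i a := by
  unfold prodW
  rw [← Finset.mul_prod_erase univ _ (mem_univ i),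
    ← Finset.mul_prod_erase univ (fun j => p j (x j)) (mem_univ i)]
  have : ∏ j ∈ univ.erase i, p' j (Function.update x i a j) =
      ∏ j ∈ univ.erase i, p j (x j) := by
    refine Finset.prod_congr rfl fun j hj => ?_
    rw [Function.update_of_ne (Finset.ne_of_mem_erase hj), h j (Finset.ne_of_mem_erase hj)]
  rw [this, Function.update_self]
  ring

lemma prodW_update_mul (p : ι → A → ℝ) (x : ι → A) (i : ι) (a : A) :
    prodW p (Function.update x i a) * p i (x i) = prodW p x * p i a :=
  prodW_update_mul' (fun _ _ => rfl) x a

lemma sum_prodW {p : ι → A → ℝ} (hp : ∀ i, ∑ a, p i a = 1) : ∑ x, prodW p x = 1 := by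
  unfold prodW
  rw [← Fintype.prod_sum]
  simp [hp]

/-- If `p` and `p'` differ at most at coordinate `i`, then `p'` is obtained from `p` by resampling
that coordinate. -/
lemma resample' {p p' : ι → A → ℝ} {i : ι} (h : ∀ j, j ≠ i → p' j = p j)
    (hp : ∑ a, p i a = 1) (H : (ι → A) → ℝ) :
    ∑ x, prodW p' x * H x = ∑ x, prodW p x * ∑ a, p' i a * H (Function.update x i a) := by
  have h1 : ∑ x, prodW p' x * H x = ∑ z : (ι → A) × A, prodW p' z.1 * p i z.2 * H z.1 := by
    rw [Fintype.sum_prod_type]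
    refine Finset.sum_congr rfl fun x _ => ?_
    simp only
    rw [← Finset.sum_mul, ← Finset.mul_sum, hp, mul_one]
  have h2 : ∑ x, prodW p x * ∑ a, p' i a * H (Function.update x i a)
      = ∑ z : (ι → A) × A, prodW p z.1 * p' i z.2 * H (Function.update z.1 i z.2) := by
    rw [Fintype.sum_prod_type]
    refine Finset.sum_congr rfl fun x _ => ?_
    rw [Finset.mul_sum]
    refine Finset.sum_congr rfl fun a _ => ?_
    ring
  rw [h1, h2]
  -- The involution `(x, a) ↦ (x[i ↦ a], x i)` carries one weight to the other.
  let e : (ι → A) × A → (ι → A) × A := fun z => (Function.update z.1 i z.2, z.1 i)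
  have he : Function.Involutive e := by
    rintro ⟨x, a⟩
    simp [e]
  refine (Fintype.sum_equiv he.toPerm _ _ fun z => ?_).symm
  simp only [Function.Involutive.coe_toPerm, e]
  rw [prodW_update_mul' h]

/-- A product probability measure is invariant under resampling one coordinate. -/
lemma resample {p : ι → A → ℝ} {i : ι} (hp : ∑ a, p i a = 1) (H : (ι → A) → ℝ) :
    ∑ x, prodW p x * H x = ∑ x, prodW p x * ∑ a, p i a * H (Function.update x i a) :=
  resample' (fun _ _ => rfl) hp H

lemma marginal {p : ι → A → ℝ} (hp : ∀ i, ∑ a, p i a = 1) (i : ι) (h : A → ℝ) :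
    ∑ x, prodW p x * h (x i) = ∑ a, p i a * h a := by
  rw [resample (hp i)]
  simp only [Function.update_self]
  rw [← Finset.sum_mul, sum_prodW hp, one_mul]

end ProductMeasure

section Tensorization

variable {A : Type} [Fintype A] {n : ℕ}

/-- The configuration that agrees with `y` on the first `k` coordinates and with `x` on the
others. -/
def mix (k : ℕ) (x y : Fin n → A) : Fin n → A := fun j => if (j : ℕ) < k then y j else x j

/-- A subadditivity property of the variance under a product measure: up to the factor `n`, the
variance is at most the sum of the one-coordinate variances. The two configurations are joined by
replacing the coordinates one at a time. -/
lemma tensorize {p : Fin n → A → ℝ} (hp0 : ∀ i a, 0 ≤ p i a) (hp : ∀ i, ∑ a, p i a = 1)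
    (f : (Fin n → A) → ℝ) :
    ∑ x, ∑ y, prodW p x * prodW p y * (f x - f y) ^ 2 ≤
      n * ∑ i, ∑ x, prodW p x * ∑ a, p i a * (f x - f (Function.update x i a)) ^ 2 := by
  have key : ∀ x y : Fin n → A, (f x - f y) ^ 2 ≤
      n * ∑ i : Fin n, (f (mix i x y) - f (Function.update (mix i x y) i (y i))) ^ 2 := by
    intro x y
    have h0 : mix 0 x y = x := by ext j; simp [mix]
    have hn : mix n x y = y := by ext j; simp [mix]
    have hs : ∀ i : Fin n, Function.update (mix i x y) i (y i) = mix (i + 1) x y := by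
      intro i
      ext j
      by_cases hj : j = i
      · subst hj; simp [mix]
      · rw [Function.update_of_ne hj]
        have : (j : ℕ) ≠ i := fun h => hj (Fin.ext h)
        have h2 : ((j : ℕ) < i + 1) ↔ ((j : ℕ) < i) := by omega
        simp [mix, h2]
    have ht : f x - f y = ∑ i : Fin n, (f (mix i x y) - f (mix (i + 1) x y)) := by
      rw [Fin.sum_univ_eq_sum_range (fun k => f (mix k x y) - f (mix (k + 1) x y)) n,
        Finset.sum_range_sub', h0, hn]
    rw [ht]
    refine sq_sum_le_card_mul_sum_sq.trans ?_
    simp [hs]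
  have term : ∀ i : Fin n, ∑ x, ∑ y, prodW p x * prodW p y *
      (f (mix i x y) - f (Function.update (mix i x y) i (y i))) ^ 2 =
      ∑ x, prodW p x * ∑ a, p i a * (f x - f (Function.update x i a)) ^ 2 := by
    intro i
    have h1 : ∀ x : Fin n → A, ∑ a, p i a * (f x - f (Function.update x i a)) ^ 2 =
        ∑ y, prodW p y * (f x - f (Function.update x i (y i))) ^ 2 := fun x =>
      (marginal hp i (fun a => (f x - f (Function.update x i a)) ^ 2)).symm
    simp only [h1, Finset.mul_sum]
    rw [← Fintype.sum_prod_type', ← Fintype.sum_prod_type']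
    -- Exchanging the first `i` coordinates of `x` and `y` preserves the product weight.
    let e : (Fin n → A) × (Fin n → A) → (Fin n → A) × (Fin n → A) :=
      fun z => (mix i z.1 z.2, mix i z.2 z.1)
    have he : Function.Involutive e := by
      rintro ⟨x, y⟩
      simp only [e, Prod.mk.injEq]
      constructor <;> (ext j; simp only [mix]; split_ifs <;> rfl)
    refine Fintype.sum_equiv he.toPerm _ _ fun z => ?_
    simp only [Function.Involutive.coe_toPerm, e]
    have hw : prodW p (mix i z.1 z.2) * prodW p (mix i z.2 z.1) = prodW p z.1 * prodW p z.2 := by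
      unfold prodW
      rw [← Finset.prod_mul_distrib, ← Finset.prod_mul_distrib]
      refine Finset.prod_congr rfl fun j _ => ?_
      simp only [mix]
      split_ifs
      · ring
      · rfl
    have hi : mix (i : ℕ) z.2 z.1 i = z.2 i := by simp [mix]
    rw [← mul_assoc, hw, hi]
  calc ∑ x, ∑ y, prodW p x * prodW p y * (f x - f y) ^ 2
      ≤ ∑ x, ∑ y, prodW p x * prodW p y *
        (n * ∑ i : Fin n, (f (mix i x y) - f (Function.update (mix i x y) i (y i))) ^ 2) := by
        refine Finset.sum_le_sum fun x _ => Finset.sum_le_sum fun y _ => ?_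
        exact mul_le_mul_of_nonneg_left (key x y)
          (mul_nonneg (prodW_nonneg hp0 x) (prodW_nonneg hp0 y))
    _ = n * ∑ i : Fin n, ∑ x, ∑ y, prodW p x * prodW p y *
        (f (mix i x y) - f (Function.update (mix i x y) i (y i))) ^ 2 := by
        rw [Finset.mul_sum]
        simp only [Finset.mul_sum]
        rw [Finset.sum_comm' (t' := univ) (s' := fun _ => univ) (by simp)]
        symm
        rw [Finset.sum_comm' (t' := univ) (s' := fun _ => univ) (by simp)]
        refine Eq.trans (Finset.sum_congr rfl fun x _ => Finset.sum_comm) ?_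
        rw [Finset.sum_comm]
        refine Finset.sum_congr rfl fun y _ => Finset.sum_congr rfl fun x _ =>
          Finset.sum_congr rfl fun i _ => ?_
        ring
    _ = _ := by simp only [term]

end Tensorization

/-! ### Projection onto a two-block partition of each level -/

lemma jensen_sq {S : Type} [Fintype S] {w : S → ℝ} (hw : ∀ x, 0 ≤ w x) (hw1 : ∑ x, w x = 1)
    (g : S → ℝ) : (∑ x, w x * g x) ^ 2 ≤ ∑ x, w x * g x ^ 2 :=
  Real.pow_arith_mean_le_arith_mean_pow_of_even univ w g (fun x _ => hw x) hw1 even_two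

section Projection

variable {E : Type} [Fintype E] [DecidableEq E] {n : ℕ}

/-- The mass of the block `s = b` at level `i`. -/
def blockW (s : E → Bool) (p : Fin n → E → ℝ) (i : Fin n) (b : Bool) : ℝ :=
  ∑ a, if s a = b then p i a else 0

/-- The distribution `p i` conditioned on the block `s = b`. -/
noncomputable def condW (s : E → Bool) (p : Fin n → E → ℝ) (i : Fin n) (b : Bool) (a : E) : ℝ :=
  if s a = b then p i a / blockW s p i b else 0

/-- The conditional mean of `f` given that coordinate `i` lies in block `σ i` for every `i`. -/
noncomputable def blockMean (s : E → Bool) (p : Fin n → E → ℝ) (f : (Fin n → E) → ℝ) (σ : Fin n → Bool) : ℝ :=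
  ∑ x, prodW (fun i => condW s p i (σ i)) x * f x

/-- The expected conditional variance of `f` given the blocks. -/
noncomputable def blockVar (s : E → Bool) (p : Fin n → E → ℝ) (f : (Fin n → E) → ℝ) : ℝ :=
  ∑ x, prodW p x * (f x - blockMean s p f (fun i => s (x i))) ^ 2

variable {s : E → Bool} {p : Fin n → E → ℝ}

lemma blockW_nonneg (hp0 : ∀ i a, 0 < p i a) (i : Fin n) (b : Bool) : 0 ≤ blockW s p i b :=
  Finset.sum_nonneg fun a _ => by
    split_ifs
    · exact (hp0 i a).le
    · exact le_rfl

lemma condW_nonneg (hp0 : ∀ i a, 0 < p i a) (i : Fin n) (b : Bool) (a : E) :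
    0 ≤ condW s p i b a := by
  unfold condW
  split_ifs
  · exact div_nonneg (hp0 i a).le (blockW_nonneg hp0 i b)
  · exact le_rfl

lemma sum_condW (hq : ∀ i b, 0 < blockW s p i b) (i : Fin n) (b : Bool) :
    ∑ a, condW s p i b a = 1 := by
  have : ∀ a, condW s p i b a = (if s a = b then p i a else 0) / blockW s p i b := by
    intro a
    unfold condW
    split_ifs <;> simp
  simp only [this]
  rw [← Finset.sum_div]
  exact div_self (hq i b).ne'

lemma sum_blockW (hp : ∀ i, ∑ a, p i a = 1) (i : Fin n) : ∑ b, blockW s p i b = 1 := by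
  unfold blockW
  rw [Finset.sum_comm]
  simpa using hp i

lemma blockW_mul_condW (hq : ∀ i b, 0 < blockW s p i b) (σ : Fin n → Bool) (x : Fin n → E) :
    prodW (blockW s p) σ * prodW (fun i => condW s p i (σ i)) x =
      if σ = (fun i => s (x i)) then prodW p x else 0 := by
  unfold prodW
  rw [← Finset.prod_mul_distrib]
  split_ifs with h
  · subst h
    refine Finset.prod_congr rfl fun i _ => ?_
    simp only [condW, if_true]
    field_simp [(hq i (s (x i))).ne']
  · obtain ⟨i, hi⟩ := Function.ne_iff.mp h
    refine Finset.prod_eq_zero (mem_univ i) ?_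
    simp [condW, Ne.symm hi]

/-- Disintegration of the product measure over the blocks. -/
lemma disintegrate (hq : ∀ i b, 0 < blockW s p i b) (H : (Fin n → Bool) → (Fin n → E) → ℝ) :
    ∑ σ, prodW (blockW s p) σ * ∑ x, prodW (fun i => condW s p i (σ i)) x * H σ x =
      ∑ x, prodW p x * H (fun i => s (x i)) x := by
  simp only [Finset.mul_sum, ← mul_assoc, blockW_mul_condW hq]
  rw [Finset.sum_comm]
  simp

lemma sum_blockW_mul (hq : ∀ i b, 0 < blockW s p i b) (G : (Fin n → Bool) → ℝ) :
    ∑ σ, prodW (blockW s p) σ * G σ = ∑ x, prodW p x * G (fun i => s (x i)) := by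
  rw [← disintegrate hq (fun σ _ => G σ)]
  refine Finset.sum_congr rfl fun σ _ => ?_
  rw [← Finset.sum_mul, sum_prodW (fun i => sum_condW hq i (σ i)), one_mul]

lemma blockVar_le (hp0 : ∀ i a, 0 < p i a) (hq : ∀ i b, 0 < blockW s p i b)
    (f : (Fin n → E) → ℝ) :
    blockVar s p f ≤ n * ∑ i, ∑ x, prodW p x *
      ∑ a, condW s p i (s (x i)) a * (f x - f (Function.update x i a)) ^ 2 := by
  have hk0 := fun σ : Fin n → Bool => fun (i : Fin n) (a : E) =>
    condW_nonneg (s := s) hp0 i (σ i) a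
  have hk1 := fun σ : Fin n → Bool => fun (i : Fin n) => sum_condW hq i (σ i)
  unfold blockVar
  rw [← disintegrate hq (fun σ x => (f x - blockMean s p f σ) ^ 2)]
  calc ∑ σ, prodW (blockW s p) σ * ∑ x, prodW (fun i => condW s p i (σ i)) x *
        (f x - blockMean s p f σ) ^ 2
      ≤ ∑ σ, prodW (blockW s p) σ * (n * ∑ i, ∑ x, prodW (fun i => condW s p i (σ i)) x *
        ∑ a, condW s p i (σ i) a * (f x - f (Function.update x i a)) ^ 2) := by
        refine Finset.sum_le_sum fun σ _ => mul_le_mul_of_nonneg_left ?_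
          (prodW_nonneg (blockW_nonneg hp0) σ)
        refine le_trans ?_ (tensorize (hk0 σ) (hk1 σ) f)
        refine Finset.sum_le_sum fun x _ => ?_
        simp only [mul_assoc]
        rw [← Finset.mul_sum]
        refine mul_le_mul_of_nonneg_left ?_ (prodW_nonneg (hk0 σ) x)
        have : f x - blockMean s p f σ =
            ∑ y, prodW (fun i => condW s p i (σ i)) y * (f x - f y) := by
          simp only [mul_sub]
          rw [Finset.sum_sub_distrib, ← Finset.sum_mul, sum_prodW (hk1 σ), one_mul]
          rfl
        rw [this]
        exact jensen_sq (prodW_nonneg (hk0 σ)) (sum_prodW (hk1 σ)) _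
    _ = n * ∑ i, ∑ σ, prodW (blockW s p) σ * ∑ x, prodW (fun i => condW s p i (σ i)) x *
        ∑ a, condW s p i (σ i) a * (f x - f (Function.update x i a)) ^ 2 := by
        rw [Finset.sum_comm, Finset.mul_sum]
        refine Finset.sum_congr rfl fun σ _ => ?_
        rw [← Finset.mul_sum]
        ring
    _ = _ := by
        congr 1
        refine Finset.sum_congr rfl fun i _ => ?_
        exact disintegrate hq (fun σ x =>
          ∑ a, condW s p i (σ i) a * (f x - f (Function.update x i a)) ^ 2)

/-- Transfers a one-coordinate identity to the product space: conditionally on the other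
coordinates, coordinate `i` has distribution `p i`. -/
lemma lift_coord (hp : ∀ i, ∑ a, p i a = 1) (i : Fin n) (R : E → E → ℝ) (φ : ℝ → ℝ → ℝ)
    (f : (Fin n → E) → ℝ) :
    ∑ x, prodW p x * ∑ a, R (x i) a * φ (f x) (f (Function.update x i a)) =
      ∑ x, prodW p x * ∑ u, p i u * ∑ a, R u a *
        φ (f (Function.update x i u)) (f (Function.update x i a)) := by
  rw [resample (hp i)]
  simp

/-- The energy of the Metropolis moves at level `i`. -/
noncomputable def levelEnergy (Q : E → E → ℝ) (p : Fin n → E → ℝ) (i : Fin n) (f : (Fin n → E) → ℝ) : ℝ :=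
  ∑ x, prodW p x * ∑ a, (Q (x i) a * min 1 (p i a / p i (x i))) *
    (f x - f (Function.update x i a)) ^ 2

lemma lift_poincare (hp0 : ∀ i a, 0 < p i a) (hp : ∀ i, ∑ a, p i a = 1) (i : Fin n)
    (Q R : E → E → ℝ) (K : ℝ)
    (hK : ∀ h : E → ℝ, ∑ u, p i u * ∑ a, R u a * (h u - h a) ^ 2 ≤
      K * ∑ u, p i u * ∑ a, (Q u a * min 1 (p i a / p i u)) * (h u - h a) ^ 2)
    (f : (Fin n → E) → ℝ) :
    ∑ x, prodW p x * ∑ a, R (x i) a * (f x - f (Function.update x i a)) ^ 2 ≤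
      K * levelEnergy Q p i f := by
  unfold levelEnergy
  rw [lift_coord hp i R (fun u v => (u - v) ^ 2),
    lift_coord hp i (fun u a => Q u a * min 1 (p i a / p i u)) (fun u v => (u - v) ^ 2),
    Finset.mul_sum]
  refine Finset.sum_le_sum fun x _ => ?_
  rw [mul_left_comm]
  exact mul_le_mul_of_nonneg_left (hK _) (prodW_nonneg (fun i a => (hp0 i a).le) x)

/-- The energy of the block flips `false → true` at level `i`, each charged to the configuration
in which level `i` lies in the lighter block `false`. -/
def flipEnergy (q : Fin n → Bool → ℝ) (i : Fin n) (F : (Fin n → Bool) → ℝ) : ℝ :=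
  ∑ σ, prodW q σ * if σ i = false then (F σ - F (Function.update σ i true)) ^ 2 else 0

lemma flipEnergy_eq {q : Fin n → Bool → ℝ} (hq1 : ∀ i, ∑ b, q i b = 1) (i : Fin n)
    (F : (Fin n → Bool) → ℝ) :
    flipEnergy q i F = ∑ σ, prodW q σ *
      (q i false * (F (Function.update σ i false) - F (Function.update σ i true)) ^ 2) := by
  unfold flipEnergy
  rw [resample (hq1 i)]
  simp

/-- The variance of a two-valued coordinate with weights `q`, `1 - q` is `q (1 - q)` times the squared
difference, so it is enough to control flips weighted by the block `false`. -/
lemma coord_var_le {q : Fin n → Bool → ℝ} (hq0 : ∀ i b, 0 ≤ q i b) (hq1 : ∀ i, ∑ b, q i b = 1)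
    (i : Fin n) (F : (Fin n → Bool) → ℝ) :
    ∑ σ, prodW q σ * ∑ b, q i b * (F σ - F (Function.update σ i b)) ^ 2 ≤
      2 * flipEnergy q i F := by
  rw [flipEnergy_eq hq1, resample (hq1 i), Finset.mul_sum]
  refine Finset.sum_le_sum fun σ _ => ?_
  rw [mul_left_comm]
  refine mul_le_mul_of_nonneg_left ?_ (prodW_nonneg hq0 σ)
  have h1 := hq1 i
  have h0 := hq0 i false
  have h2 := hq0 i true
  simp only [Fintype.sum_bool, Function.update_idem, sub_self] at h1 ⊢
  set u := F (Function.update σ i true)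
  set v := F (Function.update σ i false)
  have h3 : q i true ≤ 1 := by linarith
  nlinarith [mul_nonneg (mul_nonneg h0 (sub_nonneg.2 h3)) (sq_nonneg (u - v))]

/-- At a level where the heavy block carries at least a third of the mass, flipping the block is
controlled by resampling that coordinate from the whole distribution of the level. -/
lemma flipEnergy_zero_le (hp0 : ∀ i a, 0 < p i a) (hq : ∀ i b, 0 < blockW s p i b)
    (i : Fin n) (hi : 1 ≤ 3 * blockW s p i true) (f : (Fin n → E) → ℝ) :
    flipEnergy (blockW s p) i (blockMean s p f) ≤
      3 * ∑ x, prodW p x * ∑ a, p i a * (f x - f (Function.update x i a)) ^ 2 := by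
  have hk0 := fun σ : Fin n → Bool => fun (i : Fin n) (a : E) =>
    condW_nonneg (s := s) hp0 i (σ i) a
  have hk1 := fun σ : Fin n → Bool => fun (i : Fin n) => sum_condW hq i (σ i)
  have hc : ∀ a, condW s p i true a ≤ 3 * p i a := by
    intro a
    have := hp0 i a
    unfold condW
    split_ifs
    · rw [div_le_iff₀ (hq i true)]
      nlinarith
    · linarith
  rw [Finset.mul_sum]
  have step : flipEnergy (blockW s p) i (blockMean s p f) ≤
      ∑ σ, prodW (blockW s p) σ * ∑ x, prodW (fun j => condW s p j (σ j)) x *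
        (3 * ∑ a, p i a * (f x - f (Function.update x i a)) ^ 2) := by
    refine Finset.sum_le_sum fun σ _ => mul_le_mul_of_nonneg_left ?_
          (prodW_nonneg (blockW_nonneg hp0) σ)
    have hmean : blockMean s p f (Function.update σ i true) =
        ∑ x, prodW (fun j => condW s p j (σ j)) x *
          ∑ a, condW s p i true a * f (Function.update x i a) := by
      unfold blockMean
      rw [resample' (p := fun j => condW s p j (σ j)) (i := i)
        (fun j hj => by rw [Function.update_of_ne hj]) (hk1 σ i)]
      simp
    split_ifs with hσ
    · rw [hmean]
      unfold blockMean
      rw [← Finset.sum_sub_distrib]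
      simp only [← mul_sub]
      refine (jensen_sq (prodW_nonneg (hk0 σ)) (sum_prodW (hk1 σ)) _).trans ?_
      refine Finset.sum_le_sum fun x _ => mul_le_mul_of_nonneg_left ?_
        (prodW_nonneg (hk0 σ) x)
      have h1 : f x - ∑ a, condW s p i true a * f (Function.update x i a) =
          ∑ a, condW s p i true a * (f x - f (Function.update x i a)) := by
        simp only [mul_sub]
        rw [Finset.sum_sub_distrib, ← Finset.sum_mul, sum_condW hq, one_mul]
      rw [h1]
      refine (jensen_sq (condW_nonneg hp0 i true) (sum_condW hq i true) _).trans ?_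
      rw [Finset.mul_sum]
      refine Finset.sum_le_sum fun a _ => ?_
      rw [← mul_assoc]
      exact mul_le_mul_of_nonneg_right (hc a) (sq_nonneg _)
    · refine Finset.sum_nonneg fun x _ => mul_nonneg (prodW_nonneg (hk0 σ) x) ?_
      refine mul_nonneg (by norm_num) (Finset.sum_nonneg fun a _ => ?_)
      exact mul_nonneg (hp0 i a).le (sq_nonneg _)
  refine step.trans (le_of_eq ?_)
  rw [disintegrate hq (fun σ x => 3 * ∑ a, p i a * (f x - f (Function.update x i a)) ^ 2)]
  refine Finset.sum_congr rfl fun x _ => ?_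
  ring

end Projection

/-! ### Swaps and the transport of block flips between adjacent levels -/

section Swap

variable {A : Type} {M : ℕ}

lemma swapConfigAt_castSucc (x : Fin (M + 1) → A) (i : Fin M) :
    swapConfigAt x i i.castSucc = x i.succ := by
  unfold swapConfigAt
  rw [Function.update_of_ne (Fin.castSucc_lt_succ).ne, Function.update_self]

lemma swapConfigAt_succ (x : Fin (M + 1) → A) (i : Fin M) :
    swapConfigAt x i i.succ = x i.castSucc := by
  unfold swapConfigAt
  rw [Function.update_self]

lemma swapConfigAt_of_ne (x : Fin (M + 1) → A) (i : Fin M) {j : Fin (M + 1)}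
    (h1 : j ≠ i.castSucc) (h2 : j ≠ i.succ) : swapConfigAt x i j = x j := by
  unfold swapConfigAt
  rw [Function.update_of_ne h2, Function.update_of_ne h1]

lemma swapConfigAt_involutive (i : Fin M) :
    Function.Involutive (fun x : Fin (M + 1) → A => swapConfigAt x i) := by
  intro x
  ext j
  by_cases h1 : j = i.castSucc
  · subst h1; simp only [swapConfigAt_castSucc, swapConfigAt_succ]
  by_cases h2 : j = i.succ
  · subst h2; simp only [swapConfigAt_castSucc, swapConfigAt_succ]
  simp only [swapConfigAt_of_ne _ i h1 h2]

lemma swapConfigAt_comp {B : Type} (g : A → B) (x : Fin (M + 1) → A) (i : Fin M) :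
    (fun j => g (swapConfigAt x i j)) = swapConfigAt (fun j => g (x j)) i := by
  ext j
  by_cases h1 : j = i.castSucc
  · subst h1; simp only [swapConfigAt_castSucc]
  by_cases h2 : j = i.succ
  · subst h2; simp only [swapConfigAt_succ]
  simp only [swapConfigAt_of_ne _ i h1 h2]

lemma update_swapConfigAt (x : Fin (M + 1) → A) (i : Fin M) (a : A) :
    Function.update (swapConfigAt x i) i.castSucc a =
      swapConfigAt (Function.update x i.succ a) i := by
  have hne : i.castSucc ≠ i.succ := (Fin.castSucc_lt_succ).ne
  ext j
  by_cases h1 : j = i.castSucc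
  · subst h1; simp only [swapConfigAt_castSucc, Function.update_self]
  by_cases h2 : j = i.succ
  · subst h2
    rw [Function.update_of_ne hne.symm, swapConfigAt_succ, swapConfigAt_succ,
      Function.update_of_ne hne]
  rw [Function.update_of_ne h1, swapConfigAt_of_ne _ i h1 h2, swapConfigAt_of_ne _ i h1 h2,
    Function.update_of_ne h2]

lemma prodW_swap [Fintype A] (p : Fin (M + 1) → A → ℝ) (x : Fin (M + 1) → A) (i : Fin M) :
    prodW p (swapConfigAt x i) * (p i.castSucc (x i.castSucc) * p i.succ (x i.succ)) =
      prodW p x * (p i.castSucc (x i.succ) * p i.succ (x i.castSucc)) := by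
  have hne : i.castSucc ≠ i.succ := (Fin.castSucc_lt_succ).ne
  have h1 := prodW_update_mul p x i.castSucc (x i.succ)
  have h2 := prodW_update_mul p (Function.update x i.castSucc (x i.succ)) i.succ (x i.castSucc)
  rw [Function.update_of_ne hne.symm] at h2
  unfold swapConfigAt
  linear_combination p i.castSucc (x i.castSucc) * h2 + p i.succ (x i.castSucc) * h1

end Swap

section Transport

variable {M : ℕ}

/-- The energy of the unconditional swap of levels `i` and `i + 1` for block patterns. -/
def blockSwapEnergy (q : Fin (M + 1) → Bool → ℝ) (i : Fin M) (F : (Fin (M + 1) → Bool) → ℝ) : ℝ :=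
  ∑ σ, prodW q σ * (F σ - F (swapConfigAt σ i)) ^ 2

lemma blockSwapEnergy_nonneg {q : Fin (M + 1) → Bool → ℝ} (hq0 : ∀ i b, 0 < q i b) (i : Fin M)
    (F : (Fin (M + 1) → Bool) → ℝ) : 0 ≤ blockSwapEnergy q i F :=
  Finset.sum_nonneg fun σ _ =>
    mul_nonneg (prodW_nonneg (fun i b => (hq0 i b).le) σ) (sq_nonneg _)

/-- A flip at level `i + 1` is the composition of a swap, a flip at level `i`, and another swap.
Because the odds of the block `true` increase with the level, moving a `false` down one level never
decreases the weight. This is why the flip energy is multiplied only by `1 + δ`. -/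
lemma flipEnergy_succ_le {q : Fin (M + 1) → Bool → ℝ} (hq0 : ∀ i b, 0 < q i b) (i : Fin M)
    (hmono : q i.castSucc true * q i.succ false ≤ q i.castSucc false * q i.succ true)
    (hheavy : q i.succ false ≤ 2 * q i.succ true) {δ : ℝ} (hδ : 0 < δ)
    (F : (Fin (M + 1) → Bool) → ℝ) :
    flipEnergy q i.succ F ≤
      (1 + δ) * flipEnergy q i.castSucc F + (1 + 1 / δ) * 6 * blockSwapEnergy q i F := by
  have hw0 : ∀ σ, 0 ≤ prodW q σ := prodW_nonneg (fun i b => (hq0 i b).le)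
  set g : (Fin (M + 1) → Bool) → ℝ := fun σ => prodW q σ * (F σ - F (swapConfigAt σ i)) ^ 2
    with hg
  have hg0 : ∀ σ, 0 ≤ g σ := fun σ => mul_nonneg (hw0 σ) (sq_nonneg _)
  set d : (Fin (M + 1) → Bool) → ℝ := fun σ => prodW q σ *
    if σ i.castSucc = false then (F σ - F (Function.update σ i.castSucc true)) ^ 2 else 0 with hd
  have hd0 : ∀ σ, 0 ≤ d σ := fun σ => mul_nonneg (hw0 σ) (by split_ifs <;> positivity)
  have term : ∀ σ : Fin (M + 1) → Bool,
      (prodW q σ * if σ i.succ = false then (F σ - F (Function.update σ i.succ true)) ^ 2 else 0) ≤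
      (1 + δ) * d (swapConfigAt σ i) + (1 + 1 / δ) * 2 * g σ +
      (1 + 1 / δ) * 4 * (if σ i.succ = false then g (Function.update σ i.succ true) else 0) := by
    intro σ
    split_ifs with h
    · have hτ : prodW q σ ≤ prodW q (swapConfigAt σ i) := by
        have hid := prodW_swap q σ i
        rw [h] at hid
        rcases hc : σ i.castSucc with _ | _
        · rw [hc] at hid
          have hpos := mul_pos (hq0 i.castSucc false) (hq0 i.succ false)
          exact (mul_right_cancel₀ hpos.ne' hid).ge
        · rw [hc] at hid
          have hpos := mul_pos (hq0 i.castSucc true) (hq0 i.succ false)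
          refine le_of_mul_le_mul_right ?_ hpos
          rw [hid]
          exact mul_le_mul_of_nonneg_left hmono (hw0 σ)
      have hu : prodW q σ ≤ 2 * prodW q (Function.update σ i.succ true) := by
        have hid := prodW_update_mul q σ i.succ true
        rw [h] at hid
        refine le_of_mul_le_mul_right ?_ (hq0 i.succ true)
        rw [← hid]
        nlinarith [mul_le_mul_of_nonneg_left hheavy (hw0 (Function.update σ i.succ true))]
      have hdv : d (swapConfigAt σ i) = prodW q (swapConfigAt σ i) *
          (F (swapConfigAt σ i) - F (swapConfigAt (Function.update σ i.succ true) i)) ^ 2 := by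
        simp only [hd, swapConfigAt_castSucc, h, if_true, update_swapConfigAt]
      rw [hdv]
      simp only [hg]
      set u := F σ
      set v := F (swapConfigAt σ i)
      set z := F (swapConfigAt (Function.update σ i.succ true) i)
      set w := F (Function.update σ i.succ true)
      have hsq : (u - w) ^ 2 ≤ (1 + δ) * (v - z) ^ 2 +
          (1 + 1 / δ) * (2 * (u - v) ^ 2 + 2 * (w - z) ^ 2) := by
        have e1 : (u - w) ^ 2 ≤ (1 + δ) * (v - z) ^ 2 + (1 + 1 / δ) * ((u - v) + (z - w)) ^ 2 := by
          have : (1 + δ) * (v - z) ^ 2 + (1 + 1 / δ) * ((u - v) + (z - w)) ^ 2 - (u - w) ^ 2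
              = (δ * (v - z) - ((u - v) + (z - w))) ^ 2 / δ := by
            field_simp
            ring
          have : 0 ≤ (δ * (v - z) - ((u - v) + (z - w))) ^ 2 / δ := by positivity
          linarith
        have e2 : ((u - v) + (z - w)) ^ 2 ≤ 2 * (u - v) ^ 2 + 2 * (w - z) ^ 2 := by
          nlinarith [sq_nonneg ((u - v) - (z - w))]
        have e3 : 0 ≤ 1 + 1 / δ := by positivity
        nlinarith [mul_le_mul_of_nonneg_left e2 e3]
      have e3 : 0 ≤ 1 + 1 / δ := by positivity
      have f1 := mul_le_mul_of_nonneg_left hsq (hw0 σ)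
      have f2 : prodW q σ * ((1 + δ) * (v - z) ^ 2) ≤
          prodW q (swapConfigAt σ i) * ((1 + δ) * (v - z) ^ 2) :=
        mul_le_mul_of_nonneg_right hτ (by positivity)
      have f3 : prodW q σ * ((1 + 1 / δ) * (2 * (w - z) ^ 2)) ≤
          2 * prodW q (Function.update σ i.succ true) * ((1 + 1 / δ) * (2 * (w - z) ^ 2)) :=
        mul_le_mul_of_nonneg_right hu (by positivity)
      nlinarith
    · rw [mul_zero, mul_zero, add_zero]
      have := hd0 (swapConfigAt σ i)
      have := hg0 σ
      positivity
  have s1 : ∑ σ, d (swapConfigAt σ i) = flipEnergy q i.castSucc F :=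
    Fintype.sum_equiv (swapConfigAt_involutive i).toPerm _ _ fun σ => rfl
  have s2 : ∑ σ : Fin (M + 1) → Bool,
      (if σ i.succ = false then g (Function.update σ i.succ true) else 0) ≤
      blockSwapEnergy q i F := by
    let e : (Fin (M + 1) → Bool) → (Fin (M + 1) → Bool) :=
      fun σ => Function.update σ i.succ (!σ i.succ)
    have he : Function.Involutive e := by
      intro σ
      simp [e]
    have : ∑ σ : Fin (M + 1) → Bool,
        (if σ i.succ = false then g (Function.update σ i.succ true) else 0) =
        ∑ σ : Fin (M + 1) → Bool, if σ i.succ = true then g σ else 0 := by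
      refine Fintype.sum_equiv he.toPerm _ _ fun σ => ?_
      simp only [Function.Involutive.coe_toPerm, e, Function.update_self]
      rcases σ i.succ <;> simp
    rw [this]
    refine Finset.sum_le_sum fun σ _ => ?_
    split_ifs
    · exact le_rfl
    · exact hg0 σ
  have e3 : 0 ≤ 1 + 1 / δ := by positivity
  calc flipEnergy q i.succ F ≤ ∑ σ, ((1 + δ) * d (swapConfigAt σ i) + (1 + 1 / δ) * 2 * g σ +
      (1 + 1 / δ) * 4 * (if σ i.succ = false then g (Function.update σ i.succ true) else 0)) :=
        Finset.sum_le_sum fun σ _ => term σ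
    _ = (1 + δ) * ∑ σ, d (swapConfigAt σ i) + (1 + 1 / δ) * 2 * blockSwapEnergy q i F +
        (1 + 1 / δ) * 4 * ∑ σ : Fin (M + 1) → Bool,
          (if σ i.succ = false then g (Function.update σ i.succ true) else 0) := by
        rw [Finset.sum_add_distrib, Finset.sum_add_distrib, ← Finset.mul_sum, ← Finset.mul_sum,
          ← Finset.mul_sum]
        rfl
    _ ≤ _ := by
        rw [s1]
        nlinarith [mul_le_mul_of_nonneg_left s2 e3]

/-- Iterating the previous estimate with `δ = 1 / M` costs a factor `(1 + 1 / M) ^ M ≤ 3`. -/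
lemma flipEnergy_le {q : Fin (M + 1) → Bool → ℝ} (hM : 1 ≤ M) (hq0 : ∀ i b, 0 < q i b)
    (hmono : ∀ i : Fin M,
      q i.castSucc true * q i.succ false ≤ q i.castSucc false * q i.succ true)
    (hheavy : ∀ i, q i false ≤ 2 * q i true) (F : (Fin (M + 1) → Bool) → ℝ) (i : Fin (M + 1)) :
    flipEnergy q i F ≤
      3 * (flipEnergy q 0 F + M * ((1 + M) * 6 * ∑ j, blockSwapEnergy q j F)) := by
  have hM' : (0 : ℝ) < M := by exact_mod_cast hM
  set T := ∑ j, blockSwapEnergy q j F with hT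
  have hT0 : 0 ≤ T := Finset.sum_nonneg fun j _ => blockSwapEnergy_nonneg hq0 j F
  have hD0 : 0 ≤ flipEnergy q 0 F := Finset.sum_nonneg fun σ _ =>
    mul_nonneg (prodW_nonneg (fun i b => (hq0 i b).le) σ) (by split_ifs <;> positivity)
  have hδ : (0 : ℝ) < 1 / M := by positivity
  have main : flipEnergy q i F ≤ (1 + 1 / (M : ℝ)) ^ (i : ℕ) *
      (flipEnergy q 0 F + (i : ℕ) * ((1 + M) * 6 * T)) := by
    induction i using Fin.induction with
    | zero => simp
    | succ j ih =>
      have h1 := flipEnergy_succ_le hq0 j (hmono j) (hheavy j.succ) hδ F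
      rw [one_div_one_div] at h1
      have h2 : blockSwapEnergy q j F ≤ T :=
        Finset.single_le_sum (fun j _ => blockSwapEnergy_nonneg hq0 j F) (mem_univ j)
      have h3 := mul_le_mul_of_nonneg_left ih (by positivity : (0 : ℝ) ≤ 1 + 1 / M)
      have h4 : (1 + (M : ℝ)) * 6 * blockSwapEnergy q j F ≤ (1 + M) * 6 * T :=
        mul_le_mul_of_nonneg_left h2 (by positivity)
      have h5 : (1 : ℝ) ≤ (1 + 1 / (M : ℝ)) ^ ((j : ℕ) + 1) :=
        one_le_pow₀ (by linarith)
      have h6 : 0 ≤ (1 + (M : ℝ)) * 6 * T := by positivity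
      have h7 := mul_le_mul_of_nonneg_right h5 h6
      rw [Fin.val_succ]
      rw [Fin.val_castSucc] at h3
      push_cast
      calc _ ≤ _ := h1
        _ ≤ (1 + 1 / (M : ℝ)) * ((1 + 1 / (M : ℝ)) ^ (j : ℕ) *
            (flipEnergy q 0 F + (j : ℕ) * ((1 + M) * 6 * T))) +
            (1 + 1 / (M : ℝ)) ^ ((j : ℕ) + 1) * ((1 + M) * 6 * T) := by linarith
        _ = _ := by ring
  have hi : (i : ℕ) ≤ M := Nat.lt_succ_iff.mp i.2
  have hpow : (1 + 1 / (M : ℝ)) ^ (i : ℕ) ≤ 3 := by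
    calc (1 + 1 / (M : ℝ)) ^ (i : ℕ) ≤ (1 + 1 / (M : ℝ)) ^ M :=
          pow_le_pow_right₀ (by linarith) hi
      _ ≤ (Real.exp (1 / (M : ℝ))) ^ M := by
          refine pow_le_pow_left₀ (by positivity) ?_ M
          linarith [Real.add_one_le_exp (1 / (M : ℝ))]
      _ = Real.exp 1 := by
          rw [← Real.exp_nat_mul]
          congr 1
          field_simp
      _ ≤ 3 := by linarith [Real.exp_one_lt_d9]
  refine main.trans (mul_le_mul hpow ?_ (by positivity) (by norm_num))
  have : ((i : ℕ) : ℝ) ≤ M := by exact_mod_cast hi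
  have h6 : 0 ≤ (1 + (M : ℝ)) * 6 * T := by positivity
  nlinarith

end Transport

/-! ### The Poincaré inequality for the swapping chain -/

section Poincare

variable {E : Type} [Fintype E] [DecidableEq E] {M : ℕ} {s : E → Bool} {p : Fin (M + 1) → E → ℝ}

/-- The Metropolis acceptance probability of the swap of levels `i` and `i + 1`. -/
noncomputable def swapAcc (p : Fin (M + 1) → E → ℝ) (i : Fin M) (x : Fin (M + 1) → E) : ℝ :=
  min 1 ((p i.castSucc (x i.succ) * p i.succ (x i.castSucc)) /
    (p i.castSucc (x i.castSucc) * p i.succ (x i.succ)))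

/-- The energy of the Metropolis swaps of levels `i` and `i + 1`. -/
noncomputable def swapEnergy (p : Fin (M + 1) → E → ℝ) (i : Fin M)
    (f : (Fin (M + 1) → E) → ℝ) : ℝ :=
  ∑ x, prodW p x * (swapAcc p i x * (f x - f (swapConfigAt x i)) ^ 2)

/-- Swapping block patterns is compared with swapping points: the acceptance probability is at least
`1 / C`, and replacing block means by point values costs the variance within blocks. -/
lemma blockSwapEnergy_le (hp0 : ∀ i a, 0 < p i a) (hq : ∀ i b, 0 < blockW s p i b) {C : ℝ}
    (hC : 1 ≤ C) (i : Fin M)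
    (hratio : ∀ a b, p i.castSucc b * p i.succ a ≤ C * (p i.castSucc a * p i.succ b))
    (f : (Fin (M + 1) → E) → ℝ) :
    blockSwapEnergy (blockW s p) i (blockMean s p f) ≤
      3 * (1 + C) * blockVar s p f + 3 * C * swapEnergy p i f := by
  have hw0 : ∀ x, 0 ≤ prodW p x := prodW_nonneg (fun i a => (hp0 i a).le)
  set g : (Fin (M + 1) → E) → ℝ := fun x => (f x - blockMean s p f (fun j => s (x j))) ^ 2
  have hsw : ∀ x, prodW p (swapConfigAt x i) ≤ C * prodW p x := by
    intro x
    have hpos := mul_pos (hp0 i.castSucc (x i.castSucc)) (hp0 i.succ (x i.succ))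
    refine le_of_mul_le_mul_right ?_ hpos
    rw [prodW_swap]
    nlinarith [mul_le_mul_of_nonneg_left (hratio (x i.castSucc) (x i.succ)) (hw0 x)]
  have hacc : ∀ x, 1 ≤ C * swapAcc p i x := by
    intro x
    have hpos := mul_pos (hp0 i.castSucc (x i.castSucc)) (hp0 i.succ (x i.succ))
    have : 1 / C ≤ swapAcc p i x := by
      refine le_min ?_ ?_
      · rw [div_le_one (by linarith)]; exact hC
      · rw [div_le_div_iff₀ (by linarith) hpos]
        nlinarith [hratio (x i.succ) (x i.castSucc)]
    rw [div_le_iff₀ (by linarith)] at this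
    linarith
  unfold blockSwapEnergy
  rw [sum_blockW_mul hq]
  have h3 : ∑ x, prodW p x * g (swapConfigAt x i) ≤ C * blockVar s p f := by
    have e : ∑ x, prodW p x * g (swapConfigAt x i) = ∑ x, prodW p (swapConfigAt x i) * g x := by
      refine Fintype.sum_equiv (swapConfigAt_involutive i).toPerm _ _ fun x => ?_
      simp only [Function.Involutive.coe_toPerm]
      have hx : swapConfigAt (swapConfigAt x i) i = x := swapConfigAt_involutive i x
      rw [hx]
    rw [e]
    unfold blockVar
    rw [Finset.mul_sum]
    refine Finset.sum_le_sum fun x _ => ?_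
    rw [← mul_assoc]
    exact mul_le_mul_of_nonneg_right (hsw x) (sq_nonneg _)
  calc ∑ x, prodW p x * (blockMean s p f (fun j => s (x j)) -
        blockMean s p f (swapConfigAt (fun j => s (x j)) i)) ^ 2
      ≤ ∑ x, (3 * (prodW p x * g x) + 3 * (prodW p x * g (swapConfigAt x i)) +
        3 * C * (prodW p x * (swapAcc p i x * (f x - f (swapConfigAt x i)) ^ 2))) := by
        refine Finset.sum_le_sum fun x _ => ?_
        rw [← swapConfigAt_comp s x i]
        simp only [g]
        set a := blockMean s p f (fun j => s (x j))
        set b := blockMean s p f (fun j => s (swapConfigAt x i j))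
        set u := f x
        set v := f (swapConfigAt x i)
        have k1 : (a - b) ^ 2 ≤ 3 * (u - a) ^ 2 + 3 * (v - b) ^ 2 + 3 * (u - v) ^ 2 := by
          nlinarith [sq_nonneg ((a - u) - (u - v)), sq_nonneg ((u - v) - (v - b)),
            sq_nonneg ((a - u) - (v - b))]
        have k2 : (u - v) ^ 2 ≤ C * swapAcc p i x * (u - v) ^ 2 := by
          nlinarith [mul_le_mul_of_nonneg_right (hacc x) (sq_nonneg (u - v))]
        have k3 : (a - b) ^ 2 ≤ 3 * (u - a) ^ 2 + 3 * (v - b) ^ 2 +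
            3 * (C * swapAcc p i x * (u - v) ^ 2) := by linarith
        have := mul_le_mul_of_nonneg_left k3 (hw0 x)
        linarith
    _ = 3 * blockVar s p f + 3 * ∑ x, prodW p x * g (swapConfigAt x i) +
        3 * C * swapEnergy p i f := by
        rw [Finset.sum_add_distrib, Finset.sum_add_distrib, ← Finset.mul_sum, ← Finset.mul_sum,
          ← Finset.mul_sum]
        rfl
    _ ≤ _ := by linarith

lemma levelEnergy_nonneg (hp0 : ∀ i a, 0 < p i a) {Q : E → E → ℝ} (hQ : ∀ a b, 0 ≤ Q a b)
    (i : Fin (M + 1)) (f : (Fin (M + 1) → E) → ℝ) : 0 ≤ levelEnergy Q p i f := by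
  refine Finset.sum_nonneg fun x _ => mul_nonneg (prodW_nonneg (fun i a => (hp0 i a).le) x) ?_
  refine Finset.sum_nonneg fun a _ => mul_nonneg (mul_nonneg (hQ _ _) ?_) (sq_nonneg _)
  exact le_min zero_le_one (div_nonneg (hp0 _ _).le (hp0 _ _).le)

lemma swapEnergy_nonneg (hp0 : ∀ i a, 0 < p i a) (i : Fin M) (f : (Fin (M + 1) → E) → ℝ) :
    0 ≤ swapEnergy p i f := by
  refine Finset.sum_nonneg fun x _ => mul_nonneg (prodW_nonneg (fun i a => (hp0 i a).le) x) ?_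
  refine mul_nonneg (le_min zero_le_one (div_nonneg ?_ ?_)) (sq_nonneg _) <;>
  exact mul_nonneg (hp0 _ _).le (hp0 _ _).le

/-- Poincaré inequality for the swapping chain. The hypotheses are: a Poincaré inequality at every
level within each block (`hloc`), one at level `0` across the blocks (`hzero`), comparability of
adjacent levels (`hratio`), and a block `true` that is not light (`hheavy`) and whose odds
increase with the level (`hmono`). -/
lemma swap_poincare (hM : 1 ≤ M) (hp0 : ∀ i a, 0 < p i a) (hp : ∀ i, ∑ a, p i a = 1)
    (hq : ∀ i b, 0 < blockW s p i b) {C K : ℝ} (hC : 1 ≤ C) (hK : 1 ≤ K)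
    {Q : E → E → ℝ} (hQ : ∀ a b, 0 ≤ Q a b)
    (hloc : ∀ i, ∀ h : E → ℝ, ∑ u, p i u * ∑ a, condW s p i (s u) a * (h u - h a) ^ 2 ≤
      K * ∑ u, p i u * ∑ a, (Q u a * min 1 (p i a / p i u)) * (h u - h a) ^ 2)
    (hzero : ∀ h : E → ℝ, ∑ u, p 0 u * ∑ a, p 0 a * (h u - h a) ^ 2 ≤
      K * ∑ u, p 0 u * ∑ a, (Q u a * min 1 (p 0 a / p 0 u)) * (h u - h a) ^ 2)
    (hratio : ∀ i : Fin M, ∀ a b,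
      p i.castSucc b * p i.succ a ≤ C * (p i.castSucc a * p i.succ b))
    (hmono : ∀ i : Fin M, blockW s p i.castSucc true * blockW s p i.succ false ≤
      blockW s p i.castSucc false * blockW s p i.succ true)
    (hheavy : ∀ i, blockW s p i false ≤ 2 * blockW s p i true)
    (f : (Fin (M + 1) → E) → ℝ) :
    ∑ x, prodW p x * (f x - ∑ y, prodW p y * f y) ^ 2 ≤
      300 * (1 + C) * K * ((M : ℝ) + 1) ^ 6 *
        (∑ i, levelEnergy Q p i f + ∑ i, swapEnergy p i f) := by
  set L := ∑ i, levelEnergy Q p i f with hL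
  set W := ∑ i, swapEnergy p i f with hW
  set n : ℝ := (M : ℝ) + 1 with hn
  have hn1 : 1 ≤ n := by rw [hn]; linarith [(Nat.cast_nonneg M : (0 : ℝ) ≤ M)]
  have hMn : (M : ℝ) ≤ n := by rw [hn]; linarith
  have hM0 : (0 : ℝ) ≤ M := Nat.cast_nonneg M
  have hL0 : 0 ≤ L := Finset.sum_nonneg fun i _ => levelEnergy_nonneg hp0 hQ i f
  have hW0 : 0 ≤ W := Finset.sum_nonneg fun i _ => swapEnergy_nonneg hp0 i f
  have hq1 : ∀ i, ∑ b, blockW s p i b = 1 := sum_blockW hp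
  have hw0 : ∀ x, 0 ≤ prodW p x := prodW_nonneg (fun i a => (hp0 i a).le)
  set F := blockMean s p f with hF
  set V := blockVar s p f with hV
  have hV0 : 0 ≤ V := Finset.sum_nonneg fun x _ => mul_nonneg (hw0 x) (sq_nonneg _)
  have bV : V ≤ n * (K * L) := by
    refine (blockVar_le hp0 hq f).trans ?_
    push_cast
    refine mul_le_mul_of_nonneg_left ?_ (by linarith)
    rw [hL, Finset.mul_sum]
    exact Finset.sum_le_sum fun i _ =>
      lift_poincare hp0 hp i Q (fun u a => condW s p i (s u) a) K (hloc i) f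
  have bD0 : flipEnergy (blockW s p) 0 F ≤ 3 * (K * L) := by
    have h3 : 1 ≤ 3 * blockW s p 0 true := by
      have := hq1 0
      rw [Fintype.sum_bool] at this
      linarith [hheavy 0]
    refine (flipEnergy_zero_le hp0 hq 0 h3 f).trans ?_
    refine mul_le_mul_of_nonneg_left ?_ (by norm_num)
    refine (lift_poincare hp0 hp 0 Q (fun _ a => p 0 a) K hzero f).trans ?_
    refine mul_le_mul_of_nonneg_left ?_ (by linarith)
    exact Finset.single_le_sum (fun i _ => levelEnergy_nonneg hp0 hQ i f) (mem_univ 0)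
  have bT : ∑ j, blockSwapEnergy (blockW s p) j F ≤ M * (3 * (1 + C) * V) + 3 * C * W := by
    refine (Finset.sum_le_sum fun j _ => blockSwapEnergy_le hp0 hq hC j (hratio j) f).trans ?_
    rw [Finset.sum_add_distrib, ← Finset.mul_sum univ _ (3 * C), Finset.sum_const,
      Finset.card_univ, Fintype.card_fin, nsmul_eq_mul]
  set T := ∑ j, blockSwapEnergy (blockW s p) j F with hT
  have bF : ∑ σ, prodW (blockW s p) σ * (F σ - ∑ y, prodW p y * f y) ^ 2 ≤
      n * ∑ i : Fin (M + 1), 2 * (3 * (3 * (K * L) + M * ((1 + M) * 6 * T))) := by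
    have hm : ∑ y, prodW p y * f y = ∑ τ, prodW (blockW s p) τ * F τ :=
      (disintegrate hq (fun _ x => f x)).symm
    calc ∑ σ, prodW (blockW s p) σ * (F σ - ∑ y, prodW p y * f y) ^ 2
        ≤ ∑ σ, ∑ τ, prodW (blockW s p) σ * prodW (blockW s p) τ * (F σ - F τ) ^ 2 := by
          refine Finset.sum_le_sum fun σ _ => ?_
          simp only [mul_assoc]
          rw [← Finset.mul_sum]
          refine mul_le_mul_of_nonneg_left ?_ (prodW_nonneg (blockW_nonneg hp0) σ)
          have : F σ - ∑ y, prodW p y * f y =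
              ∑ τ, prodW (blockW s p) τ * (F σ - F τ) := by
            simp only [mul_sub]
            rw [Finset.sum_sub_distrib, ← Finset.sum_mul, sum_prodW hq1, one_mul, hm]
          rw [this]
          exact jensen_sq (prodW_nonneg (blockW_nonneg hp0)) (sum_prodW hq1) _
      _ ≤ _ := tensorize (blockW_nonneg hp0) hq1 F
      _ ≤ _ := by
          push_cast
          refine mul_le_mul_of_nonneg_left (Finset.sum_le_sum fun i _ => ?_) (by linarith)
          refine (coord_var_le (blockW_nonneg hp0) hq1 i F).trans ?_
          have := flipEnergy_le hM hq hmono hheavy F i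
          linarith
  have bsum : ∑ x, prodW p x * (f x - ∑ y, prodW p y * f y) ^ 2 ≤
      2 * V + 2 * ∑ σ, prodW (blockW s p) σ * (F σ - ∑ y, prodW p y * f y) ^ 2 := by
    rw [sum_blockW_mul hq, hV, blockVar, Finset.mul_sum, Finset.mul_sum,
      ← Finset.sum_add_distrib]
    refine Finset.sum_le_sum fun x _ => ?_
    set m := ∑ y, prodW p y * f y
    have : (f x - m) ^ 2 ≤ 2 * (f x - F (fun i => s (x i))) ^ 2 +
        2 * (F (fun i => s (x i)) - m) ^ 2 := by
      nlinarith [sq_nonneg ((f x - F (fun i => s (x i))) - (F (fun i => s (x i)) - m))]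
    nlinarith [mul_le_mul_of_nonneg_left this (hw0 x)]
  rw [Finset.sum_const, Finset.card_univ, Fintype.card_fin, nsmul_eq_mul] at bF
  push_cast at bF
  rw [← hn] at bF
  have h1M : (1 + (M : ℝ)) = n := by rw [hn]; ring
  rw [h1M] at bF
  have bT2 : T ≤ 3 * (1 + C) * K * n ^ 2 * (L + W) := by
    have e1 : (M : ℝ) * (3 * (1 + C) * V) ≤ n * (3 * (1 + C) * (n * (K * L))) :=
      mul_le_mul hMn (mul_le_mul_of_nonneg_left bV (by linarith)) (by positivity) (by linarith)
    have e2 : 3 * C * W ≤ 3 * (1 + C) * K * n ^ 2 * W := by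
      refine mul_le_mul_of_nonneg_right ?_ hW0
      have : 1 ≤ K * n ^ 2 := one_le_mul_of_one_le_of_one_le hK (one_le_pow₀ hn1)
      nlinarith
    linarith
  set Y := (1 + C) * K * (L + W) with hY
  have hY0 : 0 ≤ Y := by positivity
  have hKL : K * L ≤ Y := by
    have : K * L ≤ K * (L + W) := mul_le_mul_of_nonneg_left (by linarith) (by linarith)
    have h2 : 0 ≤ K * (L + W) := by positivity
    rw [hY]
    nlinarith
  have hT0 : 0 ≤ T := Finset.sum_nonneg fun j _ => blockSwapEnergy_nonneg hq j F
  have bT3 : T ≤ 3 * n ^ 2 * Y := by rw [hY]; linarith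
  have g1 : (M : ℝ) * (n * 6 * T) ≤ n * (n * 6 * (3 * n ^ 2 * Y)) :=
    mul_le_mul hMn (mul_le_mul_of_nonneg_left bT3 (by positivity)) (by positivity) (by linarith)
  have g2 : n * (n * (2 * (3 * (3 * (K * L) + M * (n * 6 * T))))) ≤
      n * (n * (2 * (3 * (3 * Y + n * (n * 6 * (3 * n ^ 2 * Y)))))) := by
    gcongr
  have g3 : n * (K * L) ≤ n * Y := mul_le_mul_of_nonneg_left hKL (by linarith)
  have p1 : n * Y ≤ n ^ 6 * Y :=
    mul_le_mul_of_nonneg_right (by simpa using pow_le_pow_right₀ hn1 (by norm_num : 1 ≤ 6)) hY0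
  have p2 : n ^ 2 * Y ≤ n ^ 6 * Y :=
    mul_le_mul_of_nonneg_right (pow_le_pow_right₀ hn1 (by norm_num)) hY0
  have : 300 * (1 + C) * K * n ^ 6 * (L + W) = 300 * (n ^ 6 * Y) := by rw [hY]; ring
  rw [this]
  linarith

end Poincare

/-! ### The transition matrix of the swapping chain -/

section Chain

variable {E : Type} [Fintype E] [DecidableEq E] {M : ℕ} {p : Fin (M + 1) → E → ℝ} {Q : E → E → ℝ}

/-- The contribution of the moves at level `i` to the off-diagonal rates. -/
noncomputable def levelRate (Q : E → E → ℝ) (p : Fin (M + 1) → E → ℝ) (i : Fin (M + 1))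
    (x y : Fin (M + 1) → E) : ℝ :=
  if y = Function.update x i (y i) ∧ y i ≠ x i then
    (1 / (2 * ((M : ℝ) + 1))) * Q (x i) (y i) * min 1 (p i (y i) / p i (x i))
  else 0

/-- The contribution of the swaps of levels `i` and `i + 1` to the off-diagonal rates. -/
noncomputable def swapRate (p : Fin (M + 1) → E → ℝ) (i : Fin M)
    (x y : Fin (M + 1) → E) : ℝ :=
  if y = swapConfigAt x i then (1 / (2 * (M : ℝ))) * swapAcc p i x else 0

lemma swapOff_eq (x y : Fin (M + 1) → E) :
    swapOff Q p x y = ∑ i, levelRate Q p i x y + ∑ i, swapRate p i x y := rfl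

lemma levelRate_nonneg (hp0 : ∀ i a, 0 < p i a) (hQ : ∀ a b, 0 ≤ Q a b) (i : Fin (M + 1))
    (x y : Fin (M + 1) → E) : 0 ≤ levelRate Q p i x y := by
  unfold levelRate
  split_ifs
  · refine mul_nonneg (mul_nonneg (by positivity) (hQ _ _)) ?_
    exact le_min zero_le_one (div_nonneg (hp0 _ _).le (hp0 _ _).le)
  · exact le_rfl

lemma swapAcc_nonneg (hp0 : ∀ i a, 0 < p i a) (i : Fin M) (x : Fin (M + 1) → E) :
    0 ≤ swapAcc p i x :=
  le_min zero_le_one (div_nonneg (mul_nonneg (hp0 _ _).le (hp0 _ _).le)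
    (mul_nonneg (hp0 _ _).le (hp0 _ _).le))

lemma swapRate_nonneg (hp0 : ∀ i a, 0 < p i a) (i : Fin M)
    (x y : Fin (M + 1) → E) : 0 ≤ swapRate p i x y := by
  unfold swapRate
  split_ifs
  · exact mul_nonneg (by positivity) (swapAcc_nonneg hp0 i x)
  · exact le_rfl

lemma sum_levelRate (hQd : ∀ a, Q a a = 0) (i : Fin (M + 1)) (x : Fin (M + 1) → E)
    (φ : (Fin (M + 1) → E) → ℝ) :
    ∑ y, levelRate Q p i x y * φ y = 1 / (2 * ((M : ℝ) + 1)) *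
      ∑ a, (Q (x i) a * min 1 (p i a / p i (x i))) * φ (Function.update x i a) := by
  have h : ∀ y, levelRate Q p i x y * φ y = ∑ a, if y = Function.update x i a then
      1 / (2 * ((M : ℝ) + 1)) * ((Q (x i) a * min 1 (p i a / p i (x i))) *
        φ (Function.update x i a)) else 0 := by
    intro y
    rw [Finset.sum_eq_single (y i)]
    · unfold levelRate
      by_cases h1 : y = Function.update x i (y i)
      · by_cases h2 : y i = x i
        · simp [h2, hQd]
        · rw [if_pos ⟨h1, h2⟩, if_pos h1, ← h1]
          ring
      · rw [if_neg (fun h => h1 h.1), if_neg h1, zero_mul]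
    · intro a _ ha
      refine if_neg fun h => ha ?_
      rw [h, Function.update_self]
    · simp
  simp only [h]
  rw [Finset.sum_comm, Finset.mul_sum]
  simp

lemma sum_swapRate (i : Fin M) (x : Fin (M + 1) → E) (φ : (Fin (M + 1) → E) → ℝ) :
    ∑ y, swapRate p i x y * φ y =
      1 / (2 * (M : ℝ)) * (swapAcc p i x * φ (swapConfigAt x i)) := by
  simp only [swapRate, ite_mul, zero_mul]
  simp [mul_assoc]

lemma sum_swapOff (hQd : ∀ a, Q a a = 0) (x : Fin (M + 1) → E) (φ : (Fin (M + 1) → E) → ℝ) :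
    ∑ y, swapOff Q p x y * φ y =
      1 / (2 * ((M : ℝ) + 1)) * ∑ i, ∑ a, (Q (x i) a * min 1 (p i a / p i (x i))) *
        φ (Function.update x i a) +
      1 / (2 * (M : ℝ)) * ∑ i, swapAcc p i x * φ (swapConfigAt x i) := by
  simp only [swapOff_eq, add_mul, Finset.sum_mul]
  rw [Finset.sum_add_distrib]
  congr 1
  · rw [Finset.sum_comm, Finset.mul_sum]
    exact Finset.sum_congr rfl fun i _ => sum_levelRate hQd i x φ
  · rw [Finset.sum_comm, Finset.mul_sum]
    exact Finset.sum_congr rfl fun i _ => sum_swapRate i x φ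

lemma swapChain_row (x : Fin (M + 1) → E) : ∑ y, swapChain Q p x y = 1 := by
  rw [← Finset.add_sum_erase univ _ (mem_univ x)]
  have : ∑ y ∈ univ.erase x, swapChain Q p x y = ∑ y ∈ univ.erase x, swapOff Q p x y := by
    refine Finset.sum_congr rfl fun y hy => ?_
    simp [swapChain, Finset.ne_of_mem_erase hy]
  rw [this]
  simp [swapChain]

lemma prodW_mul_levelAcc (hp0 : ∀ i a, 0 < p i a) (x : Fin (M + 1) → E) (i : Fin (M + 1))
    (a : E) : prodW p x * min 1 (p i a / p i (x i)) =
      min (prodW p x) (prodW p (Function.update x i a)) := by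
  have h := prodW_update_mul p x i a
  rw [mul_min_of_nonneg _ _ (prodW_nonneg (fun i a => (hp0 i a).le) x), mul_one, ← mul_div_assoc,
    ← h, mul_div_cancel_right₀ _ (hp0 i (x i)).ne']

lemma prodW_mul_swapAcc (hp0 : ∀ i a, 0 < p i a) (x : Fin (M + 1) → E) (i : Fin M) :
    prodW p x * swapAcc p i x = min (prodW p x) (prodW p (swapConfigAt x i)) := by
  have h := prodW_swap p x i
  unfold swapAcc
  rw [mul_min_of_nonneg _ _ (prodW_nonneg (fun i a => (hp0 i a).le) x), mul_one, ← mul_div_assoc,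
    ← h, mul_div_cancel_right₀ _ (mul_pos (hp0 _ _) (hp0 _ _)).ne']

lemma levelRate_rev (hp0 : ∀ i a, 0 < p i a) (hQs : ∀ a b, Q a b = Q b a) (i : Fin (M + 1))
    (x y : Fin (M + 1) → E) :
    prodW p x * levelRate Q p i x y = prodW p y * levelRate Q p i y x := by
  unfold levelRate
  by_cases h : y = Function.update x i (y i) ∧ y i ≠ x i
  · have h1 : x = Function.update y i (x i) := by
      conv_rhs => rw [h.1]
      simp
    rw [if_pos h, if_pos ⟨h1, h.2.symm⟩]
    have e1 := prodW_mul_levelAcc hp0 x i (y i)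
    have e2 := prodW_mul_levelAcc hp0 y i (x i)
    rw [← h.1] at e1
    rw [← h1] at e2
    rw [hQs (y i) (x i)]
    rw [min_comm (prodW p y), ← e1] at e2
    linear_combination (-(1 / (2 * ((M : ℝ) + 1))) * Q (x i) (y i)) * e2
  · have h' : ¬ (x = Function.update y i (x i) ∧ x i ≠ y i) := by
      rintro ⟨h1, h2⟩
      refine h ⟨?_, h2.symm⟩
      conv_rhs => rw [h1]
      simp
    rw [if_neg h, if_neg h', mul_zero, mul_zero]

lemma swapRate_rev (hp0 : ∀ i a, 0 < p i a) (i : Fin M) (x y : Fin (M + 1) → E) :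
    prodW p x * swapRate p i x y = prodW p y * swapRate p i y x := by
  unfold swapRate
  by_cases h : y = swapConfigAt x i
  · have h1 : x = swapConfigAt y i := by
      rw [h]
      exact (swapConfigAt_involutive i x).symm
    rw [if_pos h, if_pos h1]
    have e1 := prodW_mul_swapAcc hp0 x i
    have e2 := prodW_mul_swapAcc hp0 y i
    rw [← h] at e1
    rw [← h1, min_comm (prodW p y), ← e1] at e2
    linear_combination (-(1 / (2 * (M : ℝ)))) * e2
  · have h' : ¬ x = swapConfigAt y i := by
      intro h1
      refine h ?_
      rw [h1]
      exact (swapConfigAt_involutive i y).symm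
    rw [if_neg h, if_neg h', mul_zero, mul_zero]

lemma swapChain_rev (hp0 : ∀ i a, 0 < p i a) (hQs : ∀ a b, Q a b = Q b a)
    (x y : Fin (M + 1) → E) :
    prodW p x * swapChain Q p x y = prodW p y * swapChain Q p y x := by
  by_cases h : y = x
  · rw [h]
  · simp only [swapChain, Matrix.of_apply, if_neg h, if_neg (Ne.symm h), swapOff_eq, mul_add,
      Finset.mul_sum, levelRate_rev hp0 hQs _ x y, swapRate_rev hp0 _ x y]

lemma swapChain_dirichlet (hQd : ∀ a, Q a a = 0) (f : (Fin (M + 1) → E) → ℝ) :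
    ∑ x, prodW p x * ∑ y, swapChain Q p x y * (f x - f y) ^ 2 =
      1 / (2 * ((M : ℝ) + 1)) * ∑ i, levelEnergy Q p i f +
      1 / (2 * (M : ℝ)) * ∑ i, swapEnergy p i f := by
  have h : ∀ x, ∑ y, swapChain Q p x y * (f x - f y) ^ 2 =
      ∑ y, swapOff Q p x y * (f x - f y) ^ 2 := by
    intro x
    refine Finset.sum_congr rfl fun y _ => ?_
    by_cases hy : y = x
    · simp [hy]
    · simp [swapChain, hy]
  simp only [h, sum_swapOff hQd, levelEnergy, swapEnergy]
  rw [Finset.sum_comm (s := (univ : Finset (Fin (M + 1)))),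
    Finset.sum_comm (s := (univ : Finset (Fin M))), Finset.mul_sum, Finset.mul_sum,
    ← Finset.sum_add_distrib]
  refine Finset.sum_congr rfl fun x _ => ?_
  rw [← Finset.mul_sum, ← Finset.mul_sum]
  ring

lemma swapChain_diag (hM : 1 ≤ M) (hp0 : ∀ i a, 0 < p i a) (hQ : ∀ a b, 0 ≤ Q a b)
    (hQd : ∀ a, Q a a = 0) (hQ1 : ∀ a, ∑ b, Q a b ≤ 1) (x : Fin (M + 1) → E) :
    1 / (2 * ((M : ℝ) + 1)) * (1 - ∑ b, Q (x 0) b) ≤ swapChain Q p x x := by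
  have hM' : (0 : ℝ) < M := by exact_mod_cast hM
  have h1 : ∑ z ∈ univ.erase x, swapOff Q p x z ≤ ∑ z, swapOff Q p x z := by
    refine Finset.sum_le_sum_of_subset_of_nonneg (Finset.erase_subset _ _) fun z _ _ => ?_
    rw [swapOff_eq]
    exact add_nonneg (Finset.sum_nonneg fun i _ => levelRate_nonneg hp0 hQ i x z)
      (Finset.sum_nonneg fun i _ => swapRate_nonneg hp0 i x z)
  have h2 := sum_swapOff (p := p) hQd x (fun _ => 1)
  simp only [mul_one] at h2
  have h3 : ∑ i, ∑ a, Q (x i) a * min 1 (p i a / p i (x i)) ≤ ∑ b, Q (x 0) b + M := by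
    have : ∀ i, ∑ a, Q (x i) a * min 1 (p i a / p i (x i)) ≤ ∑ a, Q (x i) a := fun i =>
      Finset.sum_le_sum fun a _ => mul_le_of_le_one_right (hQ _ _) (min_le_left _ _)
    rw [Fin.sum_univ_succ]
    refine add_le_add (this 0) ?_
    refine (Finset.sum_le_sum fun i _ => (this _).trans (hQ1 _)).trans ?_
    simp
  have h4 : ∑ i, swapAcc p i x ≤ M := by
    refine (Finset.sum_le_sum fun i _ => (min_le_left _ _ : swapAcc p i x ≤ 1)).trans ?_
    simp
  have h5 := mul_le_mul_of_nonneg_left h3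
    (by positivity : (0 : ℝ) ≤ 1 / (2 * ((M : ℝ) + 1)))
  have h6 := mul_le_mul_of_nonneg_left h4 (by positivity : (0 : ℝ) ≤ 1 / (2 * (M : ℝ)))
  have h7 : swapChain Q p x x = 1 - ∑ z ∈ univ.erase x, swapOff Q p x z := by
    simp [swapChain]
  have h8 : 1 / (2 * (M : ℝ)) * M = 1 / 2 := by field_simp
  have h9 : 1 / (2 * ((M : ℝ) + 1)) * ((M : ℝ) + 1) = 1 / 2 := by field_simp
  rw [h7]
  linarith

/-- The smallest eigenvalue of the chain stays away from `-1`: the walk at level `0` alone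
already provides this, because it holds at the endpoints of the interval. -/
lemma swapChain_sum_form (hM : 1 ≤ M) (hp0 : ∀ i a, 0 < p i a) (hp : ∀ i, ∑ a, p i a = 1)
    (hQ : ∀ a b, 0 ≤ Q a b) (hQd : ∀ a, Q a a = 0) (hQ1 : ∀ a, ∑ b, Q a b ≤ 1)
    {K : ℝ} (hK : 0 ≤ K)
    (hB : ∀ h : E → ℝ, ∑ u, p 0 u * h u ^ 2 ≤
      K * (∑ u, p 0 u * ∑ a, (Q u a * min 1 (p 0 a / p 0 u)) * (h u + h a) ^ 2 +
        ∑ u, p 0 u * ((1 - ∑ b, Q u b) * h u ^ 2)))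
    (f : (Fin (M + 1) → E) → ℝ) :
    ∑ x, prodW p x * f x ^ 2 ≤ K * (2 * ((M : ℝ) + 1)) *
      ∑ x, prodW p x * ∑ y, swapChain Q p x y * (f x + f y) ^ 2 := by
  have hw0 : ∀ x, 0 ≤ prodW p x := prodW_nonneg (fun i a => (hp0 i a).le)
  have low : ∀ x, 1 / (2 * ((M : ℝ) + 1)) *
      (∑ a, (Q (x 0) a * min 1 (p 0 a / p 0 (x 0))) * (f x + f (Function.update x 0 a)) ^ 2 +
        (1 - ∑ b, Q (x 0) b) * f x ^ 2) ≤ ∑ y, swapChain Q p x y * (f x + f y) ^ 2 := by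
    intro x
    rw [mul_add, ← sum_levelRate (p := p) hQd 0 x (fun y => (f x + f y) ^ 2)]
    rw [← Finset.add_sum_erase univ _ (mem_univ x),
      ← Finset.add_sum_erase univ (fun y => swapChain Q p x y * (f x + f y) ^ 2) (mem_univ x)]
    have e0 : levelRate Q p 0 x x = 0 := by simp [levelRate]
    have e1 : ∑ y ∈ univ.erase x, levelRate Q p 0 x y * (f x + f y) ^ 2 ≤
        ∑ y ∈ univ.erase x, swapChain Q p x y * (f x + f y) ^ 2 := by
      refine Finset.sum_le_sum fun y hy => mul_le_mul_of_nonneg_right ?_ (sq_nonneg _)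
      simp only [swapChain, Matrix.of_apply, if_neg (Finset.ne_of_mem_erase hy), swapOff_eq]
      have h1 : levelRate Q p 0 x y ≤ ∑ i, levelRate Q p i x y :=
        Finset.single_le_sum (fun i _ => levelRate_nonneg hp0 hQ i x y) (mem_univ 0)
      have h2 : 0 ≤ ∑ i, swapRate p i x y :=
        Finset.sum_nonneg fun i _ => swapRate_nonneg hp0 i x y
      linarith
    have e2 := swapChain_diag hM hp0 hQ hQd hQ1 x
    have e3 : 0 ≤ 1 / (2 * ((M : ℝ) + 1)) * (1 - ∑ b, Q (x 0) b) :=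
      mul_nonneg (by positivity) (sub_nonneg.2 (hQ1 _))
    have e4 := mul_le_mul_of_nonneg_right e2 (sq_nonneg (f x))
    have e5 : 0 ≤ swapChain Q p x x * f x ^ 2 :=
      mul_nonneg (e3.trans e2) (sq_nonneg _)
    simp only [e0, zero_mul, zero_add]
    nlinarith
  have hsum : ∑ x, prodW p x * f x ^ 2 ≤ K * ∑ x, prodW p x *
      (∑ a, (Q (x 0) a * min 1 (p 0 a / p 0 (x 0))) * (f x + f (Function.update x 0 a)) ^ 2 +
        (1 - ∑ b, Q (x 0) b) * f x ^ 2) := by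
    rw [resample (hp 0), resample (hp 0) (fun x : Fin (M + 1) → E =>
      (∑ a, (Q (x 0) a * min 1 (p 0 a / p 0 (x 0))) * (f x + f (Function.update x 0 a)) ^ 2 +
        (1 - ∑ b, Q (x 0) b) * f x ^ 2)), Finset.mul_sum]
    refine Finset.sum_le_sum fun x _ => ?_
    rw [mul_left_comm]
    refine mul_le_mul_of_nonneg_left ?_ (hw0 x)
    refine (hB (fun u => f (Function.update x 0 u))).trans (le_of_eq ?_)
    simp only [Function.update_self, Function.update_idem, mul_add]
    rw [Finset.sum_add_distrib]
    ring
  refine hsum.trans ?_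
  rw [mul_assoc]
  refine mul_le_mul_of_nonneg_left ?_ hK
  rw [Finset.mul_sum]
  refine Finset.sum_le_sum fun x _ => ?_
  rw [mul_left_comm]
  refine mul_le_mul_of_nonneg_left ?_ (hw0 x)
  have hpos : (0 : ℝ) < 2 * ((M : ℝ) + 1) := by positivity
  have := mul_le_mul_of_nonneg_left (low x) hpos.le
  rwa [← mul_assoc, mul_one_div_cancel hpos.ne', one_mul] at this

end Chain

/-! ### From a two-sided spectral gap to the mixing time -/

section Mixing

variable {S : Type} [Fintype S] [DecidableEq S] {P : Matrix S S ℝ} {w : S → ℝ}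

lemma rev_sum (hrow : ∀ x, ∑ y, P x y = 1) (hrev : ∀ x y, w x * P x y = w y * P y x)
    (g : S → ℝ) : ∑ x, w x * ∑ y, P x y * g y = ∑ x, w x * g x := by
  simp only [Finset.mul_sum]
  rw [Finset.sum_comm]
  refine Finset.sum_congr rfl fun y _ => ?_
  have h : ∑ x, w x * (P x y * g y) = ∑ x, w y * g y * P y x :=
    Finset.sum_congr rfl fun x _ => by linear_combination g y * hrev x y
  rw [h, ← Finset.mul_sum, hrow, mul_one]

lemma rev_adjoint (hrev : ∀ x y, w x * P x y = w y * P y x) (f g : S → ℝ) :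
    ∑ x, w x * (f x * P.mulVec g x) = ∑ x, w x * (P.mulVec f x * g x) := by
  simp only [Matrix.mulVec, dotProduct, Finset.mul_sum, Finset.sum_mul]
  rw [Finset.sum_comm]
  refine Finset.sum_congr rfl fun y _ => Finset.sum_congr rfl fun x _ => ?_
  linear_combination (f x * g y) * hrev x y

lemma form_eq (hrow : ∀ x, ∑ y, P x y = 1) (hrev : ∀ x y, w x * P x y = w y * P y x)
    (c : ℝ) (f : S → ℝ) :
    ∑ x, w x * ∑ y, P x y * (f x + c * f y) ^ 2 =
      (1 + c ^ 2) * ∑ x, w x * f x ^ 2 + 2 * c * ∑ x, w x * (f x * P.mulVec f x) := by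
  have h := rev_sum hrow hrev (fun y => f y ^ 2)
  have e : ∀ x, ∑ y, P x y * (f x + c * f y) ^ 2 =
      f x ^ 2 + 2 * c * (f x * P.mulVec f x) + c ^ 2 * ∑ y, P x y * f y ^ 2 := by
    intro x
    have h1 : f x ^ 2 = ∑ y, P x y * f x ^ 2 := by rw [← Finset.sum_mul, hrow, one_mul]
    rw [h1]
    simp only [Matrix.mulVec, dotProduct, Finset.mul_sum]
    rw [← Finset.sum_add_distrib, ← Finset.sum_add_distrib]
    refine Finset.sum_congr rfl fun y _ => ?_
    ring
  simp only [e, mul_add, Finset.sum_add_distrib]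
  have h2 : ∑ x, w x * (2 * c * (f x * P.mulVec f x)) =
      2 * c * ∑ x, w x * (f x * P.mulVec f x) := by
    rw [Finset.mul_sum]; exact Finset.sum_congr rfl fun x _ => by ring
  have h3 : ∑ x, w x * (c ^ 2 * ∑ y, P x y * f y ^ 2) = c ^ 2 * ∑ x, w x * f x ^ 2 := by
    rw [← h, Finset.mul_sum]; exact Finset.sum_congr rfl fun x _ => by ring
  rw [h2, h3]
  ring

/-- If `A = 1 - P` and `B = 1 + P` are both bounded below by `1 / (2K)`, then so is
`A B = 1 - P ^ 2`: since `A + B = 2`, one has `2 A B = A B A + B A B`. -/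
lemma contraction (hrow : ∀ x, ∑ y, P x y = 1)
    (hrev : ∀ x y, w x * P x y = w y * P y x) (hw0 : ∀ x, 0 < w x) {K : ℝ} (hK : 0 < K)
    (hA : ∀ f : S → ℝ, ∑ x, w x * f x = 0 →
      ∑ x, w x * f x ^ 2 ≤ K * ∑ x, w x * ∑ y, P x y * (f x - f y) ^ 2)
    (hB : ∀ f : S → ℝ, ∑ x, w x * f x ^ 2 ≤ K * ∑ x, w x * ∑ y, P x y * (f x + f y) ^ 2)
    (f : S → ℝ) (hf : ∑ x, w x * f x = 0) :
    ∑ x, w x * P.mulVec f x ^ 2 ≤ (1 - 1 / (2 * K)) * ∑ x, w x * f x ^ 2 := by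
  set g := P.mulVec f with hg
  set h := P.mulVec g with hh
  have hg0 : ∑ x, w x * g x = 0 := by
    rw [← hf]
    exact rev_sum hrow hrev f
  have hs0 : ∑ x, w x * (f x + g x) = 0 := by
    simp only [mul_add, Finset.sum_add_distrib, hf, hg0, add_zero]
  have a1 := hA (fun x => f x + g x) hs0
  have b1 := hB (fun x => f x - g x)
  have fa := form_eq hrow hrev (-1) (fun x => f x + g x)
  have fb := form_eq hrow hrev 1 (fun x => f x - g x)
  simp only [neg_mul, one_mul, ← sub_eq_add_neg] at fa fb
  rw [fa] at a1
  rw [fb] at b1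
  have mp : P.mulVec (fun x => f x + g x) = fun x => g x + h x := by
    have : (fun x => f x + g x) = f + g := rfl
    rw [this, Matrix.mulVec_add]; rfl
  have mm : P.mulVec (fun x => f x - g x) = fun x => g x - h x := by
    have : (fun x => f x - g x) = f - g := rfl
    rw [this, Matrix.mulVec_sub]; rfl
  rw [mp] at a1
  rw [mm] at b1
  have adj : ∑ x, w x * (f x * h x) = ∑ x, w x * (g x * g x) := rev_adjoint hrev f g
  set a := ∑ x, w x * f x ^ 2
  set b := ∑ x, w x * (f x * g x) with hb
  set c := ∑ x, w x * g x ^ 2 with hc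
  set d := ∑ x, w x * (g x * h x) with hd
  have adj' : ∑ x, w x * (f x * h x) = c := by
    rw [adj, hc]; exact Finset.sum_congr rfl fun x _ => by ring
  have s1 : ∑ x, w x * (f x + g x) ^ 2 = a + 2 * b + c := by
    simp only [a, b, c, Finset.mul_sum, ← Finset.sum_add_distrib]
    exact Finset.sum_congr rfl fun x _ => by ring
  have s2 : ∑ x, w x * (f x - g x) ^ 2 = a - 2 * b + c := by
    simp only [a, b, c, Finset.mul_sum, ← Finset.sum_add_distrib, ← Finset.sum_sub_distrib]
    exact Finset.sum_congr rfl fun x _ => by ring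
  have s3 : ∑ x, w x * ((f x + g x) * (g x + h x)) = b + 2 * c + d := by
    have : b + 2 * c + d = b + c + ∑ x, w x * (f x * h x) + d := by rw [adj']; ring
    rw [this]
    simp only [b, c, d, ← Finset.sum_add_distrib]
    exact Finset.sum_congr rfl fun x _ => by ring
  have s4 : ∑ x, w x * ((f x - g x) * (g x - h x)) = b - 2 * c + d := by
    have : b - 2 * c + d = b - c - ∑ x, w x * (f x * h x) + d := by rw [adj']; ring
    rw [this]
    simp only [b, c, d, ← Finset.sum_add_distrib, ← Finset.sum_sub_distrib]
    exact Finset.sum_congr rfl fun x _ => by ring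
  rw [s1, s3] at a1
  rw [s2, s4] at b1
  have hc0 : 0 ≤ c := Finset.sum_nonneg fun x _ => mul_nonneg (hw0 x).le (sq_nonneg _)
  have key : a ≤ 2 * K * (a - c) := by nlinarith
  have : a / (2 * K) ≤ a - c := by
    rw [div_le_iff₀ (by linarith)]; linarith
  have e : (1 - 1 / (2 * K)) * a = a - a / (2 * K) := by ring
  rw [e]
  linarith

/-- The `L²` contraction bounds the `L²` distance to equilibrium of the density started at a point,
whose square is initially at most `exp Λ`; total variation follows by Cauchy–Schwarz. -/
lemma mixingTime_le (hrow : ∀ x, ∑ y, P x y = 1)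
    (hrev : ∀ x y, w x * P x y = w y * P y x) (hw1 : ∑ x, w x = 1)
    {K Λ : ℝ} (hK : 1 ≤ K) (hΛ : ∀ x, Real.exp (-Λ) ≤ w x)
    (hA : ∀ f : S → ℝ, ∑ x, w x * f x = 0 →
      ∑ x, w x * f x ^ 2 ≤ K * ∑ x, w x * ∑ y, P x y * (f x - f y) ^ 2)
    (hB : ∀ f : S → ℝ, ∑ x, w x * f x ^ 2 ≤ K * ∑ x, w x * ∑ y, P x y * (f x + f y) ^ 2)
    {ε : ℝ} (hε : 0 < ε) :
    mixingTime P w ε ≤ ⌈2 * K * (Λ + 2 * Real.log (1 / ε))⌉₊ := by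
  refine Nat.sInf_le ?_
  intro t ht x
  have hw0 : ∀ x, 0 < w x := fun x => (Real.exp_pos _).trans_le (hΛ x)
  have ht' : 2 * K * (Λ + 2 * Real.log (1 / ε)) ≤ t := Nat.ceil_le.mp ht
  have hrevt : ∀ (t : ℕ) x y, w x * (P ^ t) x y = w y * (P ^ t) y x := by
    intro t
    induction t with
    | zero =>
      intro x y
      by_cases hxy : x = y
      · rw [hxy]
      · simp [hxy, Ne.symm hxy]
    | succ t ih =>
      intro x y
      rw [pow_succ, Matrix.mul_apply]
      rw [← pow_succ, pow_succ', Matrix.mul_apply, Finset.mul_sum, Finset.mul_sum]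
      refine Finset.sum_congr rfl fun z _ => ?_
      linear_combination P z y * ih x z + (P ^ t) z x * hrev z y
  have hrowt : ∀ t : ℕ, ∀ x, ∑ y, (P ^ t) x y = 1 := by
    intro t
    induction t with
    | zero => intro x; simp [Matrix.one_apply]
    | succ t ih =>
      intro x
      simp only [pow_succ, Matrix.mul_apply]
      rw [Finset.sum_comm]
      simp only [← Finset.mul_sum, hrow, mul_one, ih]
  set f : S → ℝ := fun y => (if y = x then 1 / w x else 0) - 1 with hf
  have hfm : ∑ y, w y * f y = 0 := by
    simp [hf, mul_sub, hw1, (hw0 x).ne']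
  have hfn : ∑ y, w y * f y ^ 2 ≤ 1 / w x := by
    have : ∀ y, w y * f y ^ 2 =
        (if y = x then w y * (1 / w x) ^ 2 - 2 * w y * (1 / w x) else 0) + w y := by
      intro y
      simp only [hf]
      split_ifs <;> ring
    simp only [this, Finset.sum_add_distrib, hw1]
    simp only [Finset.sum_ite_eq', Finset.mem_univ, if_true]
    have hx := (hw0 x).ne'
    have : w x * (1 / w x) ^ 2 - 2 * w x * (1 / w x) + 1 = 1 / w x - 1 := by
      field_simp
      ring
    linarith
  have hδ : 0 ≤ 1 - 1 / (2 * K) := by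
    have : 1 / (2 * K) ≤ 1 := by rw [div_le_one (by linarith)]; linarith
    linarith
  have hdecay : ∀ t : ℕ, ∑ y, w y * (P ^ t).mulVec f y = 0 ∧
      ∑ y, w y * (P ^ t).mulVec f y ^ 2 ≤ (1 - 1 / (2 * K)) ^ t * ∑ y, w y * f y ^ 2 := by
    intro t
    induction t with
    | zero => simp [hfm]
    | succ t ih =>
      have e : (P ^ (t + 1)).mulVec f = P.mulVec ((P ^ t).mulVec f) := by
        rw [Matrix.mulVec_mulVec, ← pow_succ']
      rw [e]
      refine ⟨?_, ?_⟩
      · rw [← ih.1]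
        exact rev_sum hrow hrev _
      · refine (contraction hrow hrev hw0 (by linarith) hA hB _ ih.1).trans ?_
        rw [pow_succ', mul_assoc]
        exact mul_le_mul_of_nonneg_left ih.2 hδ
  have hval : ∀ y, w y * (P ^ t).mulVec f y = (P ^ t) x y - w y := by
    intro y
    have : (P ^ t).mulVec f y = (P ^ t) y x * (1 / w x) - 1 := by
      simp only [hf, Matrix.mulVec, dotProduct, mul_sub, Finset.sum_sub_distrib, mul_one, hrowt]
      simp
    rw [this, mul_sub, mul_one, ← mul_assoc, ← hrevt t x y]
    have := (hw0 x).ne'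
    field_simp
  have habs : (∑ y, |(P ^ t) x y - w y|) ^ 2 ≤ (1 - 1 / (2 * K)) ^ t * (1 / w x) := by
    have e : ∑ y, |(P ^ t) x y - w y| = ∑ y, w y * |(P ^ t).mulVec f y| := by
      refine Finset.sum_congr rfl fun y _ => ?_
      rw [← hval, abs_mul, abs_of_pos (hw0 y)]
    rw [e]
    refine (jensen_sq (fun y => (hw0 y).le) hw1 _).trans ?_
    simp only [sq_abs]
    exact (hdecay t).2.trans (mul_le_mul_of_nonneg_left hfn (pow_nonneg hδ t))
  have hexp : (1 - 1 / (2 * K)) ^ t * (1 / w x) ≤ ε ^ 2 := by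
    have h1 : (1 - 1 / (2 * K)) ^ t ≤ Real.exp (-(t / (2 * K))) := by
      calc (1 - 1 / (2 * K)) ^ t ≤ (Real.exp (-(1 / (2 * K)))) ^ t := by
            refine pow_le_pow_left₀ hδ ?_ t
            linarith [Real.add_one_le_exp (-(1 / (2 * K)))]
        _ = _ := by
            rw [← Real.exp_nat_mul]
            congr 1
            ring
    have h2 : 1 / w x ≤ Real.exp Λ := by
      rw [div_le_iff₀ (hw0 x)]
      have := mul_le_mul_of_nonneg_left (hΛ x) (Real.exp_pos Λ).le
      rwa [← Real.exp_add, add_neg_cancel, Real.exp_zero] at this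
    have h3 : Λ + 2 * Real.log (1 / ε) ≤ t / (2 * K) := by
      rw [le_div_iff₀ (by linarith)]
      linarith
    calc _ ≤ Real.exp (-(t / (2 * K))) * Real.exp Λ :=
          mul_le_mul h1 h2 (one_div_nonneg.2 (hw0 x).le) (Real.exp_pos _).le
      _ = Real.exp (-(t / (2 * K)) + Λ) := (Real.exp_add _ _).symm
      _ ≤ Real.exp (Real.log ε + Real.log ε) := by
          refine Real.exp_le_exp.2 ?_
          rw [one_div, Real.log_inv] at h3
          linarith
      _ = ε ^ 2 := by rw [Real.exp_add, Real.exp_log hε, sq]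
  have h0 : 0 ≤ ∑ y, |(P ^ t) x y - w y| := Finset.sum_nonneg fun y _ => abs_nonneg _
  have := abs_le_of_sq_le_sq (habs.trans hexp) hε.le
  rw [abs_of_nonneg h0] at this
  linarith

end Mixing
/-! ### The one-dimensional walks -/

section Line

/-- A sum over `{-N, …, N'}` split into the positive part, the origin and the negative part. -/
lemma sum_box (N N' : ℕ) (φ : ℤ → ℝ) :
    ∑ u : IntBox N N', φ u =
      ∑ n ∈ range N', φ (n + 1) + φ 0 + ∑ n ∈ range N, φ (-(n + 1)) := by
  rw [Finset.sum_coe_sort (Finset.Icc (-(N : ℤ)) (N' : ℤ)) φ]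
  induction N' with
  | zero =>
    induction N with
    | zero => simp
    | succ N ih =>
      have : Finset.Icc (-((N + 1 : ℕ) : ℤ)) ((0 : ℕ) : ℤ) =
          insert (-((N : ℤ) + 1)) (Finset.Icc (-(N : ℤ)) ((0 : ℕ) : ℤ)) := by
        ext z
        simp only [Finset.mem_Icc, Finset.mem_insert]
        push_cast
        omega
      rw [this, Finset.sum_insert (by simp), ih, Finset.sum_range_succ]
      ring
  | succ N' ih =>
    have : Finset.Icc (-(N : ℤ)) ((N' + 1 : ℕ) : ℤ) =
        insert ((N' : ℤ) + 1) (Finset.Icc (-(N : ℤ)) (N' : ℤ)) := by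
      ext z
      simp only [Finset.mem_Icc, Finset.mem_insert]
      push_cast
      omega
    rw [this, Finset.sum_insert (by simp), ih, Finset.sum_range_succ]
    ring

lemma telescope_sq (g : ℤ → ℝ) {a b : ℤ} (hab : a ≤ b) :
    (g a - g b) ^ 2 ≤ ((b - a : ℤ) : ℝ) * ∑ c ∈ Finset.Ico a b, (g c - g (c + 1)) ^ 2 := by
  have h : g a - g b = ∑ c ∈ Finset.Ico a b, (g c - g (c + 1)) := by
    induction b, hab using Int.leInduction with
    | base => simp
    | succ b hab ih =>
      have : Finset.Ico a (b + 1) = insert b (Finset.Ico a b) := by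
        ext z
        simp only [Finset.mem_Ico, Finset.mem_insert]
        omega
      rw [this, Finset.sum_insert (by simp), ← ih]
      ring
  rw [h]
  refine sq_sum_le_card_mul_sum_sq.trans (le_of_eq ?_)
  rw [Int.card_Ico]
  congr 1
  have : ((b - a).toNat : ℤ) = b - a := Int.toNat_of_nonneg (by omega)
  exact_mod_cast congrArg (Int.cast : ℤ → ℝ) this

variable {N N' : ℕ}

/-- Extension by `0` of a function on the box to all integers. -/
noncomputable def extendZero (h : IntBox N N' → ℝ) (z : ℤ) : ℝ :=
  if hz : z ∈ Finset.Icc (-(N : ℤ)) (N' : ℤ) then h ⟨z, hz⟩ else 0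

lemma extendZero_coe (h : IntBox N N' → ℝ) (u : IntBox N N') : extendZero h u = h u := by
  simp only [extendZero, u.2, dif_pos, Subtype.coe_eta]

/-- The energy of the walk dominates half the sum over the edges, each taken in one direction. -/
lemma edge_le (Φ : ℤ → ℤ → ℝ) (hΦ : ∀ u a : IntBox N N', 0 ≤ Φ u a) :
    1 / 2 * ∑ c ∈ Finset.Ico (-(N : ℤ)) (N' : ℤ), Φ c (c + 1) ≤
      ∑ u : IntBox N N', ∑ a : IntBox N N', walkProp N N' u a * Φ u a := by
  have e : ∀ u : ℤ, ∑ a : IntBox N N', (if ((a : ℤ) - u).natAbs = 1 then (1 / 2 : ℝ) else 0) *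
      Φ u a = ∑ a ∈ Finset.Icc (-(N : ℤ)) (N' : ℤ),
        (if (a - u).natAbs = 1 then (1 / 2 : ℝ) else 0) * Φ u a := fun u =>
    Finset.sum_coe_sort (Finset.Icc (-(N : ℤ)) (N' : ℤ)) (fun a : ℤ =>
      (if (a - u).natAbs = 1 then (1 / 2 : ℝ) else 0) * Φ u a)
  have e' : ∑ u : IntBox N N', ∑ a : IntBox N N', walkProp N N' u a * Φ u a =
      ∑ u ∈ Finset.Icc (-(N : ℤ)) (N' : ℤ), ∑ a ∈ Finset.Icc (-(N : ℤ)) (N' : ℤ),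
        (if (a - u).natAbs = 1 then (1 / 2 : ℝ) else 0) * Φ u a := by
    simp only [walkProp, e]
    exact Finset.sum_coe_sort (Finset.Icc (-(N : ℤ)) (N' : ℤ)) (fun u : ℤ =>
      ∑ a ∈ Finset.Icc (-(N : ℤ)) (N' : ℤ),
        (if (a - u).natAbs = 1 then (1 / 2 : ℝ) else 0) * Φ u a)
  have hΦ' : ∀ u ∈ Finset.Icc (-(N : ℤ)) (N' : ℤ), ∀ a ∈ Finset.Icc (-(N : ℤ)) (N' : ℤ),
      0 ≤ (if (a - u).natAbs = 1 then (1 / 2 : ℝ) else 0) * Φ u a := by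
    intro u hu a ha
    refine mul_nonneg ?_ (hΦ ⟨u, hu⟩ ⟨a, ha⟩)
    split_ifs <;> norm_num
  rw [e', Finset.mul_sum]
  refine (Finset.sum_le_sum fun c hc => ?_).trans
    (Finset.sum_le_sum_of_subset_of_nonneg Finset.Ico_subset_Icc_self
      fun u hu _ => Finset.sum_nonneg (hΦ' u hu))
  have hc' := Finset.mem_Ico.1 hc
  have := Finset.single_le_sum (hΦ' c (Finset.Ico_subset_Icc_self hc))
    (Finset.mem_Icc.2 (by omega) : c + 1 ∈ Finset.Icc (-(N : ℤ)) (N' : ℤ))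
  simpa using this

lemma walkProp_nonneg (a b : IntBox N N') : 0 ≤ walkProp N N' a b := by
  unfold walkProp
  split_ifs <;> norm_num

lemma walkProp_self (a : IntBox N N') : walkProp N N' a a = 0 := by
  simp [walkProp]

lemma walkProp_comm (a b : IntBox N N') : walkProp N N' a b = walkProp N N' b a := by
  unfold walkProp
  rw [show ((b : ℤ) - a).natAbs = ((a : ℤ) - b).natAbs by omega]

lemma walkProp_row_le (a : IntBox N N') (T : Finset ℤ)
    (hT : ∀ b : IntBox N N', ((b : ℤ) - a).natAbs = 1 → (b : ℤ) ∈ T) :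
    ∑ b, walkProp N N' a b ≤ (T.card : ℝ) / 2 := by
  have h1 : ∑ b, walkProp N N' a b ≤
      ∑ b : IntBox N N', if (b : ℤ) ∈ T then (1 / 2 : ℝ) else 0 := by
    refine Finset.sum_le_sum fun b _ => ?_
    unfold walkProp
    split_ifs with h h' <;> first | exact absurd (hT b h) h' | norm_num
  rw [Finset.sum_coe_sort (Finset.Icc (-(N : ℤ)) (N' : ℤ))
    (fun b : ℤ => if b ∈ T then (1 / 2 : ℝ) else 0), ← Finset.sum_filter] at h1
  simp only [Finset.sum_const, nsmul_eq_mul] at h1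
  have h2 : ((Finset.Icc (-(N : ℤ)) (N' : ℤ)).filter (· ∈ T)).card ≤ T.card :=
    Finset.card_le_card fun z hz => (Finset.mem_filter.1 hz).2
  have h3 : (((Finset.Icc (-(N : ℤ)) (N' : ℤ)).filter (· ∈ T)).card : ℝ) ≤ T.card := by
    exact_mod_cast h2
  linarith

lemma walkProp_row (a : IntBox N N') : ∑ b, walkProp N N' a b ≤ 1 := by
  refine (walkProp_row_le a {(a : ℤ) - 1, (a : ℤ) + 1} fun b hb => ?_).trans ?_
  · simp only [Finset.mem_insert, Finset.mem_singleton]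
    omega
  · rw [Finset.card_pair (by omega)]
    norm_num

lemma walkProp_row_top (a : IntBox N N') (ha : (a : ℤ) = N') :
    ∑ b, walkProp N N' a b ≤ 1 / 2 := by
  refine (walkProp_row_le a {(a : ℤ) - 1} fun b hb => ?_).trans ?_
  · have := (Finset.mem_Icc.1 b.2).2
    simp only [Finset.mem_singleton]
    omega
  · simp

/-- The Dirichlet form of the Metropolis walk with stationary weights `p`. -/
noncomputable def walkEnergy (p h : IntBox N N' → ℝ) : ℝ :=
  ∑ u, p u * ∑ a, (walkProp N N' u a * min 1 (p a / p u)) * (h u - h a) ^ 2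

lemma walk_form {p : IntBox N N' → ℝ} (hp0 : ∀ a, 0 < p a) (ψ : IntBox N N' → IntBox N N' → ℝ) :
    ∑ u, p u * ∑ a, (walkProp N N' u a * min 1 (p a / p u)) * ψ u a =
      ∑ u, ∑ a, walkProp N N' u a * (min (p u) (p a) * ψ u a) := by
  refine Finset.sum_congr rfl fun u _ => ?_
  rw [Finset.mul_sum]
  refine Finset.sum_congr rfl fun a _ => ?_
  have : p u * min 1 (p a / p u) = min (p u) (p a) := by
    rw [mul_min_of_nonneg _ _ (hp0 u).le, mul_one, mul_div_cancel₀ _ (hp0 u).ne']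
  rw [← this]
  ring

/-- A path bound: if the weight of every point between `a` and `b` is at least `m`, then `m`
times a squared increment is controlled by the energy. -/
lemma path_bound {p : IntBox N N' → ℝ} (hp0 : ∀ a, 0 < p a) (h : IntBox N N' → ℝ)
    {a b : IntBox N N'} (hab : (a : ℤ) ≤ b) {m : ℝ}
    (hm : ∀ d : IntBox N N', (a : ℤ) ≤ d → (d : ℤ) ≤ b → m ≤ p d) :
    m * (h a - h b) ^ 2 ≤ 2 * ((N : ℝ) + N') * walkEnergy p h := by
  have ha := Finset.mem_Icc.1 a.2
  have hb := Finset.mem_Icc.1 b.2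
  have hext0 : ∀ z, 0 ≤ extendZero p z := by
    intro z
    unfold extendZero
    split_ifs
    · exact (hp0 _).le
    · exact le_rfl
  have e1 := edge_le (N := N) (N' := N')
    (fun u a => min (extendZero p u) (extendZero p a) * (extendZero h u - extendZero h a) ^ 2)
    (fun u a => mul_nonneg (le_min (hext0 _) (hext0 _)) (sq_nonneg _))
  simp only [extendZero_coe] at e1
  have e2 : walkEnergy p h = _ := walk_form hp0 (fun u a => (h u - h a) ^ 2)
  rw [← e2] at e1
  have e3 := telescope_sq (extendZero h) hab
  simp only [extendZero_coe] at e3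
  set D := ∑ c ∈ Finset.Ico (a : ℤ) b, (extendZero h c - extendZero h (c + 1)) ^ 2 with hD
  have hD0 : 0 ≤ D := Finset.sum_nonneg fun _ _ => sq_nonneg _
  have hE : 0 ≤ walkEnergy p h := by
    refine le_trans ?_ e1
    exact mul_nonneg (by norm_num) (Finset.sum_nonneg fun c _ =>
      mul_nonneg (le_min (hext0 _) (hext0 _)) (sq_nonneg _))
  rcases le_or_gt m 0 with hm0 | hm0
  · refine (mul_nonpos_of_nonpos_of_nonneg hm0 (sq_nonneg _)).trans ?_
    positivity
  have hlen : (((b : ℤ) - a : ℤ) : ℝ) ≤ (N : ℝ) + N' := by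
    have : (b : ℤ) - a ≤ (N : ℤ) + N' := by omega
    exact_mod_cast this
  have e4 : m * D ≤ 2 * walkEnergy p h := by
    have : m * D ≤ ∑ c ∈ Finset.Ico (-(N : ℤ)) (N' : ℤ),
        min (extendZero p c) (extendZero p (c + 1)) * (extendZero h c - extendZero h (c + 1)) ^ 2 := by
      rw [hD, Finset.mul_sum]
      refine (Finset.sum_le_sum fun c hc => ?_).trans
        (Finset.sum_le_sum_of_subset_of_nonneg (Finset.Ico_subset_Ico ha.1 hb.2)
          fun c _ _ => mul_nonneg (le_min (hext0 _) (hext0 _)) (sq_nonneg _))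
      have hc' := Finset.mem_Ico.1 hc
      have q1 := hm ⟨c, Finset.mem_Icc.2 (by omega)⟩ (by simp; omega) (by simp; omega)
      have q2 := hm ⟨c + 1, Finset.mem_Icc.2 (by omega)⟩ (by simp; omega) (by simp; omega)
      rw [← extendZero_coe p] at q1 q2
      exact mul_le_mul_of_nonneg_right (le_min q1 q2) (sq_nonneg _)
    linarith
  calc m * (h a - h b) ^ 2 ≤ m * (((N : ℝ) + N') * D) :=
        mul_le_mul_of_nonneg_left (e3.trans (mul_le_mul_of_nonneg_right hlen hD0)) hm0.le
    _ = ((N : ℝ) + N') * (m * D) := by ring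
    _ ≤ ((N : ℝ) + N') * (2 * walkEnergy p h) := mul_le_mul_of_nonneg_left e4 (by positivity)
    _ = _ := by ring

/-- `path_bound` for the product weight of two endpoints, when the weight along the path never
drops below the smaller endpoint weight. -/
lemma pair_bound {p : IntBox N N' → ℝ} (hp0 : ∀ a, 0 < p a) (h : IntBox N N' → ℝ)
    {q : ℝ} {a b : IntBox N N'} (ha : p a ≤ q) (hb : p b ≤ q)
    (hm : ∀ d : IntBox N N', (a : ℤ) ≤ d ∧ (d : ℤ) ≤ b ∨ (b : ℤ) ≤ d ∧ (d : ℤ) ≤ a →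
      min (p a) (p b) ≤ p d) :
    p a * p b * (h a - h b) ^ 2 ≤ q * (2 * ((N : ℝ) + N') * walkEnergy p h) := by
  have key : min (p a) (p b) * (h a - h b) ^ 2 ≤ 2 * ((N : ℝ) + N') * walkEnergy p h := by
    rcases le_total (a : ℤ) b with hab | hab
    · exact path_bound hp0 h hab fun d h1 h2 => hm d (Or.inl ⟨h1, h2⟩)
    · have := path_bound hp0 h hab fun d h1 h2 => hm d (Or.inr ⟨h1, h2⟩)
      rwa [show (h b - h a) ^ 2 = (h a - h b) ^ 2 by ring] at this
  have hq : 0 ≤ q := (hp0 a).le.trans ha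
  calc p a * p b * (h a - h b) ^ 2 = max (p a) (p b) * (min (p a) (p b) * (h a - h b) ^ 2) := by
        rw [← mul_assoc, max_mul_min]
    _ ≤ q * (min (p a) (p b) * (h a - h b) ^ 2) :=
        mul_le_mul_of_nonneg_right (max_le ha hb)
          (mul_nonneg (le_min (hp0 _).le (hp0 _).le) (sq_nonneg _))
    _ ≤ _ := mul_le_mul_of_nonneg_left key hq

lemma card_box : (Fintype.card (IntBox N N') : ℝ) = (N : ℝ) + N' + 1 := by
  have : Fintype.card (IntBox N N') = N + N' + 1 := by
    rw [Fintype.card_coe, Int.card_Icc]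
    omega
  rw [this]
  push_cast
  ring

lemma walkEnergy_nonneg {p : IntBox N N' → ℝ} (hp0 : ∀ a, 0 < p a) (h : IntBox N N' → ℝ) :
    0 ≤ walkEnergy p h :=
  Finset.sum_nonneg fun u _ => mul_nonneg (hp0 u).le (Finset.sum_nonneg fun a _ =>
    mul_nonneg (mul_nonneg (walkProp_nonneg u a)
      (le_min zero_le_one (div_nonneg (hp0 _).le (hp0 _).le))) (sq_nonneg _))

lemma pair_sum_le {F : IntBox N N' → IntBox N N' → ℝ} {X : ℝ} (hX : 0 ≤ X)
    (hF : ∀ u a, F u a ≤ 2 * ((N : ℝ) + N') * X) :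
    ∑ u, ∑ a, F u a ≤ 4 * ((N : ℝ) + N' + 1) ^ 3 * X := by
  calc ∑ u, ∑ a, F u a ≤ ∑ _u : IntBox N N', ∑ _a : IntBox N N', 2 * ((N : ℝ) + N') * X :=
        Finset.sum_le_sum fun u _ => Finset.sum_le_sum fun a _ => hF u a
    _ = ((N : ℝ) + N' + 1) ^ 2 * (2 * ((N : ℝ) + N')) * X := by
        simp only [Finset.sum_const, Finset.card_univ, nsmul_eq_mul, card_box]
        ring
    _ ≤ 4 * ((N : ℝ) + N' + 1) ^ 3 * X := by
        refine mul_le_mul_of_nonneg_right ?_ hX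
        have : 0 ≤ ((N : ℝ) + N' + 1) ^ 2 * (2 * ((N : ℝ) + N') + 4) := by positivity
        nlinarith

/-- At a flat level the squares of `h` are controlled by the squared sums along edges and the
holding probability at the right endpoint: with alternating signs, sums become differences. -/
lemma flat_sum_form {p : IntBox N N' → ℝ} {w : ℝ} (hw : 0 < w) (hp : ∀ a, p a = w)
    (h : IntBox N N' → ℝ) :
    ∑ u, p u * h u ^ 2 ≤ 4 * ((N : ℝ) + N' + 1) ^ 3 *
      (∑ u, p u * ∑ a, (walkProp N N' u a * min 1 (p a / p u)) * (h u + h a) ^ 2 +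
        ∑ u, p u * ((1 - ∑ b, walkProp N N' u b) * h u ^ 2)) := by
  have hp0 : ∀ a, 0 < p a := fun a => by rw [hp a]; exact hw
  set top : IntBox N N' := ⟨(N' : ℤ), Finset.mem_Icc.2 (by omega)⟩ with htop
  set g : IntBox N N' → ℝ := fun u => (-1 : ℝ) ^ ((u : ℤ).natAbs) * h u with hg
  set Hd := ∑ u, p u * ((1 - ∑ b, walkProp N N' u b) * h u ^ 2) with hHd
  have hgsq : ∀ u, g u ^ 2 = h u ^ 2 := by
    intro u
    simp only [hg, mul_pow]
    rw [← pow_mul, mul_comm _ 2, pow_mul]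
    norm_num
  have hen : walkEnergy p g =
      ∑ u, p u * ∑ a, (walkProp N N' u a * min 1 (p a / p u)) * (h u + h a) ^ 2 := by
    unfold walkEnergy
    refine Finset.sum_congr rfl fun u _ => ?_
    congr 1
    refine Finset.sum_congr rfl fun a _ => ?_
    by_cases hua : ((a : ℤ) - u).natAbs = 1
    · congr 1
      have hs : (-1 : ℝ) ^ ((a : ℤ).natAbs) = - (-1 : ℝ) ^ ((u : ℤ).natAbs) := by
        have : (a : ℤ).natAbs = (u : ℤ).natAbs + 1 ∨ (u : ℤ).natAbs = (a : ℤ).natAbs + 1 := by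
          omega
        rcases this with e | e <;> rw [e, pow_succ] <;> ring
      have hq : ((-1 : ℝ) ^ ((u : ℤ).natAbs)) ^ 2 = 1 := by
        rw [← pow_mul, mul_comm, pow_mul]
        norm_num
      simp only [hg, hs]
      linear_combination (h u + h a) ^ 2 * hq
    · simp [walkProp, hua]
  rw [← hen]
  have hE := walkEnergy_nonneg hp0 g
  have hterm : ∀ u, 0 ≤ p u * ((1 - ∑ b, walkProp N N' u b) * h u ^ 2) := fun u =>
    mul_nonneg (hp0 u).le (mul_nonneg (sub_nonneg.2 (walkProp_row u)) (sq_nonneg _))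
  have hHd0 : 0 ≤ Hd := Finset.sum_nonneg fun u _ => hterm u
  have hend : w * h top ^ 2 ≤ 2 * Hd := by
    have h1 : p top * ((1 - ∑ b, walkProp N N' top b) * h top ^ 2) ≤ Hd :=
      Finset.single_le_sum (fun u _ => hterm u) (mem_univ top)
    rw [hp top] at h1
    have h2 := walkProp_row_top top rfl
    have h3 : 0 ≤ w * h top ^ 2 := mul_nonneg hw.le (sq_nonneg _)
    nlinarith
  have hpt : ∀ u, p u * h u ^ 2 ≤ 4 * ((N : ℝ) + N' + 1) * (walkEnergy p g + Hd) := by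
    intro u
    have hu := Finset.mem_Icc.1 u.2
    have h1 := path_bound hp0 g (a := u) (b := top) hu.2 (m := w) fun d _ _ => (hp d).ge
    have h2 : h u ^ 2 ≤ 2 * (g u - g top) ^ 2 + 2 * h top ^ 2 := by
      rw [← hgsq u, ← hgsq top]
      nlinarith [sq_nonneg (g u - 2 * g top)]
    have h3 := mul_le_mul_of_nonneg_left h2 hw.le
    rw [hp u]
    have : 0 ≤ 4 * ((N : ℝ) + N') * Hd := by positivity
    nlinarith
  calc ∑ u, p u * h u ^ 2 ≤ ∑ _u : IntBox N N', 4 * ((N : ℝ) + N' + 1) * (walkEnergy p g + Hd) :=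
        Finset.sum_le_sum fun u _ => hpt u
    _ = 4 * ((N : ℝ) + N' + 1) ^ 2 * (walkEnergy p g + Hd) := by
        simp only [Finset.sum_const, Finset.card_univ, nsmul_eq_mul, card_box]
        ring
    _ ≤ _ := by
        refine mul_le_mul_of_nonneg_right ?_ (add_nonneg hE hHd0)
        have : 1 ≤ (N : ℝ) + N' + 1 := by
          have : (0 : ℝ) ≤ (N : ℝ) + N' := by positivity
          linarith
        have := pow_le_pow_right₀ this (by norm_num : 2 ≤ 3)
        linarith

end Line
/-! ### The bimodal exponential distributions -/

section BiExp

/-- The unnormalized weight `C ^ ((i / M) |z|)`. -/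
noncomputable def tempW (C : ℝ) (M i : ℕ) (z : ℤ) : ℝ := C ^ ((i : ℝ) / M * |(z : ℝ)|)

/-- The normalizing constant at level `i`. -/
noncomputable def tempZ (C : ℝ) (N N' M i : ℕ) : ℝ := ∑ b : IntBox N N', tempW C M i b

/-- The indicator of the heavy block: the strictly positive or the strictly negative side,
whichever reaches farther. The origin belongs to the other block. -/
def heavySide (N N' : ℕ) (z : ℤ) : Bool := if N ≤ N' then decide (1 ≤ z) else decide (z ≤ -1)

variable {C : ℝ} {N N' M : ℕ}

lemma biExp_eq (i : Fin (M + 1)) (a : IntBox N N') :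
    biExp C N N' M i a = tempW C M i a / tempZ C N N' M i := rfl

lemma tempW_pos (hC : 1 < C) (i : ℕ) (z : ℤ) : 0 < tempW C M i z :=
  Real.rpow_pos_of_pos (by linarith) _

lemma tempZ_pos (hC : 1 < C) (i : ℕ) : 0 < tempZ C N N' M i :=
  Finset.sum_pos (fun b _ => tempW_pos hC i b) ⟨⟨0, by simp⟩, mem_univ _⟩

lemma tempW_mono (hC : 1 < C) (i : ℕ) {y z : ℤ} (h : |y| ≤ |z|) :
    tempW C M i y ≤ tempW C M i z := by
  refine Real.rpow_le_rpow_of_exponent_le hC.le (mul_le_mul_of_nonneg_left ?_ (by positivity))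
  exact_mod_cast h

lemma tempW_neg (i : ℕ) (z : ℤ) : tempW C M i (-z) = tempW C M i z := by
  simp [tempW]

lemma tempW_zero_right (i : ℕ) : tempW C M i 0 = 1 := by
  simp [tempW]

lemma tempW_zero_left (z : ℤ) : tempW C M 0 z = 1 := by
  simp [tempW]

lemma one_le_tempW (hC : 1 < C) (i : ℕ) (z : ℤ) : 1 ≤ tempW C M i z :=
  Real.one_le_rpow hC.le (by positivity)

lemma tempW_le_pow (hC : 1 < C) (hM : N + N' ≤ M) (h1 : 1 ≤ N) (i : Fin (M + 1))
    (a : IntBox N N') : tempW C M i a ≤ C ^ ((N : ℝ) + N') := by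
  refine Real.rpow_le_rpow_of_exponent_le hC.le ?_
  have ha := Finset.mem_Icc.1 a.2
  have hi : ((i : ℕ) : ℝ) ≤ M := by exact_mod_cast Nat.lt_succ_iff.1 i.2
  have hM0 : (0 : ℝ) < M := by exact_mod_cast (by omega : 0 < M)
  have h2 : ((i : ℕ) : ℝ) / M ≤ 1 := (div_le_one hM0).2 hi
  have h3 : |((a : ℤ) : ℝ)| ≤ (N : ℝ) + N' := by
    have : |(a : ℤ)| ≤ (N : ℤ) + N' := abs_le.2 (by omega)
    exact_mod_cast this
  calc ((i : ℕ) : ℝ) / M * |((a : ℤ) : ℝ)| ≤ 1 * |((a : ℤ) : ℝ)| :=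
        mul_le_mul_of_nonneg_right h2 (abs_nonneg _)
    _ ≤ _ := by rwa [one_mul]

lemma biExp_pos (hC : 1 < C) (i : Fin (M + 1)) (a : IntBox N N') : 0 < biExp C N N' M i a :=
  div_pos (tempW_pos hC _ _) (tempZ_pos hC _)

lemma sum_biExp (hC : 1 < C) (i : Fin (M + 1)) : ∑ a, biExp C N N' M i a = 1 := by
  simp only [biExp_eq]
  rw [← Finset.sum_div]
  exact div_self (tempZ_pos hC _).ne'

/-- The ratio of consecutive weights is nondecreasing in the distance from the origin. -/
lemma tempW_cross (hC : 1 < C) (i : ℕ) {y z : ℤ} (h : |y| ≤ |z|) :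
    tempW C M i z * tempW C M (i + 1) y ≤ tempW C M i y * tempW C M (i + 1) z := by
  unfold tempW
  rw [← Real.rpow_add (by linarith), ← Real.rpow_add (by linarith)]
  refine Real.rpow_le_rpow_of_exponent_le hC.le ?_
  have h' : |(y : ℝ)| ≤ |(z : ℝ)| := by exact_mod_cast h
  have h1 : 0 ≤ 1 / (M : ℝ) * (|(z : ℝ)| - |(y : ℝ)|) :=
    mul_nonneg (by positivity) (by linarith)
  push_cast
  rw [add_div]
  nlinarith

lemma tempW_step (hC : 1 < C) (i : ℕ) (z : ℤ) : tempW C M i z ≤ tempW C M (i + 1) z := by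
  refine Real.rpow_le_rpow_of_exponent_le hC.le (mul_le_mul_of_nonneg_right ?_ (abs_nonneg _))
  push_cast
  gcongr
  linarith

lemma biExp_ratio (hC : 1 < C) (h1 : 1 ≤ N) (hM : N + N' ≤ M) (i : Fin M) (a b : IntBox N N') :
    biExp C N N' M i.castSucc b * biExp C N N' M i.succ a ≤
      C * (biExp C N N' M i.castSucc a * biExp C N N' M i.succ b) := by
  simp only [biExp_eq, Fin.val_castSucc, Fin.val_succ]
  rw [div_mul_div_comm, div_mul_div_comm, ← mul_div_assoc]
  refine div_le_div_of_nonneg_right ?_ (mul_pos (tempZ_pos hC _) (tempZ_pos hC _)).le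
  unfold tempW
  have hC0 : 0 < C := by linarith
  nth_rewrite 3 [← Real.rpow_one C]
  rw [← Real.rpow_add hC0, ← Real.rpow_add hC0, ← Real.rpow_add hC0]
  refine Real.rpow_le_rpow_of_exponent_le hC.le ?_
  have ha := Finset.mem_Icc.1 a.2
  have hM0 : (0 : ℝ) < M := by exact_mod_cast (by omega : 0 < M)
  have h3 : |((a : ℤ) : ℝ)| ≤ M := by
    have : |(a : ℤ)| ≤ (M : ℤ) := abs_le.2 (by omega)
    exact_mod_cast this
  have h4 : 1 / (M : ℝ) * |((a : ℤ) : ℝ)| ≤ 1 := by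
    rw [one_div_mul_eq_div]
    exact (div_le_one hM0).2 h3
  have h5 : 0 ≤ 1 / (M : ℝ) * |((b : ℤ) : ℝ)| := by positivity
  push_cast
  rw [add_div]
  nlinarith

/-- Total unnormalized weight of the points at distance `1, …, n` on one side of the origin. -/
noncomputable def sideSum (C : ℝ) (M i n : ℕ) : ℝ := ∑ x ∈ range n, tempW C M i (x + 1)

lemma blockW_true (i : Fin (M + 1)) :
    blockW (fun a : IntBox N N' => heavySide N N' a) (biExp C N N' M) i true =
      sideSum C M i (max N N') / tempZ C N N' M i := by
  unfold blockW
  have e : ∀ a : IntBox N N', (if heavySide N N' a = true then biExp C N N' M i a else 0) =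
      (if heavySide N N' a = true then tempW C M i a else 0) / tempZ C N N' M i := by
    intro a
    rw [biExp_eq]
    split_ifs <;> simp
  simp only [e]
  rw [← Finset.sum_div, sum_box N N' (fun z => if heavySide N N' z = true then tempW C M i z else 0)]
  congr 1
  unfold sideSum
  by_cases h : N ≤ N'
  · have h1 : ∀ n : ℕ, ¬ (1 : ℤ) ≤ -((n : ℤ) + 1) := fun n => by omega
    have h2 : ∀ n : ℕ, (1 : ℤ) ≤ (n : ℤ) + 1 := fun n => by omega
    simp only [heavySide, if_pos h, decide_eq_true_eq, h1, h2, if_true, if_false, max_eq_right h]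
    simp
  · have h1 : ∀ n : ℕ, -((n : ℤ) + 1) ≤ -1 := fun n => by omega
    have h2 : ∀ n : ℕ, ¬ (n : ℤ) + 1 ≤ -1 := fun n => by omega
    simp only [heavySide, if_neg h, decide_eq_true_eq, h1, h2, if_true, if_false,
      max_eq_left (not_le.1 h).le, tempW_neg]
    simp

lemma blockW_false (i : Fin (M + 1)) :
    blockW (fun a : IntBox N N' => heavySide N N' a) (biExp C N N' M) i false =
      (1 + sideSum C M i (min N N')) / tempZ C N N' M i := by
  unfold blockW
  have e : ∀ a : IntBox N N', (if heavySide N N' a = false then biExp C N N' M i a else 0) =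
      (if heavySide N N' a = false then tempW C M i a else 0) / tempZ C N N' M i := by
    intro a
    rw [biExp_eq]
    split_ifs <;> simp
  simp only [e]
  rw [← Finset.sum_div,
    sum_box N N' (fun z => if heavySide N N' z = false then tempW C M i z else 0)]
  congr 1
  unfold sideSum
  by_cases h : N ≤ N'
  · have h1 : ∀ n : ℕ, ¬ (1 : ℤ) ≤ -((n : ℤ) + 1) := fun n => by omega
    have h2 : ∀ n : ℕ, (1 : ℤ) ≤ (n : ℤ) + 1 := fun n => by omega
    simp only [heavySide, if_pos h, decide_eq_false_iff_not, h1, h2, not_true, not_false_eq_true,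
      if_true, if_false, min_eq_left h, tempW_neg]
    simp [tempW_zero_right]
  · have h1 : ∀ n : ℕ, -((n : ℤ) + 1) ≤ -1 := fun n => by omega
    have h2 : ∀ n : ℕ, ¬ (n : ℤ) + 1 ≤ -1 := fun n => by omega
    simp only [heavySide, if_neg h, decide_eq_false_iff_not, h1, h2, not_true, not_false_eq_true,
      if_true, if_false, min_eq_right (not_le.1 h).le]
    simp [tempW_zero_right, add_comm]

lemma sideSum_nonneg (hC : 1 < C) (i n : ℕ) : 0 ≤ sideSum C M i n :=
  Finset.sum_nonneg fun _ _ => (tempW_pos hC _ _).le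

lemma sideSum_mono (hC : 1 < C) (i : ℕ) {m n : ℕ} (h : m ≤ n) :
    sideSum C M i m ≤ sideSum C M i n :=
  Finset.sum_le_sum_of_subset_of_nonneg (Finset.range_subset_range.2 h)
    fun _ _ _ => (tempW_pos hC _ _).le

lemma one_le_sideSum (hC : 1 < C) (i : ℕ) {n : ℕ} (h : 1 ≤ n) : 1 ≤ sideSum C M i n := by
  refine le_trans ?_ (sideSum_mono hC i h)
  simpa [sideSum] using one_le_tempW hC i 1

lemma blockW_pos (hC : 1 < C) (h1 : 1 ≤ N) (i : Fin (M + 1)) (b : Bool) :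
    0 < blockW (fun a : IntBox N N' => heavySide N N' a) (biExp C N N' M) i b := by
  cases b
  · rw [blockW_false]
    exact div_pos (by linarith [sideSum_nonneg (M := M) hC i (min N N')]) (tempZ_pos hC _)
  · rw [blockW_true]
    exact div_pos (by linarith [one_le_sideSum (M := M) hC i (le_max_of_le_left h1 : 1 ≤ max N N')])
      (tempZ_pos hC _)

lemma blockW_heavy (hC : 1 < C) (h1 : 1 ≤ N) (i : Fin (M + 1)) :
    blockW (fun a : IntBox N N' => heavySide N N' a) (biExp C N N' M) i false ≤
      2 * blockW (fun a : IntBox N N' => heavySide N N' a) (biExp C N N' M) i true := by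
  rw [blockW_false, blockW_true, ← mul_div_assoc]
  refine div_le_div_of_nonneg_right ?_ (tempZ_pos hC _).le
  linarith [one_le_sideSum (M := M) hC i (le_max_of_le_left h1 : 1 ≤ max N N'),
    sideSum_mono (M := M) hC i (min_le_max : min N N' ≤ max N N')]

/-- The heavy block gains relative weight as the temperature is lowered. -/
lemma blockW_mono (hC : 1 < C) (i : Fin M) :
    blockW (fun a : IntBox N N' => heavySide N N' a) (biExp C N N' M) i.castSucc true *
        blockW (fun a : IntBox N N' => heavySide N N' a) (biExp C N N' M) i.succ false ≤
      blockW (fun a : IntBox N N' => heavySide N N' a) (biExp C N N' M) i.castSucc false *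
        blockW (fun a : IntBox N N' => heavySide N N' a) (biExp C N N' M) i.succ true := by
  simp only [blockW_false, blockW_true, Fin.val_castSucc, Fin.val_succ]
  rw [div_mul_div_comm, div_mul_div_comm]
  refine div_le_div_of_nonneg_right ?_ (mul_pos (tempZ_pos hC _) (tempZ_pos hC _)).le
  generalize (i : ℕ) = j
  have hle : min N N' ≤ max N N' := min_le_max
  generalize min N N' = m at hle ⊢
  generalize max N N' = n at hle ⊢
  have split : ∀ j, sideSum C M j n = sideSum C M j m + ∑ x ∈ Finset.Ico m n,
      tempW C M j (x + 1) := fun j => (Finset.sum_range_add_sum_Ico _ hle).symm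
  rw [split j, split (j + 1)]
  have a1 : sideSum C M j m ≤ sideSum C M (j + 1) m :=
    Finset.sum_le_sum fun x _ => tempW_step hC j _
  have a2 : ∑ x ∈ Finset.Ico m n, tempW C M j (x + 1) ≤
      ∑ x ∈ Finset.Ico m n, tempW C M (j + 1) (x + 1) :=
    Finset.sum_le_sum fun x _ => tempW_step hC j _
  have a3 : (∑ x ∈ Finset.Ico m n, tempW C M j (x + 1)) * sideSum C M (j + 1) m ≤
      sideSum C M j m * ∑ x ∈ Finset.Ico m n, tempW C M (j + 1) (x + 1) := by
    unfold sideSum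
    rw [mul_comm, Finset.sum_mul_sum, Finset.sum_mul_sum]
    refine Finset.sum_le_sum fun y hy => Finset.sum_le_sum fun x hx => ?_
    rw [mul_comm]
    have hy' := Finset.mem_range.1 hy
    have hx' := Finset.mem_Ico.1 hx
    refine tempW_cross hC j ?_
    rw [abs_of_nonneg (by omega), abs_of_nonneg (by omega)]
    omega
  nlinarith

lemma p_le_blockW (hC : 1 < C) (i : Fin (M + 1)) (a : IntBox N N') :
    biExp C N N' M i a ≤
      blockW (fun a : IntBox N N' => heavySide N N' a) (biExp C N N' M) i (heavySide N N' a) := by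
  unfold blockW
  have := Finset.single_le_sum (f := fun b : IntBox N N' =>
    if heavySide N N' b = heavySide N N' a then biExp C N N' M i b else 0)
    (fun b _ => by split_ifs <;> [exact (biExp_pos hC i b).le; exact le_rfl]) (mem_univ a)
  simpa using this

/-- Spectral gap of the walk at a single level, restricted to a block: there the weight is
monotone, so the straight path between two points never visits a point lighter than both. -/
lemma local_gap (hC : 1 < C) (h1 : 1 ≤ N) (i : Fin (M + 1)) (h : IntBox N N' → ℝ) :
    ∑ u, biExp C N N' M i u * ∑ a, condW (fun a : IntBox N N' => heavySide N N' a)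
        (biExp C N N' M) i (heavySide N N' u) a * (h u - h a) ^ 2 ≤
      4 * ((N : ℝ) + N' + 1) ^ 3 * walkEnergy (biExp C N N' M i) h := by
  have hp0 := biExp_pos (N := N) (N' := N') hC i
  have hE := walkEnergy_nonneg hp0 h
  simp only [Finset.mul_sum]
  refine pair_sum_le hE fun u a => ?_
  unfold condW
  split_ifs with hs
  · replace hs : heavySide N N' a = heavySide N N' u := hs
    have hq := blockW_pos (N' := N') hC h1 i (heavySide N N' u)
    have ha := p_le_blockW hC i a
    rw [hs] at ha
    have key := pair_bound hp0 h (p_le_blockW hC i u) ha fun d hd => by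
      rw [biExp_eq, biExp_eq, biExp_eq, min_div_div_right (tempZ_pos hC _).le]
      refine div_le_div_of_nonneg_right ?_ (tempZ_pos hC _).le
      have hs' : (0 ≤ (a : ℤ) ∧ 0 ≤ (u : ℤ)) ∨ ((a : ℤ) ≤ 0 ∧ (u : ℤ) ≤ 0) := by
        unfold heavySide at hs
        split_ifs at hs <;> rw [decide_eq_decide] at hs <;> omega
      have : |(u : ℤ)| ≤ |(d : ℤ)| ∨ |(a : ℤ)| ≤ |(d : ℤ)| := by
        rcases hs' with ⟨x1, x2⟩ | ⟨x1, x2⟩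
        · rw [abs_of_nonneg x1, abs_of_nonneg x2, abs_of_nonneg (by omega)]
          omega
        · rw [abs_of_nonpos x1, abs_of_nonpos x2, abs_of_nonpos (by omega)]
          omega
      rcases this with hx | hx
      · exact (min_le_left _ _).trans (tempW_mono hC _ hx)
      · exact (min_le_right _ _).trans (tempW_mono hC _ hx)
    calc biExp C N N' M i u * (biExp C N N' M i a / blockW (fun a : IntBox N N' =>
          heavySide N N' a) (biExp C N N' M) i (heavySide N N' u) * (h u - h a) ^ 2) =
        biExp C N N' M i u * biExp C N N' M i a * (h u - h a) ^ 2 / blockW (fun a : IntBox N N' =>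
          heavySide N N' a) (biExp C N N' M) i (heavySide N N' u) := by ring
      _ ≤ _ := by
        rw [div_le_iff₀ hq]
        linarith
  · rw [zero_mul, mul_zero]
    positivity

lemma biExp_zero (a : IntBox N N') : biExp C N N' M 0 a = 1 / ((N : ℝ) + N' + 1) := by
  rw [biExp_eq]
  simp only [tempZ, Fin.val_zero, tempW_zero_left, Finset.sum_const, Finset.card_univ,
    nsmul_eq_mul, card_box, mul_one]

lemma zero_gap (hC : 1 < C) (h : IntBox N N' → ℝ) :
    ∑ u, biExp C N N' M 0 u * ∑ a, biExp C N N' M 0 a * (h u - h a) ^ 2 ≤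
      4 * ((N : ℝ) + N' + 1) ^ 3 * walkEnergy (biExp C N N' M 0) h := by
  have hp0 := biExp_pos (N := N) (N' := N') (M := M) hC 0
  have hE := walkEnergy_nonneg hp0 h
  simp only [Finset.mul_sum]
  refine pair_sum_le hE fun u a => ?_
  have hle : ∀ a : IntBox N N', biExp C N N' M 0 a ≤ 1 := fun a => by
    rw [← sum_biExp (N := N) (N' := N') (M := M) hC 0]
    exact Finset.single_le_sum (fun b _ => (hp0 b).le) (mem_univ a)
  have key := pair_bound hp0 h (hle u) (hle a) fun d _ => by
    simp only [biExp_zero, min_self, le_refl]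
  linarith

end BiExp
/-! ### The mixing time -/

lemma exp_neg_le_biExp {C : ℝ} {N N' M : ℕ} (hC : 1 < C) (h1 : 1 ≤ N) (hM : N + N' ≤ M)
    (i : Fin (M + 1)) (a : IntBox N N') :
    Real.exp (-(Real.log ((N : ℝ) + N' + 1) + ((N : ℝ) + N') * Real.log C)) ≤
      biExp C N N' M i a := by
  have hC0 : 0 < C := by linarith
  have hL : (0 : ℝ) < (N : ℝ) + N' + 1 := by positivity
  have hZ : tempZ C N N' M i ≤ ((N : ℝ) + N' + 1) * C ^ ((N : ℝ) + N') := by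
    refine (Finset.sum_le_sum fun b _ => tempW_le_pow hC hM h1 i b).trans (le_of_eq ?_)
    simp only [Finset.sum_const, Finset.card_univ, nsmul_eq_mul, card_box]
  have e : Real.exp (Real.log ((N : ℝ) + N' + 1) + ((N : ℝ) + N') * Real.log C) =
      ((N : ℝ) + N' + 1) * C ^ ((N : ℝ) + N') := by
    rw [Real.exp_add, Real.exp_log hL, Real.rpow_def_of_pos hC0, mul_comm (Real.log C)]
  rw [Real.exp_neg, e, biExp_eq, inv_eq_one_div]
  exact div_le_div₀ (tempW_pos hC _ _).le (one_le_tempW hC _ _) (tempZ_pos hC _) hZ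

/-- The mixing time bound with explicit constants. -/
lemma mixingTime_swapChain_le {C : ℝ} {N N' M : ℕ} (hC : 1 < C) (h1 : 1 ≤ N) (h2 : 1 ≤ N')
    (hM : N + N' ≤ M) {ε : ℝ} (hε : 0 < ε) :
    mixingTime (swapChain (walkProp N N') (biExp C N N' M)) (prodW (biExp C N N' M)) ε ≤
      ⌈2 * (300 * (1 + C) * (4 * ((N : ℝ) + N' + 1) ^ 3) * ((M : ℝ) + 1) ^ 6 *
          (2 * ((M : ℝ) + 1))) *
        (((M : ℝ) + 1) * (Real.log ((N : ℝ) + N' + 1) + ((N : ℝ) + N') * Real.log C) +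
          2 * Real.log (1 / ε))⌉₊ := by
  have hM1 : 1 ≤ M := by omega
  have hM0 : (0 : ℝ) < M := by exact_mod_cast hM1
  set p := biExp C N N' M with hp
  have hp0 : ∀ i a, 0 < p i a := biExp_pos hC
  have hp1 : ∀ i, ∑ a, p i a = 1 := sum_biExp hC
  have hL1 : (1 : ℝ) ≤ (N : ℝ) + N' + 1 := by
    have : (0 : ℝ) ≤ (N : ℝ) + N' := by positivity
    linarith
  have hK1 : (1 : ℝ) ≤ 4 * ((N : ℝ) + N' + 1) ^ 3 := by
    have := one_le_pow₀ hL1 (n := 3)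
    linarith
  set K₁ := 4 * ((N : ℝ) + N' + 1) ^ 3 with hK₁
  have hn1 : (1 : ℝ) ≤ (M : ℝ) + 1 := by linarith
  have hn6 := one_le_pow₀ hn1 (n := 6)
  have hc : 1 ≤ 300 * (1 + C) * ((M : ℝ) + 1) ^ 6 := by nlinarith
  refine mixingTime_le (fun x => swapChain_row x) (swapChain_rev hp0 walkProp_comm)
    (sum_prodW hp1) ?_ ?_ ?_ ?_ hε
  · have : (1 : ℝ) ≤ (300 * (1 + C) * ((M : ℝ) + 1) ^ 6) * (K₁ * (2 * ((M : ℝ) + 1))) :=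
      one_le_mul_of_one_le_of_one_le hc
        (one_le_mul_of_one_le_of_one_le hK1 (by linarith))
    linarith
  · intro x
    have e : Real.exp (-(((M : ℝ) + 1) * (Real.log ((N : ℝ) + N' + 1) +
        ((N : ℝ) + N') * Real.log C))) = ∏ _i : Fin (M + 1),
        Real.exp (-(Real.log ((N : ℝ) + N' + 1) + ((N : ℝ) + N') * Real.log C)) := by
      rw [Finset.prod_const, Finset.card_univ, Fintype.card_fin, ← Real.exp_nat_mul]
      congr 1
      push_cast
      ring
    rw [e]
    exact Finset.prod_le_prod (fun _ _ => (Real.exp_pos _).le)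
      fun i _ => exp_neg_le_biExp hC h1 hM i (x i)
  · intro f hf
    have hv := swap_poincare (s := fun a : IntBox N N' => heavySide N N' a) (Q := walkProp N N')
      hM1 hp0 hp1 (blockW_pos hC h1) hC.le hK1 walkProp_nonneg (local_gap hC h1) (zero_gap hC)
      (biExp_ratio hC h1 hM) (blockW_mono hC) (blockW_heavy hC h1) f
    simp only [hf, sub_zero] at hv
    rw [swapChain_dirichlet walkProp_self]
    refine hv.trans ?_
    rw [mul_assoc (300 * (1 + C) * K₁ * ((M : ℝ) + 1) ^ 6)]
    refine mul_le_mul_of_nonneg_left ?_ (by positivity)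
    have hW0 : 0 ≤ ∑ i, swapEnergy p i f :=
      Finset.sum_nonneg fun i _ => swapEnergy_nonneg hp0 i f
    have e1 : 2 * ((M : ℝ) + 1) * (1 / (2 * ((M : ℝ) + 1))) = 1 := by field_simp
    have e2 : 1 ≤ 2 * ((M : ℝ) + 1) * (1 / (2 * (M : ℝ))) := by
      rw [mul_one_div, le_div_iff₀ (by positivity)]
      linarith
    have e3 := mul_le_mul_of_nonneg_right e2 hW0
    rw [mul_add, ← mul_assoc, ← mul_assoc, e1]
    linarith
  · intro f
    have hb := swapChain_sum_form (p := p) hM1 hp0 hp1 walkProp_nonneg walkProp_self walkProp_row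
      (zero_le_one.trans hK1)
      (fun h => flat_sum_form (w := 1 / ((N : ℝ) + N' + 1)) (by positivity) biExp_zero h) f
    refine hb.trans (mul_le_mul_of_nonneg_right ?_ ?_)
    · have := mul_le_mul_of_nonneg_right hc (by positivity : 0 ≤ K₁ * (2 * ((M : ℝ) + 1)))
      linarith
    · have hpos : 0 ≤ K₁ * (2 * ((M : ℝ) + 1)) := by positivity
      by_contra hneg
      have h0 : 0 ≤ ∑ x, prodW p x * f x ^ 2 :=
        Finset.sum_nonneg fun x _ =>
          mul_nonneg (prodW_nonneg (fun i a => (hp0 i a).le) x) (sq_nonneg _)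
      have hpos' : 0 < K₁ * (2 * ((M : ℝ) + 1)) := by positivity
      have := mul_neg_of_pos_of_neg hpos' (not_le.1 hneg)
      linarith

/-- fix `C > 1` and `k ≥ 1`. There is `c > 0` such that for all
`N, N' ≥ 1` and every `M` with `N+N' ≤ M ≤ (N+N')^k`, the swapping chain on
`{−N,…,N'}^(M+1)` for the bimodal exponential distributions `π_i(x) ∝ C^((i/M)|x|)` has
mixing time `τ(ε) ≤ (N+N'+M)^c·(1 + ln(1/ε))` for every `ε ∈ (0,1)`. -/
theorem swapping_bimodal_exponential_polynomial_mixing :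
    ∀ C : ℝ, 1 < C → ∀ k : ℕ, 1 ≤ k → ∃ c : ℝ, 0 < c ∧
      ∀ N N' : ℕ, 1 ≤ N → 1 ≤ N' → ∀ M : ℕ, N + N' ≤ M → M ≤ (N + N') ^ k →
        ∀ ε : ℝ, 0 < ε → ε < 1 →
          (mixingTime (swapChain (walkProp N N') (biExp C N N' M))
              (fun x : Fin (M+1) → IntBox N N' => ∏ i, biExp C N N' M i (x i)) ε : ℝ) ≤
            (((N : ℝ) + N' + M)) ^ c * (1 + Real.log (1 / ε)) := by
  intro C hC k _
  -- `2 ^ m` absorbs the numerical constants, since `N + N' + M ≥ 2`.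
  obtain ⟨m, hm⟩ := pow_unbounded_of_one_lt (9600 * (1 + C) ^ 2 + 1) (one_lt_two (α := ℝ))
  refine ⟨((12 + m : ℕ) : ℝ), by positivity, ?_⟩
  intro N N' h1 h2 M hM _ ε hε hε1
  rw [Real.rpow_natCast]
  have hlog : 0 ≤ Real.log (1 / ε) := Real.log_nonneg (by rw [le_div_iff₀ hε]; linarith)
  set l := Real.log (1 / ε) with hl
  have r1 : (1 : ℝ) ≤ N := by exact_mod_cast h1
  have r2 : (1 : ℝ) ≤ N' := by exact_mod_cast h2
  have r3 : (N : ℝ) + N' ≤ M := by exact_mod_cast hM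
  set X := (N : ℝ) + N' + M with hX
  have hX2 : 2 ≤ X := by linarith
  have hlogC0 : 0 ≤ Real.log C := Real.log_nonneg hC.le
  set Λ := ((M : ℝ) + 1) * (Real.log ((N : ℝ) + N' + 1) + ((N : ℝ) + N') * Real.log C) with hΛ
  set K := 300 * (1 + C) * (4 * ((N : ℝ) + N' + 1) ^ 3) * ((M : ℝ) + 1) ^ 6 *
    (2 * ((M : ℝ) + 1)) with hK
  have hΛX : Λ ≤ (1 + C) * X ^ 2 := by
    have s1 : Real.log ((N : ℝ) + N' + 1) ≤ X := by
      have := Real.log_le_sub_one_of_pos (by linarith : 0 < (N : ℝ) + N' + 1)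
      linarith
    have s2 : Real.log C ≤ C := by
      have := Real.log_le_sub_one_of_pos (by linarith : 0 < C)
      linarith
    have s3 : ((N : ℝ) + N') * Real.log C ≤ X * C :=
      mul_le_mul (by linarith) s2 hlogC0 (by linarith)
    calc Λ ≤ X * (X + X * C) := by
          refine mul_le_mul (by linarith) (add_le_add s1 s3) ?_ (by linarith)
          exact add_nonneg (Real.log_nonneg (by linarith)) (mul_nonneg (by linarith) hlogC0)
      _ = _ := by ring
  have hKX : K ≤ 2400 * (1 + C) * X ^ 10 := by
    have s1 : ((N : ℝ) + N' + 1) ^ 3 ≤ X ^ 3 := pow_le_pow_left₀ (by linarith) (by linarith) 3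
    have s2 : ((M : ℝ) + 1) ^ 7 ≤ X ^ 7 := pow_le_pow_left₀ (by linarith) (by linarith) 7
    have s3 := mul_le_mul s1 s2 (by positivity) (by positivity)
    have s4 := mul_le_mul_of_nonneg_left s3 (by linarith : 0 ≤ 2400 * (1 + C))
    calc K = 2400 * (1 + C) * (((N : ℝ) + N' + 1) ^ 3 * ((M : ℝ) + 1) ^ 7) := by rw [hK]; ring
      _ ≤ _ := s4
      _ = _ := by ring
  have hΛ0 : 0 ≤ Λ := mul_nonneg (by linarith)
    (add_nonneg (Real.log_nonneg (by linarith)) (mul_nonneg (by linarith) hlogC0))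
  have hK0 : 0 ≤ K := by
    have : 0 ≤ 1 + C := by linarith
    positivity
  have hmix : (mixingTime (swapChain (walkProp N N') (biExp C N N' M))
      (fun x : Fin (M+1) → IntBox N N' => ∏ i, biExp C N N' M i (x i)) ε : ℝ) ≤
        2 * K * (Λ + 2 * l) + 1 := by
    refine le_trans ?_ (Nat.ceil_lt_add_one (by positivity)).le
    exact Nat.cast_le.2 (mixingTime_swapChain_le hC h1 h2 hM hε)
  refine hmix.trans ?_
  clear_value X l Λ K
  have hX12 : 1 ≤ X ^ 12 := one_le_pow₀ (by linarith)
  have t1 : Λ + 2 * l ≤ 2 * (1 + C) * X ^ 2 * (1 + l) := by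
    have hX2' : 1 ≤ X ^ 2 := one_le_pow₀ (by linarith)
    have hc1 : 1 ≤ (1 + C) * X ^ 2 := one_le_mul_of_one_le_of_one_le (by linarith) hX2'
    have := le_mul_of_one_le_left hlog hc1
    linarith
  have t2 : 2 * K * (Λ + 2 * l) ≤
      2 * (2400 * (1 + C) * X ^ 10) * (2 * (1 + C) * X ^ 2 * (1 + l)) :=
    mul_le_mul (by linarith) t1 (by positivity) (by linarith)
  have t3 : 1 ≤ X ^ 12 * (1 + l) := one_le_mul_of_one_le_of_one_le hX12 (by linarith)
  have t4 : 9600 * (1 + C) ^ 2 + 1 ≤ X ^ m :=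
    hm.le.trans (pow_le_pow_left₀ (by norm_num) hX2 m)
  calc 2 * K * (Λ + 2 * l) + 1 ≤ (9600 * (1 + C) ^ 2 + 1) * (X ^ 12 * (1 + l)) := by
        linarith
    _ ≤ X ^ m * (X ^ 12 * (1 + l)) := mul_le_mul_of_nonneg_right t4 (by linarith)
    _ = X ^ (12 + m) * (1 + l) := by rw [pow_add]; ring
end
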